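/- Let f, h ∈ O_n with μ_X(f) < ∞ and μ_Y(h) < ∞, where X = h^{-1}(0) and Y = f^{-1}(0) are hypersurface germs with isolated singularities (h and f each have an isolated singularity at the origin). Then μ_X(f) − τ_X(f) = μ_Y(h) − τ_Y(h). -/

import Mathlib

open Filter Topology Polynomial

set_option maxHeartbeats 1000000
set_option synthInstance.maxHeartbeats 1000000

noncomputable section

/-- The algebra structure on germs of complex valued functions. -/
instance Filter.Germ.instAlgebraComplex {α : Type*} (l : Filter α) :
    Algebra ℂ (Filter.Germ l ℂ) where
  algebraMap := (Filter.Germ.coeRingHom l).comp (algebraMap ℂ (α → ℂ))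
  commutes' := fun c g => mul_comm _ _
  smul_def' := fun c g => Filter.Germ.inductionOn g fun f => rfl

/-- The local algebra `𝒪ₙ` of germs at `0 ∈ ℂⁿ` of holomorphic functions,
realized as the subalgebra of germs at `0` admitting an analytic representative. -/
def On (n : ℕ) : Subalgebra ℂ (Filter.Germ (𝓝 (0 : Fin n → ℂ)) ℂ) where
  carrier := {g | ∃ f : (Fin n → ℂ) → ℂ,
    AnalyticAt ℂ f 0 ∧ (f : Filter.Germ (𝓝 (0 : Fin n → ℂ)) ℂ) = g}
  mul_mem' := by
    rintro a b ⟨f, hf, rfl⟩ ⟨g, hg, rfl⟩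
    exact ⟨f * g, hf.mul hg, rfl⟩
  add_mem' := by
    rintro a b ⟨f, hf, rfl⟩ ⟨g, hg, rfl⟩
    exact ⟨f + g, hf.add hg, rfl⟩
  algebraMap_mem' := fun c => ⟨fun _ => c, analyticAt_const, rfl⟩

variable {n : ℕ}

/-- Existence of an analytic representative for an element of `𝒪ₙ`. -/
lemma On.exists_rep (g : On n) : ∃ f : (Fin n → ℂ) → ℂ,
    AnalyticAt ℂ f 0 ∧ (f : Filter.Germ (𝓝 (0 : Fin n → ℂ)) ℂ) = (g : Filter.Germ _ ℂ) :=
  g.2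

/-- A chosen analytic representative of a germ in `𝒪ₙ`. -/
def On.rep (g : On n) : (Fin n → ℂ) → ℂ := (On.exists_rep g).choose

lemma On.rep_analyticAt (g : On n) : AnalyticAt ℂ (On.rep g) 0 :=
  (On.exists_rep g).choose_spec.1

lemma On.rep_spec (g : On n) :
    (On.rep g : Filter.Germ (𝓝 (0 : Fin n → ℂ)) ℂ) = (g : Filter.Germ _ ℂ) :=
  (On.exists_rep g).choose_spec.2

/-- Build an element of `𝒪ₙ` from an analytic function. -/
def mkOn {n : ℕ} (f : (Fin n → ℂ) → ℂ) (hf : AnalyticAt ℂ f 0) : On n :=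
  ⟨(f : Filter.Germ (𝓝 (0 : Fin n → ℂ)) ℂ), ⟨f, hf, rfl⟩⟩

/-- The `i`-th partial derivative, as an operation on `𝒪ₙ`. -/
def pd (i : Fin n) (g : On n) : On n :=
  mkOn (fun x => fderiv ℂ (On.rep g) x (Pi.single i 1)) (by
    have h := ((ContinuousLinearMap.apply ℂ ℂ (Pi.single i 1)).analyticAt
      (fderiv ℂ (On.rep g) 0)).comp (On.rep_analyticAt g).fderiv
    exact h)

/-- Restriction of germs at `0` to germs along a finer filter. -/
def restrictGerm {l : Filter (Fin n → ℂ)} (hl : l ≤ 𝓝 (0 : Fin n → ℂ)) :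
    Filter.Germ (𝓝 (0 : Fin n → ℂ)) ℂ →+* Filter.Germ l ℂ where
  toFun g := g.compTendsto id (Filter.tendsto_id'.2 hl)
  map_one' := rfl
  map_mul' a b := Filter.Germ.inductionOn₂ a b fun f g => rfl
  map_zero' := rfl
  map_add' a b := Filter.Germ.inductionOn₂ a b fun f g => rfl

/-- Evaluation of germs restricted along `l ≤ 𝓝 0`, as a ring homomorphism on `𝒪ₙ`. -/
def restrictOn (n : ℕ) {l : Filter (Fin n → ℂ)} (hl : l ≤ 𝓝 (0 : Fin n → ℂ)) :
    On n →+* Filter.Germ l ℂ :=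
  (restrictGerm hl).comp (On n).val.toRingHom

/-- The ideal `I_X ⊆ 𝒪ₙ` of germs vanishing on a set `X` near `0`. -/
def IX (n : ℕ) (X : Set (Fin n → ℂ)) : Ideal (On n) :=
  RingHom.ker (restrictOn n (nhdsWithin_le_nhds (s := X)))

/-- The maximal ideal `𝔪 ⊂ 𝒪ₙ` of germs vanishing at the origin. -/
def mId (n : ℕ) : Ideal (On n) :=
  RingHom.ker (restrictOn n (pure_le_nhds (0 : Fin n → ℂ)))

/-- `X` is the germ at `0` of an analytic variety: `0 ∈ X` and, near `0`, `X` coincides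
with the common zero locus of finitely many holomorphic functions. -/
def IsAnalyticGermAt0 (n : ℕ) (X : Set (Fin n → ℂ)) : Prop :=
  (0 : Fin n → ℂ) ∈ X ∧
    ∃ (m : ℕ) (g : Fin m → (Fin n → ℂ) → ℂ),
      (∀ j, AnalyticAt ℂ (g j) 0) ∧
      ∀ᶠ x in 𝓝 (0 : Fin n → ℂ), (x ∈ X ↔ ∀ j, g j x = 0)

/-- The action `δ(g) = Σ δᵢ ∂g/∂xᵢ` of a vector field `δ ∈ Θ ≅ 𝒪ₙⁿ` on `g ∈ 𝒪ₙ`. -/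
def applyVF (δ : Fin n → On n) (g : On n) : On n := ∑ i, δ i * pd i g

lemma applyVF_add (a b : Fin n → On n) (g : On n) :
    applyVF (a + b) g = applyVF a g + applyVF b g := by
  simp [applyVF, add_mul, Finset.sum_add_distrib]

lemma applyVF_smul (c : On n) (a : Fin n → On n) (g : On n) :
    applyVF (c • a) g = c * applyVF a g := by
  simp [applyVF, Finset.mul_sum, smul_eq_mul, mul_assoc]

/-- For fixed `f`, the map `δ ↦ δ(f)` as an `𝒪ₙ`-linear map `Θ → 𝒪ₙ`. -/
def gradMap (n : ℕ) (f : On n) : (Fin n → On n) →ₗ[On n] On n where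
  toFun δ := applyVF δ f
  map_add' a b := applyVF_add a b f
  map_smul' c a := applyVF_smul c a f

/-- The module `Θ_X` of logarithmic vector fields of `X`, i.e. vector fields
preserving the ideal `I_X`. -/
def ThetaX (n : ℕ) (X : Set (Fin n → ℂ)) : Submodule (On n) (Fin n → On n) where
  carrier := {δ | ∀ g ∈ IX n X, applyVF δ g ∈ IX n X}
  add_mem' := by
    intro a b ha hb g hg
    rw [applyVF_add]
    exact Ideal.add_mem _ (ha g hg) (hb g hg)
  zero_mem' := by
    intro g hg
    have h0 : applyVF (0 : Fin n → On n) g = 0 := by simp [applyVF]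
    rw [h0]; exact Ideal.zero_mem _
  smul_mem' := by
    intro c a ha g hg
    rw [applyVF_smul]
    exact Ideal.mul_mem_left _ _ (ha g hg)

/-- The module `Θ_Y` of vector fields tangent to the hypersurface `Y = f⁻¹(0)`,
i.e. `δ(f) ∈ ⟨f⟩`. -/
def ThetaF (n : ℕ) (f : On n) : Submodule (On n) (Fin n → On n) :=
  Submodule.comap (gradMap n f) (Ideal.span {f})

/-- The module `H_Y` of Hamiltonian vector fields of `f`, i.e. `δ(f) = 0`. -/
def HamF (n : ℕ) (f : On n) : Submodule (On n) (Fin n → On n) :=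
  LinearMap.ker (gradMap n f)

/-- The Bruce–Roberts ideal `df(Θ_X) ⊆ 𝒪ₙ`. -/
def BRIdeal (n : ℕ) (X : Set (Fin n → ℂ)) (f : On n) : Ideal (On n) :=
  Submodule.map (gradMap n f) (ThetaX n X)

/-- The Jacobian ideal `J(f) = ⟨∂f/∂x₁, …, ∂f/∂xₙ⟩`. -/
def Jac (n : ℕ) (f : On n) : Ideal (On n) :=
  Ideal.span (Set.range fun i => pd i f)

/-- The ideal `J(f,h)` generated by the `2×2` minors of the Jacobian matrix of `(f,h)`. -/
def Jmin (n : ℕ) (f h : On n) : Ideal (On n) :=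
  Ideal.span (Set.range fun p : Fin n × Fin n => pd p.1 f * pd p.2 h - pd p.2 f * pd p.1 h)

/-- The Milnor number `μ(f)`. -/
def mu (n : ℕ) (f : On n) : ℕ := Module.finrank ℂ (On n ⧸ Jac n f)

/-- The Tjurina number `τ(f)`. -/
def tau (n : ℕ) (f : On n) : ℕ :=
  Module.finrank ℂ (On n ⧸ (Jac n f + Ideal.span {f}))

/-- The Bruce–Roberts Milnor number `μ_X(f)`. -/
def muX (n : ℕ) (X : Set (Fin n → ℂ)) (f : On n) : ℕ :=
  Module.finrank ℂ (On n ⧸ BRIdeal n X f)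

/-- The Bruce–Roberts Tjurina number `τ_X(f)`. -/
def tauX (n : ℕ) (X : Set (Fin n → ℂ)) (f : On n) : ℕ :=
  Module.finrank ℂ (On n ⧸ (BRIdeal n X f + Ideal.span {f}))

/-- The value at the origin of a germ in `𝒪ₙ`. -/
def ev0 (g : On n) : ℂ := On.rep g 0

/-- The linear part `j¹δ` of a vector field `δ`, as the matrix `(∂δⱼ/∂xᵢ)(0)`. -/
def linPart (δ : Fin n → On n) : Matrix (Fin n) (Fin n) ℂ :=
  Matrix.of fun i j => ev0 (pd i (δ j))

/-- The eigenvalues (with multiplicities) of the linear part of `δ` are given by `w`. -/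
def EigsEq (δ : Fin n → On n) (w : Fin n → ℚ) : Prop :=
  (linPart δ).charpoly = ∏ i, (Polynomial.X - Polynomial.C ((w i : ℂ)))

/-- The germ at `0` of the coordinate function `xᵢ`. -/
def coordG (i : Fin n) : On n :=
  mkOn (fun x : Fin n → ℂ => x i)
    ((ContinuousLinearMap.proj (R := ℂ) (φ := fun _ : Fin n => ℂ) i).analyticAt _)

/-- `g` is quasihomogeneous of degree `d` with respect to the weights `w` (in the given
coordinates): the Euler identity `Σ wᵢ xᵢ ∂g/∂xᵢ = d g` holds. -/
def IsQH (n : ℕ) (w : Fin n → ℚ) (d : ℚ) (g : On n) : Prop :=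
  ∑ i, (w i : ℂ) • (coordG i * pd i g) = (d : ℂ) • g

/-- A germ of a biholomorphic change of coordinates at `0 ∈ ℂⁿ`. -/
structure CoordChange (n : ℕ) where
  toFun : (Fin n → ℂ) → (Fin n → ℂ)
  invFun : (Fin n → ℂ) → (Fin n → ℂ)
  analyticAt : AnalyticAt ℂ toFun 0
  inv_analyticAt : AnalyticAt ℂ invFun 0
  map_zero : toFun 0 = 0
  inv_map_zero : invFun 0 = 0
  left_inv : ∀ᶠ x in 𝓝 (0 : Fin n → ℂ), invFun (toFun x) = x
  right_inv : ∀ᶠ x in 𝓝 (0 : Fin n → ℂ), toFun (invFun x) = x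

lemma CoordChange.tendsto (φ : CoordChange n) :
    Filter.Tendsto φ.toFun (𝓝 (0 : Fin n → ℂ)) (𝓝 (0 : Fin n → ℂ)) := by
  have h := φ.analyticAt.continuousAt
  rwa [ContinuousAt, φ.map_zero] at h

/-- The pullback (composition) of a germ `g ∈ 𝒪ₙ` under a change of coordinates. -/
def pullback (φ : CoordChange n) (g : On n) : On n :=
  ⟨(g : Filter.Germ (𝓝 (0 : Fin n → ℂ)) ℂ).compTendsto φ.toFun φ.tendsto, by
    refine ⟨On.rep g ∘ φ.toFun, ?_, ?_⟩
    · have h := On.rep_analyticAt g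
      rw [← φ.map_zero] at h
      exact h.comp φ.analyticAt
    · rw [← On.rep_spec g]
      exact (Filter.Germ.coe_compTendsto _ φ.tendsto).symm⟩

/-- Definition 1.1: the pair `(f, X)` is relatively quasihomogeneous with respect to the
weights `w`: in suitable coordinates, `f` is quasihomogeneous of degree `1` and `I_X` admits
a system of quasihomogeneous generators of positive degrees, all with respect to `w`. -/
def RelQH (n : ℕ) (X : Set (Fin n → ℂ)) (f : On n) (w : Fin n → ℚ) : Prop :=
  ∃ φ : CoordChange n,
    IsQH n w 1 (pullback φ f) ∧
    ∃ (m : ℕ) (h : Fin m → On n) (d : Fin m → ℚ),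
      Ideal.span (Set.range h) = IX n X ∧ (∀ j, 0 < d j) ∧
      ∀ j, IsQH n w (d j) (pullback φ (h j))

/-- The variety `X` is quasihomogeneous with respect to the weights `w`: in suitable
coordinates, `I_X` admits a system of quasihomogeneous generators of positive degrees. -/
def VarQH (n : ℕ) (X : Set (Fin n → ℂ)) (w : Fin n → ℚ) : Prop :=
  ∃ φ : CoordChange n,
    ∃ (m : ℕ) (h : Fin m → On n) (d : Fin m → ℚ),
      Ideal.span (Set.range h) = IX n X ∧ (∀ j, 0 < d j) ∧
      ∀ j, IsQH n w (d j) (pullback φ (h j))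

instance (f : On n) : HasQuotient (↥(ThetaF n f)) (Submodule ↥(On n) ↥(ThetaF n f)) :=
  Submodule.hasQuotient (R := ↥(On n)) (M := ↥(ThetaF n f))

/-
Write `N` for the cokernel of `𝒪ⁿ → 𝒪²`, `δ ↦ (df(δ), dh(δ))`, and `e₁`, `e₂` for its two
generators. The finiteness hypotheses make the Buchsbaum–Rim complex of this matrix acyclic modulo
`f`, so `f` is a nonzerodivisor on `N`. Consequently `μ_X(f) − τ_X(f)` and `μ_Y(h) − τ_Y(h)` differ
by the difference of the colengths of `𝒪 f e₁` and `𝒪 h e₂`, and it suffices to compare these.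

In `N` some multiple `f ^ K e₁` equals `u e₂`, which turns the comparison into one of the
colengths of `p N` and `q N`, where `p = f u` and `q = f ^ K h`. Along an arc `γ` that kills the
annihilator of `N`, the differentials satisfy `f ^ K dh = -u df`, hence
`f ^ K (h ∘ γ)' = -u (f ∘ γ)'`, so `p` and `q` have equal order along `γ`. By the valuative
criterion `p` and `q` are integral over one another modulo that annihilator, and multiplications
by such elements have the same colength.
-/

section Colength

open scoped Pointwise

variable (k : Type*) {A M : Type*} [Field k] [CommRing A] [Algebra k A] [AddCommGroup M]
  [Module A M] [Module k M] [IsScalarTower k A M]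

/-- The colength of an `A`-submodule `U` of `M`: the dimension over the base field `k` of `M ⧸ U`,
with value `⊤` when that quotient is infinite-dimensional. -/
def colength (U : Submodule A M) : ℕ∞ :=
  Module.length k (M ⧸ U)

lemma colength_top : colength k (⊤ : Submodule A M) = 0 :=
  Module.length_eq_zero

variable {k}

lemma colength_anti {U W : Submodule A M} (h : U ≤ W) : colength k W ≤ colength k U :=
  Module.length_le_of_surjective ((Submodule.factor h).restrictScalars k)
    (Submodule.factor_surjective h)

lemma colength_ne_top_iff {U : Submodule A M} :
    colength k U ≠ ⊤ ↔ FiniteDimensional k (M ⧸ U) := by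
  rw [colength, Module.length_ne_top_iff, isFiniteLength_iff_isNoetherian_isArtinian]
  exact ⟨fun ⟨h, _⟩ => Module.IsNoetherian.finite k _, fun _ => ⟨inferInstance, inferInstance⟩⟩

lemma colength_eq_finrank (U : Submodule A M) [FiniteDimensional k (M ⧸ U)] :
    colength k U = Module.finrank k (M ⧸ U) :=
  Module.length_eq_finrank k _

lemma finiteDimensional_quotient_of_le {U W : Submodule A M} (h : U ≤ W)
    [FiniteDimensional k (M ⧸ U)] : FiniteDimensional k (M ⧸ W) :=
  Module.Finite.of_surjective ((Submodule.factor h).restrictScalars k)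
    (Submodule.factor_surjective h)

lemma colength_restrictScalars {O : Type*} [CommRing O] [Algebra k O] [Algebra O A] [Module O M]
    [IsScalarTower O A M] [IsScalarTower k O M] (U : Submodule A M) :
    colength k (U.restrictScalars O) = colength k U :=
  ((Submodule.Quotient.restrictScalarsEquiv O U).restrictScalars k).length_eq

lemma colength_eq_colength_sup_range_add {L : Type*} [AddCommGroup L] [Module A L] [Module k L]
    [IsScalarTower k A L] (φ : L →ₗ[A] M) (U : Submodule A M) :
    colength k U = colength k (U ⊔ LinearMap.range φ) + colength k (U.comap φ) := by
  let ι : (L ⧸ U.comap φ) →ₗ[A] (M ⧸ U) := Submodule.mapQ (U.comap φ) U φ le_rfl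
  let π : (M ⧸ U) →ₗ[A] (M ⧸ U ⊔ LinearMap.range φ) := Submodule.factor le_sup_left
  have ι_injective : Function.Injective ι := by
    rw [← LinearMap.ker_eq_bot, Submodule.ker_mapQ, Submodule.mkQ_map_self]
  have exact : Function.Exact ι π := by
    rw [LinearMap.exact_iff, Submodule.range_mapQ]
    simp [π, Submodule.factor, Submodule.ker_mapQ]
  have π_surjective : Function.Surjective π := Submodule.factor_surjective le_sup_left
  rw [add_comm]
  exact Module.length_eq_add_of_exact (ι.restrictScalars k) (π.restrictScalars k) ι_injective
    π_surjective exact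

lemma colength_eq_colength_sup_span_add (U : Submodule A M) (e : M) :
    colength k U = colength k (U ⊔ Submodule.span A {e}) +
      colength k (U.comap (LinearMap.toSpanSingleton A M e) : Ideal A) := by
  rw [← LinearMap.range_toSpanSingleton]
  exact colength_eq_colength_sup_range_add _ U

lemma colength_smul {a : A} (ha : IsSMulRegular M a) (U : Submodule A M) :
    colength k (a • U) = colength k (a • (⊤ : Submodule A M)) + colength k U := by
  have range_le : a • U ≤ LinearMap.range (LinearMap.lsmul A M a) := by
    rintro _ ⟨x, -, rfl⟩
    exact ⟨x, rfl⟩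
  have comap_eq : (a • U).comap (LinearMap.lsmul A M a) = U :=
    Submodule.comap_map_eq_of_injective (f := LinearMap.lsmul A M a) ha U
  rw [colength_eq_colength_sup_range_add (LinearMap.lsmul A M a) (a • U), comap_eq,
    sup_eq_right.2 range_le, ← Submodule.map_top]
  rfl

lemma colength_pow_smul {a : A} (ha : IsSMulRegular M a) (U : Submodule A M) (c : ℕ) :
    colength k (a ^ c • U) = c * colength k (a • (⊤ : Submodule A M)) + colength k U := by
  induction c with
  | zero => simp
  | succ c ih =>
    rw [pow_succ', mul_smul, colength_smul ha, ih]
    push_cast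
    ring

lemma colength_ne_top_of_pow_smul_top_le {a : A} (ha : IsSMulRegular M a)
    (hfin : colength k (a • (⊤ : Submodule A M)) ≠ ⊤) {c : ℕ} {U : Submodule A M}
    (hU : a ^ c • (⊤ : Submodule A M) ≤ U) : colength k U ≠ ⊤ := by
  refine ne_top_of_le_ne_top ?_ (colength_anti hU)
  rw [colength_pow_smul ha, colength_top, add_zero]
  exact WithTop.mul_ne_top (ENat.natCast_ne_top c) hfin

lemma colength_le_sup_span_add_card_mul {I : Ideal A} {W : Submodule A M} (s : Finset M)
    (hW : ∀ r ∈ I, ∀ m ∈ s, r • m ∈ W) :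
    colength k W ≤ colength k (W ⊔ Submodule.span A s) + s.card * colength k I := by
  classical
  induction s using Finset.induction_on with
  | empty => simp
  | insert e s hes ih =>
    have le_I : colength k ((W ⊔ Submodule.span A s).comap
        (LinearMap.toSpanSingleton A M e) : Ideal A) ≤ colength k I :=
      colength_anti fun r hr => Submodule.mem_sup_left (hW r hr e (Finset.mem_insert_self e s))
    have sup_eq : W ⊔ Submodule.span A s ⊔ Submodule.span A {e} =
        W ⊔ Submodule.span A (insert e s : Finset M) := by
      rw [Finset.coe_insert, Submodule.span_insert, sup_assoc, sup_comm (Submodule.span A _)]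
    calc colength k W
        ≤ colength k (W ⊔ Submodule.span A s) + s.card * colength k I :=
          ih fun r hr m hm => hW r hr m (Finset.mem_insert_of_mem hm)
      _ ≤ colength k (W ⊔ Submodule.span A (insert e s : Finset M)) + colength k I +
            s.card * colength k I := by
          rw [colength_eq_colength_sup_span_add (W ⊔ Submodule.span A s) e, sup_eq]
          gcongr
      _ = _ := by
          rw [Finset.card_insert_of_notMem hes]
          push_cast
          ring

lemma colength_ne_top_of_smul_mem {I : Ideal A} (hI : colength k I ≠ ⊤) {W : Submodule A M}
    (s : Finset M) (hW : ∀ r ∈ I, ∀ m ∈ s, r • m ∈ W)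
    (hs : colength k (W ⊔ Submodule.span A s) ≠ ⊤) : colength k W ≠ ⊤ :=
  ne_top_of_le_ne_top (WithTop.add_ne_top.2 ⟨hs, WithTop.mul_ne_top (ENat.natCast_ne_top _) hI⟩)
    (colength_le_sup_span_add_card_mul s hW)

lemma exists_smul_le_smul_of_integral {p q : A} {d : ℕ} (hd : 0 < d) (a : ℕ → A)
    (heq : ∀ x : M, p ^ d • x = (∑ i ∈ Finset.range d, a i * p ^ i * q ^ (d - i)) • x) :
    ∃ X : Submodule A M, q ^ (d - 1) • ⊤ ≤ X ∧ p • X ≤ q • X := by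
  let X : Submodule A M := ⨆ i : Fin d, (p ^ (i : ℕ) * q ^ (d - 1 - i)) • (⊤ : Submodule A M)
  have mem_X : ∀ i < d, ∀ x : M, (p ^ i * q ^ (d - 1 - i)) • x ∈ X := fun i hi x =>
    Submodule.mem_iSup_of_mem ⟨i, hi⟩ (Submodule.smul_mem_pointwise_smul x _ ⊤ trivial)
  have smul_mem : ∀ i < d, ∀ x : M, p • (p ^ i * q ^ (d - 1 - i)) • x ∈ q • X := by
    intro i hi x
    obtain hlt | rfl : i + 1 < d ∨ d = i + 1 := by omega
    · have exps : p • (p ^ i * q ^ (d - 1 - i)) • x =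
          q • (p ^ (i + 1) * q ^ (d - 1 - (i + 1))) • x := by
        rw [smul_smul, smul_smul, show d - 1 - i = d - 1 - (i + 1) + 1 by omega]
        congr 1
        ring
      exact exps ▸ Submodule.smul_mem_pointwise_smul _ _ _ (mem_X _ hlt x)
    · have top_term : p • (p ^ i * q ^ (i + 1 - 1 - i)) • x =
          ∑ j ∈ Finset.range (i + 1), q • (a j • (p ^ j * q ^ (i + 1 - 1 - j)) • x) := by
        simp only [Nat.add_sub_cancel, Nat.sub_self, pow_zero, mul_one, smul_smul]
        rw [← pow_succ', heq, Finset.sum_smul]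
        refine Finset.sum_congr rfl fun j hj => ?_
        have exp : i + 1 - j = i - j + 1 := Nat.succ_sub (Finset.mem_range_succ_iff.1 hj)
        rw [exp]
        congr 1
        ring
      rw [top_term]
      exact Submodule.sum_mem _ fun j hj => Submodule.smul_mem_pointwise_smul _ _ _
        (X.smul_mem _ (mem_X j (Finset.mem_range.1 hj) x))
  refine ⟨X, ?_, Submodule.map_le_iff_le_comap.2 (iSup_le fun i => ?_)⟩
  · rintro _ ⟨x, -, rfl⟩
    simpa using mem_X 0 hd x
  · rintro _ ⟨x, -, rfl⟩
    exact smul_mem i i.2 x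

lemma colength_smul_top_le_of_integral {p q : A} (hp : IsSMulRegular M p) (hq : IsSMulRegular M q)
    (hfin : colength k (q • (⊤ : Submodule A M)) ≠ ⊤) {d : ℕ} (hd : 0 < d) (a : ℕ → A)
    (heq : ∀ x : M, p ^ d • x = (∑ i ∈ Finset.range d, a i * p ^ i * q ^ (d - i)) • x) :
    colength k (q • (⊤ : Submodule A M)) ≤ colength k (p • (⊤ : Submodule A M)) := by
  obtain ⟨X, pow_smul_le, smul_le⟩ := exists_smul_le_smul_of_integral hd a heq
  have hX : colength k X ≠ ⊤ := colength_ne_top_of_pow_smul_top_le hq hfin pow_smul_le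
  have := colength_anti (k := k) smul_le
  rw [colength_smul hp, colength_smul hq] at this
  exact (ENat.add_le_add_iff_right hX).1 this

lemma smul_mem_smul_of_mem_span_singleton {f r : A} (hr : r ∈ Ideal.span {f}) {U : Submodule A M}
    {m : M} (hm : m ∈ U) : r • m ∈ f • U := by
  obtain ⟨a, rfl⟩ := Ideal.mem_span_singleton.1 hr
  rw [mul_smul]
  exact Submodule.smul_mem_pointwise_smul _ _ _ (U.smul_mem a hm)

lemma colength_smul_top_ne_top [Module.Finite A M] {f : A}
    (hI : colength k (Ideal.span {f}) ≠ ⊤) : colength k (f • (⊤ : Submodule A M)) ≠ ⊤ := by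
  obtain ⟨s, hs⟩ := Module.Finite.fg_top (R := A) (M := M)
  refine colength_ne_top_of_smul_mem hI s
    (fun r hr m _ => smul_mem_smul_of_mem_span_singleton hr Submodule.mem_top) ?_
  rw [hs, sup_top_eq, colength_top]
  exact ENat.zero_ne_top

lemma colength_smul_top_le_of_fg [Module.Finite A M] {f : A} (hf : IsSMulRegular M f)
    (hI : colength k (Ideal.span {f}) ≠ ⊤) {e : M}
    (he : ∀ m : M, ∃ c : ℕ, f ^ c • m ∈ Submodule.span A {e}) :
    colength k (f • (⊤ : Submodule A M)) ≤ colength k (Ideal.span {f}) := by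
  set U := Submodule.span A {e}
  obtain ⟨s, hs⟩ := Module.Finite.fg_top (R := A) (M := M)
  have fin_U : colength k U ≠ ⊤ := by
    choose c hc using he
    refine colength_ne_top_of_pow_smul_top_le (c := s.sup c) hf (colength_smul_top_ne_top hI) ?_
    rw [← hs, Submodule.pointwise_smul_def, Submodule.map_span_le]
    intro x hx
    change f ^ s.sup c • x ∈ U
    rw [← Nat.sub_add_cancel (Finset.le_sup (f := c) hx), pow_add, mul_smul]
    exact U.smul_mem _ (hc x)
  have sup_eq : f • U ⊔ U = U :=
    sup_eq_right.2 (Submodule.smul_le_self_of_tower f U)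
  have comap_le : colength k ((f • U).comap (LinearMap.toSpanSingleton A M e) : Ideal A) ≤
      colength k (Ideal.span {f}) :=
    colength_anti fun r hr =>
      smul_mem_smul_of_mem_span_singleton hr (Submodule.mem_span_singleton_self e)
  refine (ENat.add_le_add_iff_right fin_U).1 ?_
  calc colength k (f • (⊤ : Submodule A M)) + colength k U
      = colength k (f • U) := (colength_smul hf U).symm
    _ = colength k U + colength k ((f • U).comap (LinearMap.toSpanSingleton A M e) : Ideal A) := by
        conv_lhs => rw [colength_eq_colength_sup_span_add (f • U) e, sup_eq]
    _ ≤ colength k (Ideal.span {f}) + colength k U := by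
        rw [add_comm]
        gcongr

lemma finiteDimensional_quotient_smul_top {f : A} (hf : IsSMulRegular M f)
    [FiniteDimensional k (A ⧸ Ideal.span {f})] {e : M}
    (he : ∀ m : M, ∃ c : ℕ, f ^ c • m ∈ Submodule.span A {e}) :
    FiniteDimensional k (M ⧸ f • (⊤ : Submodule A M)) := by
  classical
  have hI : colength k (Ideal.span {f}) ≠ ⊤ := colength_ne_top_iff.2 ‹_›
  have rank_le : Module.rank k (M ⧸ f • (⊤ : Submodule A M)) ≤
      (Module.finrank k (A ⧸ Ideal.span {f}) : ℕ) := by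
    refine rank_le fun s hs => ?_
    choose l hl using Submodule.mkQ_surjective (f • (⊤ : Submodule A M))
    let X : Submodule A M := Submodule.span A (insert e (s.image l) : Finset M)
    have heX : e ∈ X := Submodule.subset_span (Finset.mem_insert_self _ _)
    have hlX : ∀ x ∈ s, l x ∈ X := fun x hx =>
      Submodule.subset_span (Finset.mem_insert_of_mem (Finset.mem_image_of_mem l hx))
    have : Module.Finite A X := Module.Finite.span_finset A _
    have le := colength_smul_top_le_of_fg (M := X) (hf.submodule X f) hI (e := ⟨e, heX⟩) fun m => by
      obtain ⟨c, hc⟩ := he m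
      obtain ⟨a, ha⟩ := Submodule.mem_span_singleton.1 hc
      exact ⟨c, Submodule.mem_span_singleton.2 ⟨a, Subtype.ext ha⟩⟩
    have : FiniteDimensional k (X ⧸ f • (⊤ : Submodule A X)) :=
      colength_ne_top_iff.1 (ne_top_of_le_ne_top hI le)
    rw [colength_eq_finrank, colength_eq_finrank, Nat.cast_le] at le
    let φ : (X ⧸ f • (⊤ : Submodule A X)) →ₗ[A] (M ⧸ f • (⊤ : Submodule A M)) :=
      Submodule.mapQ _ _ X.subtype (by
        rintro _ ⟨x, -, rfl⟩
        exact Submodule.smul_mem_pointwise_smul (x : M) f ⊤ trivial)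
    have indep : LinearIndependent k
        fun x : s => Submodule.mkQ (f • (⊤ : Submodule A X)) ⟨l x, hlX x x.2⟩ := by
      refine LinearIndependent.of_comp (φ.restrictScalars k) ?_
      convert hs using 1
      exact funext fun x => hl x
    simpa using indep.fintype_card_le_finrank.trans le
  exact Module.rank_lt_aleph0_iff.1 (rank_le.trans_lt (Cardinal.natCast_lt_aleph0))

end Colength

section Artinian

open scoped Pointwise

variable (k : Type*) {A : Type*} [Field k] [CommRing A] [Algebra k A]

lemma exists_pow_sub_pow_succ_mul_mem (I : Ideal A) [FiniteDimensional k (A ⧸ I)] (t : A) :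
    ∃ (N : ℕ) (e : A), t ^ N - t ^ (N + 1) * e ∈ I := by
  have : IsArtinianRing (A ⧸ I) := IsArtinianRing.of_finite k _
  obtain ⟨N, y, hy⟩ := IsArtinian.exists_pow_succ_smul_dvd (Ideal.Quotient.mk I t) (1 : A ⧸ I)
  obtain ⟨e, rfl⟩ := Ideal.Quotient.mk_surjective y
  refine ⟨N, e, (Ideal.Quotient.mk_eq_mk_iff_sub_mem _ _).1 ?_⟩
  simpa using hy.symm

lemma exists_pow_mem_of_mem_maximalIdeal [IsLocalRing A] (I : Ideal A)
    [FiniteDimensional k (A ⧸ I)] {t : A} (ht : t ∈ IsLocalRing.maximalIdeal A) :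
    ∃ N, t ^ N ∈ I := by
  obtain ⟨N, e, h⟩ := exists_pow_sub_pow_succ_mul_mem k I t
  have unit : IsUnit (1 - t * e) :=
    IsLocalRing.isUnit_one_sub_self_of_mem_nonunits _ (Ideal.mul_mem_right e _ ht)
  refine ⟨N, (Ideal.mul_unit_mem_iff_mem I unit).1 ?_⟩
  convert h using 1
  ring

variable {k}

lemma finiteDimensional_quotient_span_localization (S : Submonoid A) {B : Type*} [CommRing B]
    [Algebra A B] [Algebra k B] [IsScalarTower k A B] [IsLocalization S B] (f : A)
    [FiniteDimensional k (A ⧸ Ideal.span {f})] :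
    FiniteDimensional k (B ⧸ Ideal.span {algebraMap A B f}) := by
  have le_comap : Ideal.span {f} ≤ (Ideal.span {algebraMap A B f}).comap (algebraMap A B) := by
    rw [Ideal.span_singleton_le_iff_mem]
    exact Ideal.mem_span_singleton_self _
  let φ : (A ⧸ Ideal.span {f}) →ₐ[k] B ⧸ Ideal.span {algebraMap A B f} :=
    Ideal.quotientMapₐ _ (IsScalarTower.toAlgHom k A B) le_comap
  refine Module.Finite.of_surjective φ.toLinearMap fun y => ?_
  obtain ⟨b, rfl⟩ := Ideal.Quotient.mk_surjective y
  obtain ⟨⟨a, t⟩, hat⟩ := IsLocalization.surj S b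
  obtain ⟨N, e, hN⟩ := exists_pow_sub_pow_succ_mul_mem k (Ideal.span {f}) (t : A)
  obtain ⟨g, hg⟩ := Ideal.mem_span_singleton.1 hN
  obtain ⟨u, hu⟩ := IsLocalization.map_units B t
  have hg' := congrArg (algebraMap A B) hg
  simp only [map_sub, map_mul, map_pow, ← hu] at hat hg'
  have inv_pow : ((u⁻¹ : Bˣ) : B) ^ N * (u : B) ^ N = 1 := by
    rw [← mul_pow, Units.inv_mul, one_pow]
  refine ⟨Ideal.Quotient.mk _ (a * e), Ideal.Quotient.eq.2 (Ideal.mem_span_singleton.2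
    ⟨-(((u⁻¹ : Bˣ) : B) ^ N * algebraMap A B g * b), ?_⟩)⟩
  change algebraMap A B (a * e) - b = _
  rw [map_mul, ← hat]
  linear_combination (b - u * algebraMap A B e * b) * inv_pow - ((u⁻¹ : Bˣ) : B) ^ N * b * hg'

lemma finiteDimensional_quotient_span_algebraMap {B : Type*} [CommRing B] [Algebra A B]
    [Algebra k B] [IsScalarTower k A B] {f : A} (hf : IsSMulRegular B f)
    [FiniteDimensional k (A ⧸ Ideal.span {f})]
    (hB : ∀ b : B, ∃ (c : ℕ) (a : A), f ^ c • b = algebraMap A B a) :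
    FiniteDimensional k (B ⧸ Ideal.span {algebraMap A B f}) := by
  have pow_smul_mem : ∀ b : B, ∃ c : ℕ, f ^ c • b ∈ Submodule.span A {(1 : B)} := fun b => by
    obtain ⟨c, a, h⟩ := hB b
    exact ⟨c, Submodule.mem_span_singleton.2 ⟨a, by rw [h, Algebra.algebraMap_eq_smul_one]⟩⟩
  have := finiteDimensional_quotient_smul_top (k := k) hf pow_smul_mem
  have le_ker : f • (⊤ : Submodule A B) ≤
      LinearMap.ker (Ideal.Quotient.mkₐ A (Ideal.span {algebraMap A B f})).toLinearMap := by
    rintro _ ⟨b, -, rfl⟩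
    refine Ideal.Quotient.eq_zero_iff_mem.2 (Ideal.mem_span_singleton.2 ⟨b, ?_⟩)
    exact Algebra.smul_def f b
  refine Module.Finite.of_surjective ((Submodule.liftQ _ _ le_ker).restrictScalars k) fun y => ?_
  obtain ⟨b, rfl⟩ := Ideal.Quotient.mk_surjective y
  exact ⟨Submodule.Quotient.mk b, rfl⟩

end Artinian

section Arcs

open scoped Pointwise

/-- `φ` is the expansion of `v` as a power series in `s`: modulo every power of the variable, `v`
and `φ` agree with a common polynomial. -/
def HasExpansion {k V : Type*} [Field k] [CommRing V] [Algebra k V] (s v : V)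
    (φ : PowerSeries k) : Prop :=
  ∀ m : ℕ, ∃ P : k[X], s ^ m ∣ v - Polynomial.aeval s P ∧
    (PowerSeries.X : PowerSeries k) ^ m ∣ φ - (P : PowerSeries k)

variable {k V : Type*} [Field k] [CommRing V] [Algebra k V]

namespace HasExpansion

variable {s v w : V} {φ ψ : PowerSeries k}

lemma add (hv : HasExpansion s v φ) (hw : HasExpansion s w ψ) :
    HasExpansion s (v + w) (φ + ψ) := fun m => by
  obtain ⟨P, hvP, hφP⟩ := hv m
  obtain ⟨Q, hwQ, hψQ⟩ := hw m
  refine ⟨P + Q, ?_, ?_⟩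
  · rw [map_add, add_sub_add_comm]
    exact dvd_add hvP hwQ
  · rw [Polynomial.coe_add, add_sub_add_comm]
    exact dvd_add hφP hψQ

lemma mul (hv : HasExpansion s v φ) (hw : HasExpansion s w ψ) :
    HasExpansion s (v * w) (φ * ψ) := fun m => by
  obtain ⟨P, hvP, hφP⟩ := hv m
  obtain ⟨Q, hwQ, hψQ⟩ := hw m
  exact ⟨P * Q, by rw [map_mul]; exact dvd_mul_sub_mul hvP hwQ,
    by rw [Polynomial.coe_mul]; exact dvd_mul_sub_mul hφP hψQ⟩

lemma algebraMap (s : V) (c : k) :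
    HasExpansion s (algebraMap k V c) (algebraMap k (PowerSeries k) c) := fun _ =>
  ⟨Polynomial.C c, by simp, by simp⟩

lemma self (s : V) : HasExpansion s s (PowerSeries.X : PowerSeries k) := fun _ =>
  ⟨Polynomial.X, by simp, by simp⟩

end HasExpansion

lemma X_pow_dvd_of_pow_dvd_aeval [IsDomain V] {s : V} (hs0 : s ≠ 0) (hsu : ¬IsUnit s) {m : ℕ}
    {P : k[X]} (h : s ^ m ∣ Polynomial.aeval s P) : Polynomial.X ^ m ∣ P := by
  induction m generalizing P with
  | zero => simp
  | succ m ih =>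
    have decomp : Polynomial.aeval s P.divX * s + algebraMap k V (P.coeff 0) =
        Polynomial.aeval s P := by
      simpa using congrArg (Polynomial.aeval s) (Polynomial.divX_mul_X_add P)
    have coeff_zero : P.coeff 0 = 0 := by
      by_contra hc
      have dvd_coeff : s ∣ algebraMap k V (P.coeff 0) := by
        rw [← dvd_add_right (Dvd.intro_left _ rfl), decomp]
        exact (dvd_pow_self s m.succ_ne_zero).trans h
      exact hsu (isUnit_of_dvd_unit dvd_coeff ((isUnit_iff_ne_zero.2 hc).map (algebraMap k V)))
    rw [← decomp, coeff_zero, map_zero, add_zero, pow_succ, mul_dvd_mul_iff_right hs0] at h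
    rw [← Polynomial.divX_mul_X_add P, coeff_zero, map_zero, add_zero, pow_succ]
    exact mul_dvd_mul_right (ih h) _

lemma HasExpansion.unique [IsDomain V] {s v : V} (hs0 : s ≠ 0) (hsu : ¬IsUnit s)
    {φ ψ : PowerSeries k} (hφ : HasExpansion s v φ) (hψ : HasExpansion s v ψ) : φ = ψ := by
  have X_pow_dvd : ∀ m, (PowerSeries.X : PowerSeries k) ^ m ∣ φ - ψ := fun m => by
    obtain ⟨P, hvP, hφP⟩ := hφ m
    obtain ⟨Q, hvQ, hψQ⟩ := hψ m
    have dvd_aeval : s ^ m ∣ Polynomial.aeval s (P - Q) := by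
      convert dvd_sub hvQ hvP using 1
      simp
    have dvd_coe : (PowerSeries.X : PowerSeries k) ^ m ∣ ((P - Q : k[X]) : PowerSeries k) := by
      simpa using map_dvd (Polynomial.coeToPowerSeries.ringHom (R := k))
        (X_pow_dvd_of_pow_dvd_aeval hs0 hsu dvd_aeval)
    convert dvd_add (dvd_sub hφP hψQ) dvd_coe using 1
    push_cast
    ring
  ext m
  simpa [sub_eq_zero] using PowerSeries.X_pow_dvd_iff.1 (X_pow_dvd (m + 1)) m m.lt_succ_self

lemma exists_hasExpansion {s : V} (hres : ∀ v : V, ∃ c : k, s ∣ v - algebraMap k V c) (v : V) :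
    ∃ φ : PowerSeries k, HasExpansion s v φ := by
  choose residue quotient hquotient using hres
  refine ⟨PowerSeries.mk fun m => residue (quotient^[m] v), fun m =>
    ⟨PowerSeries.trunc m (PowerSeries.mk fun m => residue (quotient^[m] v)), ⟨quotient^[m] v, ?_⟩,
      ?_⟩⟩
  · induction m with
    | zero => simp
    | succ m ih =>
      rw [PowerSeries.trunc_succ, Function.iterate_succ_apply', map_add, Polynomial.aeval_monomial,
        PowerSeries.coeff_mk]
      linear_combination ih + s ^ m * hquotient (quotient^[m] v)
  · rw [PowerSeries.X_pow_dvd_iff]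
    intro i hi
    simp [PowerSeries.coeff_trunc, hi]

lemma exists_algHom_powerSeries_eq_X [IsDomain V] {s : V} (hs0 : s ≠ 0) (hsu : ¬IsUnit s)
    (hres : ∀ v : V, ∃ c : k, s ∣ v - algebraMap k V c) :
    ∃ γ : V →ₐ[k] PowerSeries k, γ s = PowerSeries.X := by
  choose γ hγ using fun v => exists_hasExpansion hres v
  have eq_of_expansion {v : V} {φ : PowerSeries k} (h : HasExpansion s v φ) : γ v = φ :=
    (hγ v).unique hs0 hsu h
  exact ⟨{
    toFun := γ
    map_one' := eq_of_expansion (by simpa using HasExpansion.algebraMap s (1 : k))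
    map_mul' := fun v w => eq_of_expansion ((hγ v).mul (hγ w))
    map_zero' := eq_of_expansion (by simpa using HasExpansion.algebraMap s (0 : k))
    map_add' := fun v w => eq_of_expansion ((hγ v).add (hγ w))
    commutes' := fun c => eq_of_expansion (HasExpansion.algebraMap s c) },
    eq_of_expansion (HasExpansion.self s)⟩

lemma maximalIdeal_fg_of_finiteDimensional [IsLocalRing V] {f : V}
    (hf : f ∈ IsLocalRing.maximalIdeal V) (hfin : FiniteDimensional k (V ⧸ Ideal.span {f})) :
    (IsLocalRing.maximalIdeal V).FG := by
  have : IsNoetherian V (V ⧸ Ideal.span {f}) := isNoetherian_of_tower k inferInstance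
  refine Submodule.fg_of_fg_map_of_fg_inf_ker (Ideal.span {f}).mkQ
    (IsNoetherian.noetherian _) ?_
  rw [Submodule.ker_mkQ, inf_eq_right.2 ((Ideal.span_singleton_le_iff_mem _).2 hf)]
  exact Submodule.fg_span_singleton f

variable [IsAlgClosed k]

lemma exists_sub_algebraMap_mem_maximalIdeal [IsLocalRing V]
    [FiniteDimensional k (V ⧸ IsLocalRing.maximalIdeal V)] (v : V) :
    ∃ c : k, v - algebraMap k V c ∈ IsLocalRing.maximalIdeal V := by
  have : IsDomain (V ⧸ IsLocalRing.maximalIdeal V) := Ideal.Quotient.isDomain _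
  obtain ⟨c, hc⟩ := (IsAlgClosed.algebraMap_bijective_of_isIntegral (k := k)
    (K := V ⧸ IsLocalRing.maximalIdeal V)).2 (Ideal.Quotient.mk _ v)
  exact ⟨c, (Ideal.Quotient.mk_eq_mk_iff_sub_mem _ _).1 hc.symm⟩

lemma exists_arc_of_valuationRing [IsDomain V] [ValuationRing V] {f : V} (hf0 : f ≠ 0)
    (hf : f ∈ IsLocalRing.maximalIdeal V) [FiniteDimensional k (V ⧸ Ideal.span {f})] :
    ∃ γ : V →ₐ[k] PowerSeries k, γ f ≠ 0 ∧
      ∀ z ∈ IsLocalRing.maximalIdeal V, PowerSeries.X ∣ γ z := by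
  obtain ⟨s, hs⟩ := (IsBezout.isPrincipal_of_FG _
    (maximalIdeal_fg_of_finiteDimensional hf ‹FiniteDimensional k _›)).principal
  rw [Ideal.submodule_span_eq] at hs
  have mem_iff : ∀ z, z ∈ IsLocalRing.maximalIdeal V ↔ s ∣ z := fun z => by
    rw [hs, Ideal.mem_span_singleton]
  have hsm : s ∈ IsLocalRing.maximalIdeal V := (mem_iff s).2 dvd_rfl
  have hs0 : s ≠ 0 := by
    rintro rfl
    exact hf0 (zero_dvd_iff.1 ((mem_iff f).1 hf))
  have : FiniteDimensional k (V ⧸ IsLocalRing.maximalIdeal V) :=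
    finiteDimensional_quotient_of_le ((Ideal.span_singleton_le_iff_mem _).2 hf)
  obtain ⟨γ, hγ⟩ := exists_algHom_powerSeries_eq_X (k := k) hs0 hsm fun v => by
    simpa only [mem_iff] using exists_sub_algebraMap_mem_maximalIdeal (k := k) v
  refine ⟨γ, fun h0 => ?_, fun z hz => hγ ▸ map_dvd γ ((mem_iff z).1 hz)⟩
  obtain ⟨N, hN⟩ := exists_pow_mem_of_mem_maximalIdeal k (Ideal.span {f}) hsm
  have f_dvd := map_dvd γ (Ideal.mem_span_singleton.1 hN)
  rw [h0, map_pow, hγ, zero_dvd_iff] at f_dvd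
  exact pow_ne_zero _ PowerSeries.X_ne_zero f_dvd

/-- The valuation ring dominating `B` lies in a residue field `K` of `B[1/f]`, so each of its
elements is carried into the image of `B` by a power of `f`. -/
lemma exists_arc {B : Type*} [CommRing B] [IsLocalRing B] [Algebra k B] {f : B}
    (hf : IsSMulRegular B f) (hfm : f ∈ IsLocalRing.maximalIdeal B)
    [FiniteDimensional k (B ⧸ Ideal.span {f})] :
    ∃ γ : B →ₐ[k] PowerSeries k, γ f ≠ 0 ∧
      ∀ z ∈ IsLocalRing.maximalIdeal B, PowerSeries.X ∣ γ z := by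
  have : Nontrivial (Localization.Away f) := by
    rw [← not_subsingleton_iff_nontrivial, IsLocalization.subsingleton_iff (M := .powers f)]
    rintro ⟨c, hc⟩
    have := hf.pow c (a₁ := 1) (a₂ := 0)
    simp only [smul_eq_mul, mul_one, mul_zero] at this
    exact one_ne_zero (this hc)
  obtain ⟨𝔪, h𝔪⟩ := Ideal.exists_maximal (Localization.Away f)
  let K := Localization.Away f ⧸ 𝔪
  let : Field K := Ideal.Quotient.field 𝔪
  have hfK : algebraMap B K f ≠ 0 :=
    ((IsLocalization.Away.algebraMap_isUnit f).map (Ideal.Quotient.mk 𝔪)).ne_zero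
  obtain ⟨V, hV, hlocal⟩ := IsLocalRing.exists_factor_valuationRing (algebraMap B K)
  let ψ : B →+* V := (algebraMap B K).codRestrict V.toSubring hV
  let : Algebra B V := ψ.toAlgebra
  let : Algebra k V := (ψ.comp (algebraMap k B)).toAlgebra
  have : IsScalarTower k B V := IsScalarTower.of_algebraMap_eq fun _ => rfl
  have hfV : algebraMap B V f ≠ 0 := fun h => hfK (congrArg Subtype.val h)
  have regular : IsSMulRegular V f := fun x y hxy => by
    simp only [Algebra.smul_def] at hxy
    exact mul_left_cancel₀ hfV hxy
  have pow_smul_eq : ∀ x : V, ∃ (c : ℕ) (b : B), f ^ c • x = algebraMap B V b := by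
    intro x
    obtain ⟨y, hy⟩ := Ideal.Quotient.mk_surjective (I := 𝔪) (x : K)
    obtain ⟨⟨b, ⟨_, c, rfl⟩⟩, h⟩ := IsLocalization.surj (Submonoid.powers f) y
    refine ⟨c, b, Subtype.ext ?_⟩
    have h' := congrArg (Ideal.Quotient.mk 𝔪) h
    simp only [map_mul, map_pow, hy] at h'
    rw [Algebra.smul_def, map_pow, mul_comm]
    exact h'
  have := finiteDimensional_quotient_span_algebraMap (k := k) regular pow_smul_eq
  have map_mem : ∀ z ∈ IsLocalRing.maximalIdeal B, algebraMap B V z ∈ IsLocalRing.maximalIdeal V :=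
    fun z hz hu => hz (hlocal.map_nonunit z hu)
  obtain ⟨γ, hγf, hγ⟩ := exists_arc_of_valuationRing (k := k) hfV (map_mem f hfm)
  exact ⟨γ.comp (IsScalarTower.toAlgHom k B V), hγf, fun z hz => hγ _ (map_mem z hz)⟩

lemma exists_arc_of_isMaximal {B : Type*} [CommRing B] [Algebra k B] {f : B}
    (hf : IsSMulRegular B f) [FiniteDimensional k (B ⧸ Ideal.span {f})] {𝔫 : Ideal B}
    [𝔫.IsMaximal] (hf𝔫 : f ∈ 𝔫) :
    ∃ γ : B →ₐ[k] PowerSeries k, γ f ≠ 0 ∧ ∀ z ∈ 𝔫, PowerSeries.X ∣ γ z := by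
  let C := Localization.AtPrime 𝔫
  have map_mem {z : B} : z ∈ 𝔫 → algebraMap B C z ∈ IsLocalRing.maximalIdeal C :=
    (IsLocalization.AtPrime.to_map_mem_maximal_iff C 𝔫 z).2
  have := finiteDimensional_quotient_span_localization (k := k) 𝔫.primeCompl (B := C) f
  obtain ⟨γ, hγf, hγ⟩ := exists_arc (k := k)
    (hf.of_isLocalization (S := C) 𝔫.primeCompl) (map_mem hf𝔫)
  exact ⟨γ.comp (IsScalarTower.toAlgHom k B C), hγf, fun z hz => hγ _ (map_mem hz)⟩

end Arcs

section Integrality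

variable {k A : Type*} [Field k] [CommRing A] [Algebra k A]

lemma exists_pow_eq_sum_of_mul_aeval_eq_one {L : Type*} [CommRing L] [Algebra A L]
    (hinj : Function.Injective (algebraMap A L)) {p q : A} {z : L}
    (hz : z * algebraMap A L p = algebraMap A L q) {P : A[X]}
    (hP : z * Polynomial.aeval z P = 1) :
    ∃ d > 0, ∃ a : ℕ → A, p ^ d = ∑ i ∈ Finset.range d, a i * p ^ i * q ^ (d - i) := by
  refine ⟨P.natDegree + 1, Nat.succ_pos _, fun i => P.coeff (P.natDegree - i), hinj ?_⟩
  have sum_eq_one : ∑ j ∈ Finset.range (P.natDegree + 1),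
      algebraMap A L (P.coeff j) * z ^ (j + 1) = 1 := by
    rw [← hP, Polynomial.aeval_eq_sum_range, Finset.mul_sum]
    refine Finset.sum_congr rfl fun j _ => ?_
    rw [Algebra.smul_def]
    ring
  rw [← Finset.sum_range_reflect, map_pow, map_sum, ← one_mul (_ ^ _), ← sum_eq_one,
    Finset.sum_mul]
  refine Finset.sum_congr rfl fun j hj => ?_
  have hj' : j ≤ P.natDegree := Finset.mem_range_succ_iff.1 hj
  beta_reduce
  rw [Nat.add_sub_cancel, Nat.sub_sub_self hj',
    show P.natDegree + 1 - (P.natDegree - j) = j + 1 by omega,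
    show P.natDegree + 1 = (P.natDegree - j) + (j + 1) by omega]
  simp only [map_mul, map_pow, ← hz]
  ring

variable [IsAlgClosed k] [IsLocalRing A]

lemma algebraMap_adjoin_singleton_mem_of_isMaximal {L : Type*} [CommRing L] [Algebra A L] {z : L}
    {𝔫 : Ideal (Algebra.adjoin A {z})} [𝔫.IsMaximal]
    (hz : (⟨z, Algebra.self_mem_adjoin_singleton A z⟩ : Algebra.adjoin A {z}) ∈ 𝔫) {f : A}
    (hf : f ∈ IsLocalRing.maximalIdeal A) : algebraMap A (Algebra.adjoin A {z}) f ∈ 𝔫 := by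
  have surjective :
      Function.Surjective ((Ideal.Quotient.mk 𝔫).comp (algebraMap A (Algebra.adjoin A {z}))) := by
    intro y
    obtain ⟨b, rfl⟩ := Ideal.Quotient.mk_surjective y
    obtain ⟨P, hP⟩ := Algebra.adjoin_mem_exists_aeval A z b.2
    refine ⟨P.coeff 0, ((Ideal.Quotient.mk_eq_mk_iff_sub_mem _ _).2 ?_).symm⟩
    rw [show b = Polynomial.aeval ⟨z, Algebra.self_mem_adjoin_singleton A z⟩ P from
      Subtype.ext (by rw [← hP, ← Subalgebra.aeval_coe]), ← Polynomial.divX_mul_X_add P]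
    simpa using 𝔫.mul_mem_left _ hz
  have : (⊥ : Ideal (Algebra.adjoin A {z} ⧸ 𝔫)).IsMaximal :=
    (Ideal.bot_quotient_isMaximal_iff 𝔫).2 ‹_›
  have := Ideal.comap_isMaximal_of_surjective _ surjective (K := ⊥)
  have mem_comap := IsLocalRing.eq_maximalIdeal this ▸ hf
  exact Ideal.Quotient.eq_zero_iff_mem.1 mem_comap

/-- In `A[q / p]`, the arcs detect whether `q / p` is a unit, and its inverse being a polynomial in
`q / p` is an equation of integral dependence for `p / q`. -/
lemma exists_pow_eq_sum_of_forall_arc {f : A} (hf : IsSMulRegular A f)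
    (hfm : f ∈ IsLocalRing.maximalIdeal A) [FiniteDimensional k (A ⧸ Ideal.span {f})]
    {p q : A} {c : ℕ} (hp : p ∣ f ^ c)
    (harc : ∀ γ : A →ₐ[k] PowerSeries k, γ f ≠ 0 → ¬PowerSeries.X * γ p ∣ γ q) :
    ∃ d > 0, ∃ a : ℕ → A, p ^ d = ∑ i ∈ Finset.range d, a i * p ^ i * q ^ (d - i) := by
  let L := Localization.Away f
  have injective : Function.Injective (algebraMap A L) := by
    refine (IsLocalization.injective_iff_isRegular (Submonoid.powers f)).2 ?_
    rintro ⟨_, c, rfl⟩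
    exact isLeftRegular_iff_isRegular.1 (hf.pow c)
  obtain ⟨u, hu⟩ := (IsLocalization.Away.algebraMap_isUnit_iff (S := L) f).2 ⟨c, hp⟩
  let A' := Algebra.adjoin A {algebraMap A L q * ((u⁻¹ : Lˣ) : L)}
  let z : A' := ⟨_, Algebra.self_mem_adjoin_singleton A _⟩
  have z_mul : z * algebraMap A A' p = algebraMap A A' q := by
    refine Subtype.ext ?_
    change algebraMap A L q * ((u⁻¹ : Lˣ) : L) * algebraMap A L p = algebraMap A L q
    rw [← hu, Units.inv_mul_cancel_right]
  by_cases hz : IsUnit z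
  · obtain ⟨w, hw⟩ := hz.exists_right_inv
    obtain ⟨P, hP⟩ := Algebra.adjoin_mem_exists_aeval A _ w.2
    refine exists_pow_eq_sum_of_mul_aeval_eq_one injective (congrArg Subtype.val z_mul) (P := P) ?_
    change (z : L) * Polynomial.aeval (z : L) P = 1
    rw [hP]
    exact congrArg Subtype.val hw
  · obtain ⟨𝔫, h𝔫, hz𝔫⟩ := exists_max_ideal_of_mem_nonunits hz
    have pow_smul_eq (b : A') : ∃ (c : ℕ) (a : A), f ^ c • b = algebraMap A A' a := by
      obtain ⟨⟨a, ⟨_, c, rfl⟩⟩, h⟩ := IsLocalization.surj (Submonoid.powers f) (b : L)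
      refine ⟨c, a, Subtype.ext ?_⟩
      rw [Algebra.smul_def, mul_comm]
      exact h
    have regular : IsSMulRegular A' f :=
      .of_injective A'.val.toLinearMap Subtype.val_injective
        (((IsLocalization.Away.algebraMap_isUnit f).isSMulRegular L).of_map _ (algebraMap_smul L f))
    have := finiteDimensional_quotient_span_algebraMap (k := k) regular pow_smul_eq
    obtain ⟨γ, hγf, hγ⟩ := exists_arc_of_isMaximal (k := k)
      (regular.map (algebraMap A A') (algebraMap_smul A' f))
      (algebraMap_adjoin_singleton_mem_of_isMaximal hz𝔫 hfm)
    refine absurd ?_ (harc (γ.comp (IsScalarTower.toAlgHom k A A')) hγf)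
    change PowerSeries.X * γ (algebraMap A A' p) ∣ γ (algebraMap A A' q)
    rw [← z_mul, map_mul]
    exact mul_dvd_mul_right (hγ z hz𝔫) _

end Integrality

section PowerSeriesDerivative

variable {k : Type*} [Field k]

lemma X_dvd_map_of_mem_maximalIdeal {A : Type*} [CommRing A] [IsLocalRing A] [Algebra k A]
    (γ : A →ₐ[k] PowerSeries k) {f : A} (hf : f ∈ IsLocalRing.maximalIdeal A) :
    PowerSeries.X ∣ γ f := by
  rw [PowerSeries.X_dvd_iff]
  by_contra hc
  set c := PowerSeries.constantCoeff (γ f) with c_def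
  have unit : IsUnit (algebraMap k A c - f) := by
    by_contra h
    have mem := Ideal.add_mem _ ((IsLocalRing.mem_maximalIdeal _).2 h) hf
    rw [sub_add_cancel] at mem
    exact mem ((isUnit_iff_ne_zero.2 hc).map _)
  have map_unit := unit.map γ
  rw [PowerSeries.isUnit_iff_constantCoeff, map_sub, AlgHom.commutes] at map_unit
  simp [← c_def] at map_unit

lemma not_X_mul_dvd_of_associated {F G : PowerSeries k} (h : Associated F G) (hF : F ≠ 0) :
    ¬PowerSeries.X * F ∣ G := by
  rw [h.dvd_iff_dvd_right.symm]
  intro hdvd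
  exact PowerSeries.X_prime.not_isUnit
    (isUnit_of_dvd_one ((mul_dvd_mul_iff_right hF).1 (by rwa [one_mul])))

variable [CharZero k]

lemma associated_X_mul_derivative {F : PowerSeries k} (hF : F ≠ 0) (hX : PowerSeries.X ∣ F) :
    Associated (PowerSeries.X * PowerSeries.derivative k F) F := by
  obtain ⟨u, hu, hnd⟩ :=
    (FiniteMultiplicity.of_prime_left PowerSeries.X_prime hF).exists_eq_pow_mul_and_not_dvd
  have multiplicity_ne_zero : multiplicity (PowerSeries.X : PowerSeries k) F ≠ 0 := by
    rwa [Ne, multiplicity_eq_zero, not_not]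
  obtain ⟨m, hm⟩ := Nat.exists_eq_succ_of_ne_zero multiplicity_ne_zero
  rw [hm] at hu
  rw [PowerSeries.X_dvd_iff] at hnd
  have unit : IsUnit u := by
    rwa [PowerSeries.isUnit_iff_constantCoeff, isUnit_iff_ne_zero]
  have unit' : IsUnit (((m + 1 : ℕ) : PowerSeries k) * u +
      PowerSeries.X * PowerSeries.derivative k u) := by
    rw [PowerSeries.isUnit_iff_constantCoeff, isUnit_iff_ne_zero]
    have : (m : k) + 1 ≠ 0 := Nat.cast_add_one_ne_zero m
    simp [hnd, this]
  have derivative_eq : PowerSeries.X * PowerSeries.derivative k F = PowerSeries.X ^ (m + 1) *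
      (((m + 1 : ℕ) : PowerSeries k) * u + PowerSeries.X * PowerSeries.derivative k u) := by
    rw [hu, Derivation.leibniz, Derivation.leibniz_pow]
    simp [PowerSeries.derivative_X]
    ring
  rw [derivative_eq, hu]
  exact (associated_mul_unit_left _ _ unit').trans (associated_mul_unit_right _ _ unit)

lemma associated_of_mul_derivative_eq {F H P U : PowerSeries k} (hF : F ≠ 0) (hH : H ≠ 0)
    (hFX : PowerSeries.X ∣ F) (hHX : PowerSeries.X ∣ H)
    (h : P * PowerSeries.derivative k H + U * PowerSeries.derivative k F = 0) :
    Associated (U * F) (P * H) := by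
  have hF' := (associated_X_mul_derivative hF hFX).mul_left U
  have hH' := (associated_X_mul_derivative hH hHX).mul_left P
  have eq_neg : P * (PowerSeries.X * PowerSeries.derivative k H) =
      -(U * (PowerSeries.X * PowerSeries.derivative k F)) := by
    linear_combination PowerSeries.X * h
  rw [eq_neg] at hH'
  exact hF'.symm.trans ((Associated.refl _).neg_right.trans hH')

lemma associated_map_of_derivative_eq {A : Type*} [CommRing A] [IsLocalRing A]
    [Algebra k A] {ι : Type*} [Fintype ι] {v w : ι → A} {f h p u : A}
    (hvw : ∀ i, p * w i + u * v i = 0) (γ : A →ₐ[k] PowerSeries k) {ξ : ι → PowerSeries k}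
    (hξf : PowerSeries.derivative k (γ f) = ∑ i, γ (v i) * ξ i)
    (hξh : PowerSeries.derivative k (γ h) = ∑ i, γ (w i) * ξ i)
    (hfm : f ∈ IsLocalRing.maximalIdeal A) (hhm : h ∈ IsLocalRing.maximalIdeal A)
    (hf : γ f ≠ 0) (hh : γ h ≠ 0) : Associated (γ (u * f)) (γ (p * h)) := by
  rw [map_mul, map_mul]
  refine associated_of_mul_derivative_eq hf hh (X_dvd_map_of_mem_maximalIdeal γ hfm)
    (X_dvd_map_of_mem_maximalIdeal γ hhm) ?_
  rw [hξf, hξh, Finset.mul_sum, Finset.mul_sum, ← Finset.sum_add_distrib]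
  refine Finset.sum_eq_zero fun i _ => ?_
  simp only [← mul_assoc, ← add_mul, ← map_mul, ← map_add, hvw, map_zero, zero_mul]

end PowerSeriesDerivative

section Pair

open scoped Pointwise

variable {ι : Type*} {R M : Type*} [CommRing R] [AddCommGroup M] [Module R M]
  {e₁ e₂ : M} {v w : ι → R}

lemma isSMulRegular_of_dvd {p q : R} (hq : IsSMulRegular M q) (h : p ∣ q) : IsSMulRegular M p := by
  obtain ⟨r, rfl⟩ := h
  exact .of_mul (mul_comm p r ▸ hq)

lemma eq_zero_of_span_pair_eq_top [FaithfulSMul R M] (hgen : Submodule.span R {e₁, e₂} = ⊤) {a : R}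
    (h₁ : a • e₁ = 0) (h₂ : a • e₂ = 0) : a = 0 := by
  refine eq_of_smul_eq_smul fun x : M => ?_
  obtain ⟨b, c, rfl⟩ := Submodule.mem_span_pair.1 (hgen ▸ Submodule.mem_top : x ∈ _)
  rw [smul_add, smul_comm a b, smul_comm a c, h₁, h₂, smul_zero, smul_zero, add_zero, zero_smul]

lemma exists_smul_eq_smul_of_mem_span (hrel : ∀ i, v i • e₁ + w i • e₂ = 0) {a : R}
    (ha : a ∈ Ideal.span (Set.range v)) : ∃ u : R, a • e₁ = u • e₂ := by
  have span_le : Ideal.span (Set.range v) ≤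
      (Submodule.span R {e₂}).comap (LinearMap.toSpanSingleton R M e₁) := by
    refine Ideal.span_le.2 ?_
    rintro _ ⟨i, rfl⟩
    refine Submodule.mem_span_singleton.2 ⟨-w i, ?_⟩
    rw [LinearMap.toSpanSingleton_apply, neg_smul, eq_neg_of_add_eq_zero_left (hrel i)]
  obtain ⟨u, hu⟩ := Submodule.mem_span_singleton.1 (span_le ha)
  exact ⟨u, hu.symm⟩

lemma mul_add_mul_eq_zero [FaithfulSMul R M] (hgen : Submodule.span R {e₁, e₂} = ⊤) {a u : R}
    (ha : IsSMulRegular M a) (hu : a • e₁ = u • e₂) (hrel : ∀ i, v i • e₁ + w i • e₂ = 0) (i : ι) :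
    a * w i + u * v i = 0 := by
  have h₂ : (a * w i + u * v i) • e₂ = 0 := by
    calc (a * w i + u * v i) • e₂ = v i • u • e₂ + a • w i • e₂ := by
          rw [add_smul, mul_smul, mul_comm u, mul_smul, add_comm]
      _ = a • (v i • e₁ + w i • e₂) := by rw [← hu, smul_add, smul_comm a, smul_comm a]
      _ = 0 := by rw [hrel, smul_zero]
  refine eq_zero_of_span_pair_eq_top hgen (ha.right_eq_zero_of_smul ?_) h₂
  rw [smul_comm, hu, smul_comm, h₂, smul_zero]

lemma mul_eq_mul_of_smul_eq_smul [FaithfulSMul R M] (hgen : Submodule.span R {e₁, e₂} = ⊤)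
    {a b u t : R} (hu : a • e₁ = u • e₂) (ht : b • e₂ = t • e₁) : u * t = a * b := by
  rw [← sub_eq_zero]
  refine eq_zero_of_span_pair_eq_top hgen ?_ ?_
  · rw [sub_smul, mul_smul, ← ht, mul_comm, mul_smul, hu, smul_comm, sub_self]
  · rw [sub_smul, mul_comm, mul_smul, ← hu, mul_smul, ht, smul_comm, sub_self]

lemma colength_span_smul_eq_of_smul_eq_smul {k : Type*} [Field k] [Algebra k R] [Module k M]
    [IsScalarTower k R M] {f h p u : R} (hp : IsSMulRegular M p)
    (hfin : colength k (p • (⊤ : Submodule R M)) ≠ ⊤) (hu : p • e₁ = u • e₂)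
    (huf : IsSMulRegular M (u * f)) (hph : IsSMulRegular M (p * h))
    (heq : colength k ((u * f) • (⊤ : Submodule R M)) =
      colength k ((p * h) • (⊤ : Submodule R M))) :
    colength k (Submodule.span R {f • e₁}) = colength k (Submodule.span R {h • e₂}) := by
  have smul_span (a : R) (x : M) : a • Submodule.span R {x} = Submodule.span R {a • x} := by
    rw [← Set.smul_set_singleton, Submodule.span_smul]
  refine WithTop.add_left_cancel hfin ?_
  calc colength k (p • (⊤ : Submodule R M)) + colength k (Submodule.span R {f • e₁})
      = colength k ((u * f) • Submodule.span R {e₂}) := by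
        rw [← colength_smul hp, smul_span, smul_span, smul_comm, hu, mul_comm, mul_smul]
    _ = colength k ((p * h) • Submodule.span R {e₂}) := by
        rw [colength_smul huf, heq, ← colength_smul hph]
    _ = colength k (p • (⊤ : Submodule R M)) + colength k (Submodule.span R {h • e₂}) := by
        rw [← colength_smul hp, smul_span, smul_span, mul_smul]

end Pair

section Comparison

lemma finiteDimensional_quotient_of_surjective {k O A : Type*} [Field k] [CommRing O] [CommRing A]
    [Algebra k O] [Algebra k A] {π : O →ₐ[k] A} (hπ : Function.Surjective π) {I : Ideal O}
    {I' : Ideal A} (h : I ≤ I'.comap π) [FiniteDimensional k (O ⧸ I)] :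
    FiniteDimensional k (A ⧸ I') :=
  .of_surjective (Ideal.quotientMapₐ I' π h).toLinearMap
    (Ideal.quotientMap_surjective (H := h) hπ)

open scoped Pointwise

variable {k A N : Type*} [Field k] [IsAlgClosed k] [CommRing A] [IsLocalRing A] [Algebra k A]
  [AddCommGroup N] [Module A N] [Module k N] [IsScalarTower k A N]

lemma colength_smul_top_le_of_forall_arc [FaithfulSMul A N] [Module.Finite A N] {f : A}
    (hf : IsSMulRegular N f)
    (hfm : f ∈ IsLocalRing.maximalIdeal A) [FiniteDimensional k (A ⧸ Ideal.span {f})]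
    {p q : A} {c d : ℕ} (hp : p ∣ f ^ c) (hq : q ∣ f ^ d)
    (harc : ∀ γ : A →ₐ[k] PowerSeries k, γ f ≠ 0 → ¬PowerSeries.X * γ p ∣ γ q) :
    colength k (q • (⊤ : Submodule A N)) ≤ colength k (p • (⊤ : Submodule A N)) := by
  have regular : IsSMulRegular A f := .of_right_eq_zero_of_smul fun a ha => by
    refine eq_of_smul_eq_smul fun x : N => hf ?_
    simp only [zero_smul, smul_zero, ← mul_smul, ← smul_eq_mul, ha]
  have fin_q : colength k (q • (⊤ : Submodule A N)) ≠ ⊤ := by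
    refine colength_ne_top_of_pow_smul_top_le hf
      (colength_smul_top_ne_top (colength_ne_top_iff.2 ‹_›)) (c := d) ?_
    obtain ⟨r, hr⟩ := hq
    rw [hr, mul_smul]
    exact Submodule.map_mono le_top
  obtain ⟨d, hd, a, ha⟩ := exists_pow_eq_sum_of_forall_arc regular hfm hp harc
  exact colength_smul_top_le_of_integral (isSMulRegular_of_dvd (hf.pow _) hp)
    (isSMulRegular_of_dvd (hf.pow _) hq) fin_q hd a fun x => by rw [ha]

lemma colength_smul_top_eq_of_forall_arc [FaithfulSMul A N] [Module.Finite A N] {f : A}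
    (hf : IsSMulRegular N f)
    (hfm : f ∈ IsLocalRing.maximalIdeal A) [FiniteDimensional k (A ⧸ Ideal.span {f})]
    {p q : A} {c d : ℕ} (hp : p ∣ f ^ c) (hq : q ∣ f ^ d)
    (harc : ∀ γ : A →ₐ[k] PowerSeries k, γ f ≠ 0 → Associated (γ p) (γ q)) :
    colength k (p • (⊤ : Submodule A N)) = colength k (q • (⊤ : Submodule A N)) := by
  have ne_zero {γ : A →ₐ[k] PowerSeries k} (hγ : γ f ≠ 0) {r : A} {m : ℕ} (hr : r ∣ f ^ m) :
      γ r ≠ 0 :=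
    ne_zero_of_dvd_ne_zero (pow_ne_zero m hγ) (by simpa using map_dvd γ hr)
  refine le_antisymm ?_ ?_
  · exact colength_smul_top_le_of_forall_arc hf hfm hq hp fun γ hγ =>
      not_X_mul_dvd_of_associated (harc γ hγ).symm (ne_zero hγ hq)
  · exact colength_smul_top_le_of_forall_arc hf hfm hp hq fun γ hγ =>
      not_X_mul_dvd_of_associated (harc γ hγ) (ne_zero hγ hp)

lemma colength_span_smul_eq_of_faithfulSMul [CharZero k] [FaithfulSMul A N] {ι : Type*} [Fintype ι]
    {v w : ι → A} {f h : A} {e₁ e₂ : N} (hgen : Submodule.span A {e₁, e₂} = ⊤)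
    (hrel : ∀ i, v i • e₁ + w i • e₂ = 0) (hf : IsSMulRegular N f)
    (hfm : f ∈ IsLocalRing.maximalIdeal A) (hhm : h ∈ IsLocalRing.maximalIdeal A)
    [FiniteDimensional k (A ⧸ Ideal.span {f})] [FiniteDimensional k (A ⧸ Ideal.span {h})]
    [FiniteDimensional k (A ⧸ Ideal.span (Set.range v))]
    [FiniteDimensional k (A ⧸ Ideal.span (Set.range w))]
    (harc : ∀ γ : A →ₐ[k] PowerSeries k, ∃ ξ : ι → PowerSeries k,
      PowerSeries.derivative k (γ f) = ∑ i, γ (v i) * ξ i ∧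
      PowerSeries.derivative k (γ h) = ∑ i, γ (w i) * ξ i) :
    colength k (Submodule.span A {f • e₁}) = colength k (Submodule.span A {h • e₂}) := by
  have : Module.Finite A N := ⟨hgen ▸ Submodule.fg_span (Set.toFinite _)⟩
  obtain ⟨K, hK⟩ := exists_pow_mem_of_mem_maximalIdeal k (Ideal.span (Set.range v)) hfm
  obtain ⟨K', hK'⟩ := exists_pow_mem_of_mem_maximalIdeal k (Ideal.span (Set.range w)) hfm
  obtain ⟨c, hc⟩ := exists_pow_mem_of_mem_maximalIdeal k (Ideal.span {h}) hfm
  rw [Ideal.mem_span_singleton] at hc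
  obtain ⟨u, hu⟩ := exists_smul_eq_smul_of_mem_span hrel hK
  obtain ⟨t, ht⟩ := exists_smul_eq_smul_of_mem_span (fun i => (add_comm _ _).trans (hrel i)) hK'
  have u_dvd : u ∣ f ^ (K + K') :=
    ⟨t, by rw [mul_eq_mul_of_smul_eq_smul hgen hu ht, pow_add]⟩
  have p_dvd : u * f ∣ f ^ (K + K' + 1) := by
    rw [pow_succ]
    exact mul_dvd_mul_right u_dvd f
  have q_dvd : f ^ K * h ∣ f ^ (K + c) := by
    rw [pow_add]
    exact mul_dvd_mul_left _ hc
  have colength_eq : colength k ((u * f) • (⊤ : Submodule A N)) =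
      colength k ((f ^ K * h) • (⊤ : Submodule A N)) := by
    refine colength_smul_top_eq_of_forall_arc hf hfm p_dvd q_dvd fun γ hγ => ?_
    obtain ⟨ξ, hξf, hξh⟩ := harc γ
    have hγh : γ h ≠ 0 :=
      ne_zero_of_dvd_ne_zero (pow_ne_zero c hγ) (by simpa using map_dvd γ hc)
    exact associated_map_of_derivative_eq (mul_add_mul_eq_zero hgen (hf.pow K) hu hrel) γ hξf hξh
      hfm hhm hγ hγh
  have fin_pow : colength k (f ^ K • (⊤ : Submodule A N)) ≠ ⊤ :=
    colength_ne_top_of_pow_smul_top_le hf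
      (colength_smul_top_ne_top (colength_ne_top_iff.2 inferInstance)) le_rfl
  exact colength_span_smul_eq_of_smul_eq_smul (hf.pow K) fin_pow hu
    (isSMulRegular_of_dvd (hf.pow _) p_dvd) (isSMulRegular_of_dvd (hf.pow _) q_dvd) colength_eq

variable {O : Type*} [CommRing O] [IsLocalRing O] [Algebra k O] [Module O N] [IsScalarTower k O N]

lemma colength_span_smul_eq_of_surjective [CharZero k] [FaithfulSMul A N] [Algebra O A]
    [IsScalarTower k O A] [IsScalarTower O A N] (hsurj : Function.Surjective (algebraMap O A))
    {ι : Type*} [Fintype ι] {v w : ι → O} {f h : O} {e₁ e₂ : N}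
    (hgen : Submodule.span O {e₁, e₂} = ⊤) (hrel : ∀ i, v i • e₁ + w i • e₂ = 0)
    (hf : IsSMulRegular N f)
    (hfm : f ∈ IsLocalRing.maximalIdeal O) (hhm : h ∈ IsLocalRing.maximalIdeal O)
    [FiniteDimensional k (A ⧸ Ideal.span {algebraMap O A f})]
    [FiniteDimensional k (A ⧸ Ideal.span {algebraMap O A h})]
    [FiniteDimensional k (O ⧸ Ideal.span (Set.range v))]
    [FiniteDimensional k (O ⧸ Ideal.span (Set.range w))]
    (harc : ∀ γ : O →ₐ[k] PowerSeries k, ∃ ξ : ι → PowerSeries k,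
      PowerSeries.derivative k (γ f) = ∑ i, γ (v i) * ξ i ∧
      PowerSeries.derivative k (γ h) = ∑ i, γ (w i) * ξ i) :
    colength k (Submodule.span O {f • e₁}) = colength k (Submodule.span O {h • e₂}) := by
  let π := IsScalarTower.toAlgHom k O A
  have : IsLocalHom (algebraMap O A) := .of_surjective _ hsurj
  have finite_range (v : ι → O) [FiniteDimensional k (O ⧸ Ideal.span (Set.range v))] :
      FiniteDimensional k (A ⧸ Ideal.span (Set.range (π ∘ v))) :=
    finiteDimensional_quotient_of_surjective (π := π) (I := Ideal.span (Set.range v)) hsurj <| by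
      rw [Ideal.span_le]
      rintro _ ⟨i, rfl⟩
      exact Ideal.subset_span ⟨i, rfl⟩
  have regular : IsSMulRegular N (algebraMap O A f) := fun x y hxy =>
    hf (by simpa only [algebraMap_smul] using hxy)
  have key := colength_span_smul_eq_of_faithfulSMul (k := k) (v := π ∘ v) (w := π ∘ w)
    (f := algebraMap O A f) (h := algebraMap O A h) (e₁ := e₁) (e₂ := e₂)
    (by rw [← Submodule.restrictScalars_eq_top_iff O, Submodule.restrictScalars_span O A hsurj,
      hgen])
    (fun i => by simpa only [Function.comp_apply, π, IsScalarTower.coe_toAlgHom',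
      algebraMap_smul] using hrel i)
    regular (map_nonunit _ _ hfm) (map_nonunit _ _ hhm) fun γ => harc (γ.comp π)
  have colength_span (x : N) : colength k (Submodule.span A {x}) =
      colength k (Submodule.span O {x}) := by
    rw [← colength_restrictScalars (O := O), Submodule.restrictScalars_span O A hsurj]
  simpa only [colength_span, algebraMap_smul] using key

lemma colength_span_smul_eq [CharZero k] {ι : Type*} [Fintype ι]
    {v w : ι → O} {f h : O} {e₁ e₂ : N} (hgen : Submodule.span O {e₁, e₂} = ⊤)
    (hrel : ∀ i, v i • e₁ + w i • e₂ = 0) (hf : IsSMulRegular N f)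
    (hfm : f ∈ IsLocalRing.maximalIdeal O) (hhm : h ∈ IsLocalRing.maximalIdeal O)
    {J : Ideal O} (hJ : J ≤ Module.annihilator O N)
    [FiniteDimensional k (O ⧸ J ⊔ Ideal.span {f})] [FiniteDimensional k (O ⧸ J ⊔ Ideal.span {h})]
    [FiniteDimensional k (O ⧸ Ideal.span (Set.range v))]
    [FiniteDimensional k (O ⧸ Ideal.span (Set.range w))]
    (harc : ∀ γ : O →ₐ[k] PowerSeries k, ∃ ξ : ι → PowerSeries k,
      PowerSeries.derivative k (γ f) = ∑ i, γ (v i) * ξ i ∧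
      PowerSeries.derivative k (γ h) = ∑ i, γ (w i) * ξ i) :
    colength k (Submodule.span O {f • e₁}) = colength k (Submodule.span O {h • e₂}) := by
  rcases subsingleton_or_nontrivial N with _ | _
  · rw [Subsingleton.elim e₁ 0, Subsingleton.elim e₂ 0, smul_zero, smul_zero]
  let A := O ⧸ Module.annihilator O N
  let : Module A N := Module.quotientAnnihilator
  have : FaithfulSMul A N := ⟨fun {a b} hab => by
    obtain ⟨a, rfl⟩ := Ideal.Quotient.mk_surjective a
    obtain ⟨b, rfl⟩ := Ideal.Quotient.mk_surjective b
    rw [Ideal.Quotient.eq, Module.mem_annihilator]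
    exact fun x => by rw [sub_smul, sub_eq_zero]; exact hab x⟩
  have : IsScalarTower O A N := ⟨fun a b x => by
    obtain ⟨b, rfl⟩ := Ideal.Quotient.mk_surjective b
    exact mul_smul a b x⟩
  have : IsScalarTower k A N := .of_algebraMap_smul fun c x => algebraMap_smul O c x
  have : Nontrivial A := Ideal.Quotient.nontrivial_iff.2 <| by
    rwa [Ne, Module.annihilator_eq_top_iff, not_subsingleton_iff_nontrivial]
  have : IsLocalRing A := .of_surjective' (Ideal.Quotient.mk _) Ideal.Quotient.mk_surjective
  have finite_principal (a : O) [FiniteDimensional k (O ⧸ J ⊔ Ideal.span {a})] :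
      FiniteDimensional k (A ⧸ Ideal.span {algebraMap O A a}) := by
    refine finiteDimensional_quotient_of_surjective (π := Ideal.Quotient.mkₐ k _)
      (I := J ⊔ Ideal.span {a}) Ideal.Quotient.mk_surjective (sup_le (fun b hb => ?_) ?_)
    · rw [Ideal.mem_comap, Ideal.Quotient.mkₐ_eq_mk, Ideal.Quotient.eq_zero_iff_mem.2 (hJ hb)]
      exact zero_mem _
    · rw [Ideal.span_singleton_le_iff_mem]
      exact Ideal.mem_span_singleton_self _
  exact colength_span_smul_eq_of_surjective (A := A) Ideal.Quotient.mk_surjective hgen hrel hf hfm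
    hhm harc

end Comparison

section PairCokernel

variable {O ι : Type*} [CommRing O]

/-- The ideal of `2 × 2` minors of the matrix with rows `v` and `w`. -/
def minorsIdeal (v w : ι → O) : Ideal O :=
  Ideal.span (Set.range fun p : ι × ι => v p.1 * w p.2 - v p.2 * w p.1)

lemma minorsIdeal_comm (v w : ι → O) : minorsIdeal v w = minorsIdeal w v := by
  suffices h : ∀ v w : ι → O, minorsIdeal v w ≤ minorsIdeal w v from (h v w).antisymm (h w v)
  intro v w
  refine Ideal.span_le.2 ?_
  rintro _ ⟨⟨i, j⟩, rfl⟩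
  exact Ideal.subset_span ⟨(j, i), by ring⟩

/-- The cokernel of the map `(ι → O) → O²` whose matrix has rows `v` and `w`. For the gradients of
`f` and `h` this is the module of the proof on which both Bruce-Roberts numbers are read off. -/
abbrev PairCokernel (v w : ι → O) : Type _ :=
  (O × O) ⧸ Submodule.span O (Set.range fun i => (v i, w i))

namespace PairCokernel

variable (v w : ι → O)

/-- The class of `(1, 0)`. -/
def e₁ : PairCokernel v w := Submodule.Quotient.mk (1, 0)

/-- The class of `(0, 1)`. -/
def e₂ : PairCokernel v w := Submodule.Quotient.mk (0, 1)

lemma smul_e₁_add_smul_e₂ (a b : O) :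
    a • e₁ v w + b • e₂ v w = Submodule.Quotient.mk (a, b) := by
  rw [e₁, e₂, ← Submodule.Quotient.mk_smul, ← Submodule.Quotient.mk_smul,
    ← Submodule.Quotient.mk_add]
  simp

variable {v w} in
lemma exists_eq (x : PairCokernel v w) : ∃ a b : O, a • e₁ v w + b • e₂ v w = x := by
  obtain ⟨⟨a, b⟩, rfl⟩ := Submodule.Quotient.mk_surjective _ x
  exact ⟨a, b, smul_e₁_add_smul_e₂ v w a b⟩

lemma span_e₁_e₂ : Submodule.span O {e₁ v w, e₂ v w} = ⊤ :=
  eq_top_iff.2 fun x _ => Submodule.mem_span_pair.2 (exists_eq x)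

variable {v w}

lemma relation (i : ι) : v i • e₁ v w + w i • e₂ v w = 0 := by
  rw [smul_e₁_add_smul_e₂, Submodule.Quotient.mk_eq_zero]
  exact Submodule.subset_span ⟨i, rfl⟩

lemma minorsIdeal_le_annihilator : minorsIdeal v w ≤ Module.annihilator O (PairCokernel v w) := by
  refine Ideal.span_le.2 ?_
  rintro _ ⟨⟨i, j⟩, rfl⟩
  rw [SetLike.mem_coe, Module.mem_annihilator]
  have relation_i : v i • e₁ v w + w i • e₂ v w = 0 := relation i
  have relation_j : v j • e₁ v w + w j • e₂ v w = 0 := relation j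
  have smul_e₁ : (v i * w j - v j * w i) • e₁ v w = 0 := by
    linear_combination (norm := module) w j • relation_i - w i • relation_j
  have smul_e₂ : (v i * w j - v j * w i) • e₂ v w = 0 := by
    linear_combination (norm := module) v i • relation_j - v j • relation_i
  intro x
  obtain ⟨a, b, rfl⟩ := exists_eq x
  rw [smul_add, smul_comm, smul_e₁, smul_comm, smul_e₂, smul_zero, smul_zero, add_zero]

variable [Fintype ι]

lemma smul_add_smul_eq_zero_iff {a b : O} :
    a • e₁ v w + b • e₂ v w = 0 ↔ ∃ δ : ι → O, ∑ i, δ i * v i = a ∧ ∑ i, δ i * w i = b := by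
  rw [smul_e₁_add_smul_e₂, Submodule.Quotient.mk_eq_zero, Submodule.mem_span_range_iff_exists_fun]
  simp [Prod.ext_iff, Prod.fst_sum, Prod.snd_sum]

end PairCokernel

open PairCokernel

section BruceRoberts

variable [Fintype ι]

/-- The ideal of all `∑ δᵢ vᵢ` with `∑ δᵢ wᵢ ∈ ⟨h⟩`. For `v = grad f` and `w = grad h` this is
`df(Θ_X)`, where `X` is defined by `h`. -/
def constrainedIdeal (v w : ι → O) (h : O) : Ideal O :=
  Submodule.map (Fintype.linearCombination O v)
    (Submodule.comap (Fintype.linearCombination O w) (Ideal.span {h}))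

lemma mem_constrainedIdeal {v w : ι → O} {h a : O} : a ∈ constrainedIdeal v w h ↔
    ∃ δ : ι → O, ∑ i, δ i * w i ∈ Ideal.span {h} ∧ ∑ i, δ i * v i = a :=
  Iff.rfl

lemma comap_span_smul_e₂ (v w : ι → O) (h : O) :
    (Submodule.span O {h • e₂ v w}).comap (LinearMap.toSpanSingleton O _ (e₁ v w)) =
      constrainedIdeal v w h := by
  ext a
  simp only [Submodule.mem_comap, LinearMap.toSpanSingleton_apply, Submodule.mem_span_singleton,
    mem_constrainedIdeal]
  have smul_eq_iff (b : O) : b • h • e₂ v w = a • e₁ v w ↔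
      ∃ δ : ι → O, ∑ i, δ i * v i = a ∧ ∑ i, δ i * w i = -b * h := by
    rw [← smul_add_smul_eq_zero_iff, neg_mul, neg_smul, ← sub_eq_add_neg, sub_eq_zero, mul_smul,
      eq_comm]
  simp only [smul_eq_iff]
  constructor
  · rintro ⟨b, δ, hv, hw⟩
    exact ⟨δ, ⟨-b, hw.symm⟩, hv⟩
  · rintro ⟨δ, ⟨b, hw⟩, hv⟩
    exact ⟨-b, δ, hv, by rw [neg_neg, ← hw, smul_eq_mul]⟩

lemma comap_span_smul_e₁ (v w : ι → O) (f : O) :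
    (Submodule.span O {f • e₁ v w}).comap (LinearMap.toSpanSingleton O _ (e₂ v w)) =
      constrainedIdeal w v f := by
  ext a
  simp only [Submodule.mem_comap, LinearMap.toSpanSingleton_apply, Submodule.mem_span_singleton,
    mem_constrainedIdeal]
  have smul_eq_iff (b : O) : b • f • e₁ v w = a • e₂ v w ↔
      ∃ δ : ι → O, ∑ i, δ i * v i = -b * f ∧ ∑ i, δ i * w i = a := by
    rw [← smul_add_smul_eq_zero_iff, neg_mul, neg_smul, neg_add_eq_zero, mul_smul]
  simp only [smul_eq_iff]
  constructor
  · rintro ⟨b, δ, hv, hw⟩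
    exact ⟨δ, ⟨-b, hv.symm⟩, hw⟩
  · rintro ⟨δ, ⟨b, hv⟩, hw⟩
    exact ⟨-b, δ, by rw [neg_neg, ← hv, smul_eq_mul], hw⟩

variable {k : Type*} [Field k] [Algebra k O] {v w : ι → O} {f h : O}

lemma finiteDimensional_quotient_minorsIdeal_sup [FiniteDimensional k (O ⧸ constrainedIdeal w v f)]
    [FiniteDimensional k (O ⧸ Ideal.span (Set.range v))] :
    FiniteDimensional k (O ⧸ minorsIdeal v w ⊔ Ideal.span {f}) := by
  classical
  refine colength_ne_top_iff.1 (colength_ne_top_of_smul_mem (I := constrainedIdeal w v f)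
    (colength_ne_top_iff.2 ‹_›) (Finset.univ.image v) ?_ ?_)
  · intro r hr m hm
    obtain ⟨i, -, rfl⟩ := Finset.mem_image.1 hm
    obtain ⟨δ, hδ, rfl⟩ := mem_constrainedIdeal.1 hr
    have expand : (∑ j, δ j * w j) * v i = ∑ j, δ j * (v i * w j - v j * w i) +
        w i * ∑ j, δ j * v j := by
      rw [Finset.sum_mul, Finset.mul_sum, ← Finset.sum_add_distrib]
      exact Finset.sum_congr rfl fun j _ => by ring
    change (∑ j, δ j * w j) * v i ∈ _
    rw [expand]
    exact Submodule.add_mem_sup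
      (Ideal.sum_mem _ fun j _ => Ideal.mul_mem_left _ _ (Ideal.subset_span ⟨(i, j), rfl⟩))
      (Ideal.mul_mem_left _ _ hδ)
  · rw [Finset.coe_image, Finset.coe_univ, Set.image_univ]
    exact ne_top_of_le_ne_top (colength_ne_top_iff.2 ‹_›) (colength_anti le_sup_right)

end BruceRoberts

section Counting

variable {k N : Type*} [Field k] [Algebra k O] [AddCommGroup N] [Module O N] [Module k N]
  [IsScalarTower k O N]

/- Both sides differ from `colength B` resp. `colength U` by the colength of `B : f`, where `B` is
the ideal of all `a` with `a • e ∈ U`. -/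
lemma colength_add_colength_comap_sup (U : Submodule O N) (e : N) (f : O) :
    colength k U +
        colength k (U.comap (LinearMap.toSpanSingleton O N e) ⊔ Ideal.span {f}) =
      colength k (U ⊔ Submodule.span O {f • e}) +
        colength k (U.comap (LinearMap.toSpanSingleton O N e)) := by
  have comap_eq : U.comap (LinearMap.toSpanSingleton O N (f • e)) =
      (U.comap (LinearMap.toSpanSingleton O N e)).comap (LinearMap.toSpanSingleton O O f) := by
    ext a
    simp [mul_smul]
  rw [colength_eq_colength_sup_span_add U (f • e), comap_eq,
    colength_eq_colength_sup_span_add (U.comap (LinearMap.toSpanSingleton O N e)) f,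
    add_assoc, add_comm (colength k (Submodule.comap _ _))]

lemma colength_ne_top_of_finiteDimensional_comap {ι : Type*} {e₁ e₂ : N} {v w : ι → O}
    (hgen : Submodule.span O {e₁, e₂} = ⊤) (hrel : ∀ i, v i • e₁ + w i • e₂ = 0)
    [FiniteDimensional k (O ⧸ Ideal.span (Set.range w))] {U : Submodule O N}
    (hU : FiniteDimensional k (O ⧸ U.comap (LinearMap.toSpanSingleton O N e₁))) :
    colength k U ≠ ⊤ := by
  have span_le : Ideal.span (Set.range w) ≤
      (U ⊔ Submodule.span O {e₁}).comap (LinearMap.toSpanSingleton O N e₂) := by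
    refine Ideal.span_le.2 ?_
    rintro _ ⟨i, rfl⟩
    change w i • e₂ ∈ U ⊔ Submodule.span O {e₁}
    rw [eq_neg_of_add_eq_zero_right (hrel i), ← neg_smul]
    exact Submodule.mem_sup_right (Submodule.smul_mem _ _ (Submodule.mem_span_singleton_self _))
  have sup_eq_top : U ⊔ Submodule.span O {e₁} ⊔ Submodule.span O {e₂} = ⊤ := by
    rw [sup_assoc, ← Submodule.span_union, Set.singleton_union, hgen, sup_top_eq]
  rw [colength_eq_colength_sup_span_add U e₁,
    colength_eq_colength_sup_span_add (U ⊔ Submodule.span O {e₁}) e₂, sup_eq_top, colength_top,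
    zero_add]
  exact WithTop.add_ne_top.2 ⟨ne_top_of_le_ne_top (colength_ne_top_iff.2 ‹_›)
    (colength_anti span_le), colength_ne_top_iff.2 hU⟩

end Counting

theorem finrank_sub_finrank_symm [Fintype ι] {k : Type*} [Field k] [IsAlgClosed k] [CharZero k]
    [Algebra k O] [IsLocalRing O] {v w : ι → O} {f h : O}
    (hfm : f ∈ IsLocalRing.maximalIdeal O) (hhm : h ∈ IsLocalRing.maximalIdeal O)
    (hf : IsSMulRegular (PairCokernel v w) f)
    [FiniteDimensional k (O ⧸ constrainedIdeal v w h)]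
    [FiniteDimensional k (O ⧸ constrainedIdeal w v f)]
    [FiniteDimensional k (O ⧸ Ideal.span (Set.range v))]
    [FiniteDimensional k (O ⧸ Ideal.span (Set.range w))]
    (harc : ∀ γ : O →ₐ[k] PowerSeries k, ∃ ξ : ι → PowerSeries k,
      PowerSeries.derivative k (γ f) = ∑ i, γ (v i) * ξ i ∧
      PowerSeries.derivative k (γ h) = ∑ i, γ (w i) * ξ i) :
    (Module.finrank k (O ⧸ constrainedIdeal v w h) : ℤ) -
        Module.finrank k (O ⧸ constrainedIdeal v w h ⊔ Ideal.span {f}) =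
      Module.finrank k (O ⧸ constrainedIdeal w v f) -
        Module.finrank k (O ⧸ constrainedIdeal w v f ⊔ Ideal.span {h}) := by
  have : FiniteDimensional k (O ⧸ minorsIdeal v w ⊔ Ideal.span {f}) :=
    finiteDimensional_quotient_minorsIdeal_sup
  have : FiniteDimensional k (O ⧸ minorsIdeal v w ⊔ Ideal.span {h}) :=
    minorsIdeal_comm v w ▸ finiteDimensional_quotient_minorsIdeal_sup
  have colength_eq := colength_span_smul_eq (k := k) (span_e₁_e₂ v w) relation hf hfm hhm
    minorsIdeal_le_annihilator harc
  have count_f :=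
    colength_add_colength_comap_sup (k := k) (Submodule.span O {h • e₂ v w}) (e₁ v w) f
  have count_h :=
    colength_add_colength_comap_sup (k := k) (Submodule.span O {f • e₁ v w}) (e₂ v w) h
  rw [comap_span_smul_e₂] at count_f
  rw [comap_span_smul_e₁, sup_comm (Submodule.span O {f • e₁ v w}), colength_eq] at count_h
  have U_ne_top : colength k (Submodule.span O {h • e₂ v w}) ≠ ⊤ :=
    colength_ne_top_of_finiteDimensional_comap (span_e₁_e₂ v w) relation <| by
      rw [comap_span_smul_e₂]; infer_instance
  have := finiteDimensional_quotient_of_le (k := k)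
    (le_sup_left : constrainedIdeal v w h ≤ _ ⊔ Ideal.span {f})
  have := finiteDimensional_quotient_of_le (k := k)
    (le_sup_left : constrainedIdeal w v f ≤ _ ⊔ Ideal.span {h})
  have := colength_ne_top_iff.1 U_ne_top
  have := finiteDimensional_quotient_of_le (k := k)
    (le_sup_left : Submodule.span O {h • e₂ v w} ≤ _ ⊔ Submodule.span O {f • e₁ v w})
  simp only [colength_eq_finrank] at count_f count_h
  norm_cast at count_f count_h
  lia

end PairCokernel

section FreeQuotient

variable {R M : Type*} [CommRing R] [AddCommGroup M] [Module R M]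

lemma mem_ideal_smul_top_of_smul_mem [Module.Free R M] {I : Ideal R} {x : R}
    (hx : ∀ g, x * g ∈ I → g ∈ I) {m : M} (hm : x • m ∈ I • (⊤ : Submodule R M)) :
    m ∈ I • (⊤ : Submodule R M) := by
  let b := Module.Free.chooseBasis R M
  have coord_mem (i) : b.repr m i ∈ I := by
    have mem_map : b.coord i (x • m) ∈ (I • (⊤ : Submodule R M)).map (b.coord i) :=
      Submodule.mem_map_of_mem hm
    rw [Submodule.map_smul''] at mem_map
    refine hx _ ?_
    simpa using ((Submodule.smul_mono le_rfl le_top).trans_eq (Ideal.mul_top I)) mem_map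
  rw [← b.linearCombination_repr m, Finsupp.linearCombination_apply]
  exact Submodule.sum_mem _ fun i _ => Submodule.smul_mem_smul (coord_mem i) trivial

lemma mem_ideal_smul_of_smul_mem {I : Ideal R} {x : R} (hx : ∀ g, x * g ∈ I → g ∈ I)
    {W : Submodule R M} [Module.Free R W] {m : M} (hm : m ∈ W) (hxm : x • m ∈ I • W) :
    m ∈ I • W := by
  have mem_top := mem_ideal_smul_top_of_smul_mem (M := W) hx (m := ⟨m, hm⟩)
  rw [Submodule.mem_smul_top_iff, Submodule.mem_smul_top_iff] at mem_top
  exact mem_top hxm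

lemma exists_add_smul_eq_of_mem_sup_span_smul {I : Ideal R} {x : R} {W : Submodule R M} {m : M}
    (hm : m ∈ (I ⊔ Ideal.span {x}) • W) : ∃ a ∈ I • W, ∃ c ∈ W, a + x • c = m := by
  rw [Submodule.sup_smul, Submodule.ideal_span_singleton_smul] at hm
  obtain ⟨a, ha, _, ⟨c, hc, rfl⟩, rfl⟩ := Submodule.mem_sup.1 hm
  exact ⟨a, ha, c, hc, rfl⟩

lemma smul_mem_sup_span_smul {I : Ideal R} {x : R} {W : Submodule R M} {m : M} (hm : m ∈ W) :
    x • m ∈ (I ⊔ Ideal.span {x}) • W :=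
  Submodule.smul_mem_smul (Submodule.mem_sup_right (Ideal.mem_span_singleton_self x)) hm

lemma mem_of_pow_smul_mem {x : R} {W S : Submodule R M} (h : ∀ m ∈ W, x • m ∈ S → m ∈ S) {m : M}
    (hm : m ∈ W) (k : ℕ) (hk : x ^ k • m ∈ S) : m ∈ S := by
  induction k with
  | zero => rwa [pow_zero, one_smul] at hk
  | succ k ih =>
    rw [pow_succ', mul_smul] at hk
    exact ih (h _ (W.smul_mem _ hm) hk)

end FreeQuotient

/-! ### The complexes of two contractions on an exterior algebra -/

section Contraction

open ExteriorAlgebra (ι)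
open CliffordAlgebra (contractLeft contractLeft_ι contractLeft_ι_mul contractLeft_contractLeft
  contractLeft_comm contractLeft_algebraMap)

variable {R M : Type*} [CommRing R] [AddCommGroup M] [Module R M]

lemma exteriorPower_eq_bot [Module.Free R M] [Module.Finite R M] {q : ℕ}
    (hq : Module.finrank R M < q) : ⋀[R]^q M = ⊥ := by
  nontriviality R
  have finrank_eq_zero : Module.finrank R (⋀[R]^q M) = 0 := by
    rw [exteriorPower.finrank_eq, Nat.choose_eq_zero_of_lt hq]
  rw [← Submodule.subsingleton_iff_eq_bot]
  exact (Module.finrank_eq_zero_iff_of_free R _).1 finrank_eq_zero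

lemma ι_mul_mem_exteriorPower (m : M) {q : ℕ} {ω : ExteriorAlgebra R M} (hω : ω ∈ ⋀[R]^q M) :
    ι R m * ω ∈ ⋀[R]^(q + 1) M := by
  rw [ExteriorAlgebra.exteriorPower, pow_succ']
  exact Submodule.mul_mem_mul (LinearMap.mem_range_self _ m) hω

lemma ι_mul_mem_smul_exteriorPower (m : M) {I : Ideal R} {q : ℕ} {ω : ExteriorAlgebra R M}
    (hω : ω ∈ I • ⋀[R]^q M) : ι R m * ω ∈ I • ⋀[R]^(q + 1) M := by
  have mem_map := Submodule.mem_map_of_mem (f := LinearMap.mulLeft R (ι R m)) hω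
  rw [Submodule.map_smul''] at mem_map
  refine Submodule.smul_mono le_rfl ?_ mem_map
  rintro _ ⟨η, hη, rfl⟩
  exact ι_mul_mem_exteriorPower m hη

variable (φ ψ : Module.Dual R M)

lemma contractLeft_mem_exteriorPower {q : ℕ} {ω : ExteriorAlgebra R M}
    (hω : ω ∈ ⋀[R]^(q + 1) M) : contractLeft φ ω ∈ ⋀[R]^q M := by
  induction q generalizing ω with
  | zero =>
    rw [zero_add, ExteriorAlgebra.exteriorPower, pow_one] at hω
    obtain ⟨m, rfl⟩ := hω
    rw [ExteriorAlgebra.ι, contractLeft_ι, ExteriorAlgebra.exteriorPower, pow_zero]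
    exact Submodule.algebraMap_mem _
  | succ q ih =>
    rw [ExteriorAlgebra.exteriorPower, pow_succ'] at hω
    induction hω using Submodule.mul_induction_on' with
    | mem_mul_mem m hm η hη =>
      obtain ⟨m, rfl⟩ := hm
      rw [ExteriorAlgebra.ι, contractLeft_ι_mul]
      exact sub_mem (Submodule.smul_mem _ _ hη) (ι_mul_mem_exteriorPower m (ih hη))
    | add a _ b _ ha hb =>
      rw [map_add]
      exact add_mem ha hb

lemma contractLeft_mem_smul_exteriorPower {I : Ideal R} {q : ℕ} {ω : ExteriorAlgebra R M}
    (hω : ω ∈ I • ⋀[R]^(q + 1) M) : contractLeft φ ω ∈ I • ⋀[R]^q M := by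
  have mem_map := Submodule.mem_map_of_mem (f := contractLeft φ) hω
  rw [Submodule.map_smul''] at mem_map
  refine Submodule.smul_mono le_rfl ?_ mem_map
  rintro _ ⟨η, hη, rfl⟩
  exact contractLeft_mem_exteriorPower φ hη

lemma minor_smul_eq (a b : M) (ω : ExteriorAlgebra R M) :
    (φ a * ψ b - φ b * ψ a) • ω =
      -contractLeft φ (contractLeft ψ (ι R a * (ι R b * ω)))
        - ψ a • (ι R b * contractLeft φ ω) + ψ b • (ι R a * contractLeft φ ω)
        + φ a • (ι R b * contractLeft ψ ω) - φ b • (ι R a * contractLeft ψ ω)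
        + ι R a * (ι R b * contractLeft φ (contractLeft ψ ω)) := by
  simp only [ExteriorAlgebra.ι, contractLeft_ι_mul, map_sub, map_smul, mul_sub, mul_smul_comm]
  module

/-- The forms of degree `q` that are images under contraction with `φ` or `ψ`, modulo `I`. -/
def contractionImage (I : Ideal R) (q : ℕ) : Submodule R (ExteriorAlgebra R M) :=
  (⋀[R]^(q + 1) M).map (contractLeft φ) ⊔ (⋀[R]^(q + 1) M).map (contractLeft ψ) ⊔ I • ⋀[R]^q M

/-- The forms of degree `q` that are double contractions with `ψ` and `φ`, modulo `I`. -/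
def doubleContractionImage (I : Ideal R) (q : ℕ) : Submodule R (ExteriorAlgebra R M) :=
  (⋀[R]^(q + 2) M).map (contractLeft φ ∘ₗ contractLeft ψ) ⊔ I • ⋀[R]^q M

variable {φ ψ} {I : Ideal R} {q : ℕ} {ω : ExteriorAlgebra R M}

lemma mem_contractionImage : ω ∈ contractionImage φ ψ I q ↔ ∃ α ∈ ⋀[R]^(q + 1) M,
    ∃ β ∈ ⋀[R]^(q + 1) M, ∃ ζ ∈ I • ⋀[R]^q M, contractLeft φ α + contractLeft ψ β + ζ = ω := by
  simp only [contractionImage, Submodule.mem_sup, Submodule.mem_map]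
  constructor
  · rintro ⟨_, ⟨_, ⟨α, hα, rfl⟩, _, ⟨β, hβ, rfl⟩, rfl⟩, ζ, hζ, rfl⟩
    exact ⟨α, hα, β, hβ, ζ, hζ, rfl⟩
  · rintro ⟨α, hα, β, hβ, ζ, hζ, rfl⟩
    exact ⟨_, ⟨_, ⟨α, hα, rfl⟩, _, ⟨β, hβ, rfl⟩, rfl⟩, ζ, hζ, rfl⟩

lemma mem_doubleContractionImage : ω ∈ doubleContractionImage φ ψ I q ↔ ∃ η ∈ ⋀[R]^(q + 2) M,
    ∃ ζ ∈ I • ⋀[R]^q M, contractLeft φ (contractLeft ψ η) + ζ = ω := by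
  simp only [doubleContractionImage, Submodule.mem_sup, Submodule.mem_map]
  constructor
  · rintro ⟨_, ⟨η, hη, rfl⟩, ζ, hζ, rfl⟩
    exact ⟨η, hη, ζ, hζ, rfl⟩
  · rintro ⟨η, hη, ζ, hζ, rfl⟩
    exact ⟨_, ⟨η, hη, rfl⟩, ζ, hζ, rfl⟩

lemma doubleContractionImage_le : doubleContractionImage φ ψ I q ≤ contractionImage φ ψ I q := by
  intro ω hω
  obtain ⟨η, hη, ζ, hζ, rfl⟩ := mem_doubleContractionImage.1 hω
  exact mem_contractionImage.2 ⟨contractLeft ψ η, contractLeft_mem_exteriorPower ψ hη, 0,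
    zero_mem _, ζ, hζ, by rw [map_zero, add_zero]⟩

lemma smul_mem_contractionImage {r : R} (hr : r ∈ minorsIdeal φ ψ ⊔ I)
    (hω : ω ∈ ⋀[R]^(q + 2) M) (hφψ : contractLeft φ (contractLeft ψ ω) ∈ I • ⋀[R]^q M) :
    r • ω ∈ contractionImage φ ψ I (q + 2) := by
  suffices h : minorsIdeal φ ψ ⊔ I ≤
      (contractionImage φ ψ I (q + 2)).comap (LinearMap.toSpanSingleton R _ ω) from h hr
  refine sup_le (Ideal.span_le.2 ?_) fun x hx =>
    Submodule.mem_sup_right (Submodule.smul_mem_smul hx hω)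
  rintro _ ⟨⟨a, b⟩, rfl⟩
  have aω := ι_mul_mem_exteriorPower a hω
  have bω := ι_mul_mem_exteriorPower b hω
  refine mem_contractionImage.2 ⟨contractLeft ψ (ι R a * (ι R b * ω)) - ψ a • (ι R b * ω)
      + ψ b • (ι R a * ω), ?_, φ a • (ι R b * ω) - φ b • (ι R a * ω), ?_,
    -(ι R a * (ι R b * contractLeft φ (contractLeft ψ ω))), ?_, ?_⟩
  · exact add_mem (sub_mem (contractLeft_mem_exteriorPower ψ (ι_mul_mem_exteriorPower a bω))
      (Submodule.smul_mem _ _ bω)) (Submodule.smul_mem _ _ aω)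
  · exact sub_mem (Submodule.smul_mem _ _ bω) (Submodule.smul_mem _ _ aω)
  · exact neg_mem (ι_mul_mem_smul_exteriorPower a (ι_mul_mem_smul_exteriorPower b hφψ))
  · simp only [ExteriorAlgebra.ι, contractLeft_ι_mul, map_sub, map_add, map_smul, mul_sub,
      mul_smul_comm, LinearMap.toSpanSingleton_apply]
    module

lemma smul_mem_doubleContractionImage {r : R} (hr : r ∈ minorsIdeal φ ψ ⊔ I)
    (hω : ω ∈ ⋀[R]^(q + 1) M) (hφ : contractLeft φ ω ∈ I • ⋀[R]^q M)
    (hψ : contractLeft ψ ω ∈ I • ⋀[R]^q M) :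
    r • ω ∈ doubleContractionImage φ ψ I (q + 1) := by
  suffices h : minorsIdeal φ ψ ⊔ I ≤
      (doubleContractionImage φ ψ I (q + 1)).comap (LinearMap.toSpanSingleton R _ ω) from h hr
  refine sup_le (Ideal.span_le.2 ?_) fun x hx =>
    Submodule.mem_sup_right (Submodule.smul_mem_smul hx hω)
  rintro _ ⟨⟨a, b⟩, rfl⟩
  have mem_φ (c : M) : ι R c * contractLeft φ ω ∈ I • ⋀[R]^(q + 1) M :=
    ι_mul_mem_smul_exteriorPower c hφ
  have mem_ψ (c : M) : ι R c * contractLeft ψ ω ∈ I • ⋀[R]^(q + 1) M :=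
    ι_mul_mem_smul_exteriorPower c hψ
  have mem_φψ : ι R b * contractLeft φ (contractLeft ψ ω) ∈ I • ⋀[R]^q M := by
    have expand : ι R b * contractLeft φ (contractLeft ψ ω) =
        φ b • contractLeft ψ ω - contractLeft φ (ι R b * contractLeft ψ ω) := by
      rw [ExteriorAlgebra.ι, contractLeft_ι_mul, sub_sub_cancel]
    rw [expand]
    exact sub_mem (Submodule.smul_mem _ _ hψ) (contractLeft_mem_smul_exteriorPower φ (mem_ψ b))
  refine mem_doubleContractionImage.2 ⟨-(ι R a * (ι R b * ω)),
    neg_mem (ι_mul_mem_exteriorPower a (ι_mul_mem_exteriorPower b hω)),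
    -(ψ a • (ι R b * contractLeft φ ω)) + ψ b • (ι R a * contractLeft φ ω)
        + φ a • (ι R b * contractLeft ψ ω) - φ b • (ι R a * contractLeft ψ ω)
        + ι R a * (ι R b * contractLeft φ (contractLeft ψ ω)), ?_, ?_⟩
  · exact add_mem (sub_mem (add_mem (add_mem (neg_mem (Submodule.smul_mem _ _ (mem_φ b)))
      (Submodule.smul_mem _ _ (mem_φ a))) (Submodule.smul_mem _ _ (mem_ψ b)))
      (Submodule.smul_mem _ _ (mem_ψ a))) (ι_mul_mem_smul_exteriorPower a mem_φψ)
  · rw [LinearMap.toSpanSingleton_apply, minor_smul_eq, map_neg, map_neg]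
    abel

variable (φ ψ I q) in
/-- Exactness of `α, β ↦ φ ⌋ α + ψ ⌋ β` followed by `φ ⌋ ψ ⌋ ·` at the forms of degree `q + 2`,
modulo `I`. -/
def IsContractionExact : Prop :=
  ∀ ω ∈ ⋀[R]^(q + 2) M, contractLeft φ (contractLeft ψ ω) ∈ I • ⋀[R]^q M →
    ω ∈ contractionImage φ ψ I (q + 2)

variable {x : R}

lemma IsContractionExact.exists_add_smul_eq
    (h : IsContractionExact φ ψ (I ⊔ Ideal.span {x}) q) (hω : ω ∈ ⋀[R]^(q + 2) M)
    (hφψ : contractLeft φ (contractLeft ψ ω) ∈ (I ⊔ Ideal.span {x}) • ⋀[R]^q M) :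
    ∃ α ∈ ⋀[R]^(q + 3) M, ∃ β ∈ ⋀[R]^(q + 3) M, ∃ γ ∈ ⋀[R]^(q + 2) M, ∃ ζ ∈ I • ⋀[R]^(q + 2) M,
      ω = contractLeft φ α + contractLeft ψ β + x • γ + ζ := by
  obtain ⟨α, hα, β, hβ, _, hζ, rfl⟩ := mem_contractionImage.1 (h ω hω hφψ)
  obtain ⟨ζ, hζI, γ, hγ, rfl⟩ := exists_add_smul_eq_of_mem_sup_span_smul hζ
  exact ⟨α, hα, β, hβ, γ, hγ, ζ, hζI, by abel⟩

lemma IsContractionExact.exists_smul_sub_mem_doubleContractionImage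
    (h : IsContractionExact φ ψ (I ⊔ Ideal.span {x}) (q + 1)) (hω : ω ∈ ⋀[R]^(q + 2) M)
    (hxω : x • ω ∈ contractionImage φ ψ I (q + 2)) : ∃ a ∈ ⋀[R]^(q + 3) M, ∃ b ∈ ⋀[R]^(q + 3) M,
      x • (ω - (contractLeft φ a + contractLeft ψ b)) ∈ doubleContractionImage φ ψ I (q + 2) := by
  obtain ⟨α, hα, β, hβ, ζ, hζ, hxω⟩ := mem_contractionImage.1 hxω
  have mem_sup (χ : Module.Dual R M) : contractLeft χ ω ∈ ⋀[R]^(q + 1) M ∧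
      contractLeft χ ζ ∈ (I ⊔ Ideal.span {x}) • ⋀[R]^(q + 1) M :=
    ⟨contractLeft_mem_exteriorPower χ hω, Submodule.smul_mono le_sup_left le_rfl
      (contractLeft_mem_smul_exteriorPower χ hζ)⟩
  have φψα : contractLeft φ (contractLeft ψ α) = contractLeft ψ ζ - x • contractLeft ψ ω := by
    rw [← map_smul, ← hxω]
    simp only [map_add, contractLeft_contractLeft, contractLeft_comm φ ψ α]
    module
  have φψβ : contractLeft φ (contractLeft ψ β) = x • contractLeft φ ω - contractLeft φ ζ := by
    rw [← map_smul, ← hxω]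
    simp only [map_add, contractLeft_contractLeft]
    module
  obtain ⟨α₁, -, α₂, hα₂, a, ha, ζ₁, hζ₁, rfl⟩ := h.exists_add_smul_eq hα <| by
    rw [φψα]
    exact sub_mem (mem_sup ψ).2 (smul_mem_sup_span_smul (mem_sup ψ).1)
  obtain ⟨β₁, hβ₁, β₂, -, b, hb, ζ₂, hζ₂, rfl⟩ := h.exists_add_smul_eq hβ <| by
    rw [φψβ]
    exact sub_mem (smul_mem_sup_span_smul (mem_sup φ).1) (mem_sup φ).2
  have smul_sub_eq : contractLeft φ (contractLeft ψ (α₂ - β₁)) +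
      (contractLeft φ ζ₁ + contractLeft ψ ζ₂ + ζ) =
        x • (ω - (contractLeft φ a + contractLeft ψ b)) := by
    rw [smul_sub, ← hxω]
    simp only [map_add, map_sub, map_smul, contractLeft_contractLeft, contractLeft_comm ψ φ β₁]
    module
  exact ⟨a, ha, b, hb, mem_doubleContractionImage.2 ⟨α₂ - β₁, sub_mem hα₂ hβ₁, _,
    add_mem (add_mem (contractLeft_mem_smul_exteriorPower φ hζ₁)
      (contractLeft_mem_smul_exteriorPower ψ hζ₂)) hζ, smul_sub_eq⟩⟩

variable [Module.Free R M]

lemma IsContractionExact.mem_doubleContractionImage_of_smul_mem (hx : ∀ g, x * g ∈ I → g ∈ I)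
    (h : IsContractionExact φ ψ (I ⊔ Ideal.span {x}) q) (hω : ω ∈ ⋀[R]^q M)
    (hxω : x • ω ∈ doubleContractionImage φ ψ I q) : ω ∈ doubleContractionImage φ ψ I q := by
  obtain ⟨η, hη, ζ, hζ, hxω⟩ := mem_doubleContractionImage.1 hxω
  have φψη_mem : contractLeft φ (contractLeft ψ η) ∈ (I ⊔ Ideal.span {x}) • ⋀[R]^q M := by
    rw [eq_sub_of_add_eq hxω]
    exact sub_mem (smul_mem_sup_span_smul hω) (Submodule.smul_mono le_sup_left le_rfl hζ)
  obtain ⟨α, -, β, -, γ, hγ, θ, hθ, rfl⟩ := h.exists_add_smul_eq hη φψη_mem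
  have φψγ_mem : contractLeft φ (contractLeft ψ γ) ∈ ⋀[R]^q M :=
    contractLeft_mem_exteriorPower φ (contractLeft_mem_exteriorPower ψ hγ)
  have smul_sub_eq : x • (ω - contractLeft φ (contractLeft ψ γ)) =
      contractLeft φ (contractLeft ψ θ) + ζ := by
    rw [smul_sub, ← hxω]
    simp only [map_add, map_smul, contractLeft_contractLeft,
      contractLeft_comm φ ψ (contractLeft φ α), map_zero]
    module
  refine mem_doubleContractionImage.2 ⟨γ, hγ, ω - contractLeft φ (contractLeft ψ γ),
    mem_ideal_smul_of_smul_mem hx (sub_mem hω φψγ_mem) ?_, by abel⟩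
  rw [smul_sub_eq]
  exact add_mem
    (contractLeft_mem_smul_exteriorPower φ (contractLeft_mem_smul_exteriorPower ψ hθ)) hζ

lemma mem_contractionImage_of_smul_mem (hx : ∀ g, x * g ∈ I → g ∈ I)
    (h₁ : IsContractionExact φ ψ (I ⊔ Ideal.span {x}) (q + 1))
    (h₂ : IsContractionExact φ ψ (I ⊔ Ideal.span {x}) (q + 2)) (hω : ω ∈ ⋀[R]^(q + 2) M)
    (hxω : x • ω ∈ contractionImage φ ψ I (q + 2)) : ω ∈ contractionImage φ ψ I (q + 2) := by
  obtain ⟨a, ha, b, hb, hsub⟩ := h₁.exists_smul_sub_mem_doubleContractionImage hω hxω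
  have image_mem : contractLeft φ a + contractLeft ψ b ∈ ⋀[R]^(q + 2) M :=
    add_mem (contractLeft_mem_exteriorPower φ ha) (contractLeft_mem_exteriorPower ψ hb)
  rw [← sub_add_cancel ω (contractLeft φ a + contractLeft ψ b)]
  exact add_mem (doubleContractionImage_le
      (h₂.mem_doubleContractionImage_of_smul_mem hx (sub_mem hω image_mem) hsub))
    (mem_contractionImage.2 ⟨a, ha, b, hb, 0, zero_mem _, add_zero _⟩)

/-- There is a regular sequence of length `d` on `R ⧸ I` with elements in the radical of `J ⊔ I`;
over a Noetherian ring this says that the depth of `J` on `R ⧸ I` is at least `d`. -/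
def HasRegularSequence (J : Ideal R) : ℕ → Ideal R → Prop
  | 0, _ => True
  | d + 1, I => ∃ x ∈ (J ⊔ I).radical, (∀ g, x * g ∈ I → g ∈ I) ∧
      HasRegularSequence J d (I ⊔ Ideal.span {x})

variable [Module.Finite R M]

lemma HasRegularSequence.isContractionExact {d : ℕ}
    (h : HasRegularSequence (minorsIdeal φ ψ) d I) (hd : Module.finrank R M < q + 2 + d) :
    IsContractionExact φ ψ I q := by
  induction d generalizing I q with
  | zero =>
    intro ω hω _
    rw [exteriorPower_eq_bot hd, Submodule.mem_bot] at hω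
    rw [hω]
    exact zero_mem _
  | succ d ih =>
    obtain ⟨x, ⟨k, hk⟩, hx, h⟩ := h
    intro ω hω hφψ
    exact mem_of_pow_smul_mem (fun _ => mem_contractionImage_of_smul_mem hx (ih h (by lia))
      (ih h (by lia))) hω k (smul_mem_contractionImage hk hω hφψ)

lemma HasRegularSequence.mem_doubleContractionImage {d : ℕ}
    (h : HasRegularSequence (minorsIdeal φ ψ) (d + 1) I) (hd : Module.finrank R M < q + 3 + d)
    (hω : ω ∈ ⋀[R]^(q + 1) M) (hφ : contractLeft φ ω ∈ I • ⋀[R]^q M)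
    (hψ : contractLeft ψ ω ∈ I • ⋀[R]^q M) : ω ∈ doubleContractionImage φ ψ I (q + 1) := by
  obtain ⟨x, ⟨k, hk⟩, hx, h⟩ := h
  exact mem_of_pow_smul_mem (fun _ =>
    (h.isContractionExact (by lia)).mem_doubleContractionImage_of_smul_mem hx) hω k
      (smul_mem_doubleContractionImage hk hω hφ hψ)

end Contraction

section Regularity

variable {R : Type*} [CommRing R]

lemma HasRegularSequence.mono {J J' : Ideal R} (hJ : J ≤ J') {d : ℕ} {I : Ideal R}
    (h : HasRegularSequence J d I) : HasRegularSequence J' d I := by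
  induction d generalizing I with
  | zero => trivial
  | succ d ih =>
    obtain ⟨x, hx, hreg, h⟩ := h
    exact ⟨x, Ideal.radical_mono (sup_le_sup_right hJ I) hx, hreg, ih h⟩

lemma minorsIdeal_le_minorsIdeal_linearCombination {ι : Type*} [Fintype ι] (v w : ι → R) :
    minorsIdeal v w ≤
      minorsIdeal (Fintype.linearCombination R v) (Fintype.linearCombination R w) := by
  classical
  refine Ideal.span_le.2 ?_
  rintro _ ⟨⟨i, j⟩, rfl⟩
  refine Ideal.subset_span ⟨(Pi.single i 1, Pi.single j 1), ?_⟩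
  simp only [Fintype.linearCombination_apply_single, one_smul]

lemma ι_mem_exteriorPower_one {M : Type*} [AddCommGroup M] [Module R M] (m : M) :
    ExteriorAlgebra.ι R m ∈ ⋀[R]^1 M := by
  rw [ExteriorAlgebra.exteriorPower, pow_one]
  exact LinearMap.mem_range_self _ m

lemma algebraMap_mem_exteriorPower_zero {M : Type*} [AddCommGroup M] [Module R M] (r : R) :
    algebraMap R (ExteriorAlgebra R M) r ∈ ⋀[R]^0 M := by
  rw [ExteriorAlgebra.exteriorPower, pow_zero]
  exact Submodule.algebraMap_mem r

lemma HasRegularSequence.exists_eq_mul {M : Type*} [AddCommGroup M] [Module R M] [Module.Free R M]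
    [Module.Finite R M] {φ ψ : Module.Dual R M} {f : R} (hf : IsSMulRegular R f) {d : ℕ}
    (h : HasRegularSequence (minorsIdeal φ ψ) (d + 1) (Ideal.span {f}))
    (hd : Module.finrank R M ≤ d + 2) {δ : M} {a b : R} (ha : φ δ = f * a) (hb : ψ δ = f * b) :
    ∃ ε : M, φ ε = a ∧ ψ ε = b := by
  have contract_mem {χ : Module.Dual R M} {c : R} (hχ : χ δ = f * c) :
      CliffordAlgebra.contractLeft χ (ExteriorAlgebra.ι R δ) ∈ Ideal.span {f} • ⋀[R]^0 M := by
    rw [ExteriorAlgebra.ι, CliffordAlgebra.contractLeft_ι, hχ, ← smul_eq_mul,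
      Algebra.algebraMap_eq_smul_one, smul_assoc, ← Algebra.algebraMap_eq_smul_one]
    exact Submodule.smul_mem_smul (Ideal.mem_span_singleton_self f)
      (algebraMap_mem_exteriorPower_zero c)
  obtain ⟨η, -, ζ, hζ, hδ⟩ := _root_.mem_doubleContractionImage.1
    (h.mem_doubleContractionImage (by lia) (ι_mem_exteriorPower_one δ)
      (contract_mem ha) (contract_mem hb))
  rw [Submodule.ideal_span_singleton_smul, zero_add, ExteriorAlgebra.exteriorPower, pow_one] at hζ
  obtain ⟨_, ⟨ε, rfl⟩, rfl⟩ := hζ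
  have apply_ε (χ : Module.Dual R M) {c : R} (hc : χ δ = f * c)
      (hχ : CliffordAlgebra.contractLeft χ
        (CliffordAlgebra.contractLeft φ (CliffordAlgebra.contractLeft ψ η)) = 0) : χ ε = c := by
    have contract := congrArg (CliffordAlgebra.contractLeft χ) hδ
    rw [map_add, hχ, zero_add, DistribSMul.toLinearMap_apply, map_smul, ExteriorAlgebra.ι,
      CliffordAlgebra.contractLeft_ι, CliffordAlgebra.contractLeft_ι, hc, Algebra.smul_def,
      ← map_mul] at contract
    exact hf ((ExteriorAlgebra.algebraMap_leftInverse M).injective contract)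
  refine ⟨ε, apply_ε φ ha (CliffordAlgebra.contractLeft_contractLeft _ _), apply_ε ψ hb ?_⟩
  rw [CliffordAlgebra.contractLeft_comm, CliffordAlgebra.contractLeft_contractLeft, map_zero,
    neg_zero]

lemma PairCokernel.isSMulRegular_of_hasRegularSequence [Nontrivial R] {ι : Type*} [Fintype ι]
    {v w : ι → R} {f : R} (hf : IsSMulRegular R f) {d : ℕ}
    (h : HasRegularSequence (minorsIdeal v w) (d + 1) (Ideal.span {f}))
    (hd : Fintype.card ι ≤ d + 2) : IsSMulRegular (PairCokernel v w) f := by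
  refine isSMulRegular_iff_right_eq_zero_of_smul.2 fun x hx => ?_
  obtain ⟨a, b, rfl⟩ := exists_eq x
  rw [smul_add, smul_smul, smul_smul, smul_add_smul_eq_zero_iff] at hx
  obtain ⟨δ, hv, hw⟩ := hx
  exact smul_add_smul_eq_zero_iff.2 <|
    (h.mono (minorsIdeal_le_minorsIdeal_linearCombination v w)).exists_eq_mul hf
      (by rwa [Module.finrank_fintype_fun_eq_card]) hv hw

lemma mem_of_mul_mem_span_sup {p : Ideal R} {f y : R} (hp : p.IsPrime) (hy : y ∉ p)
    (hpy : (p ⊔ Ideal.span {y}).IsPrime) (hf : f ∉ p ⊔ Ideal.span {y}) {g : R}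
    (hg : y * g ∈ Ideal.span {f} ⊔ p) : g ∈ Ideal.span {f} ⊔ p := by
  obtain ⟨a, s, hs, hyg⟩ := Ideal.mem_span_singleton_sup.1 hg
  have mul_mem : a * f ∈ p ⊔ Ideal.span {y} := by
    rw [eq_sub_of_add_eq hyg]
    exact sub_mem
      (Submodule.mem_sup_right (Ideal.mul_mem_right g _ (Ideal.mem_span_singleton_self y)))
      (Submodule.mem_sup_left hs)
  have a_mem := (hpy.mem_or_mem mul_mem).resolve_right hf
  rw [sup_comm] at a_mem
  obtain ⟨c, t, ht, rfl⟩ := Ideal.mem_span_singleton_sup.1 a_mem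
  have mul_sub_mem : y * (g - c * f) ∈ p := by
    have expand : y * (g - c * f) = t * f + s := by linear_combination -hyg
    rw [expand]
    exact add_mem (Ideal.mul_mem_right f _ ht) hs
  exact Ideal.mem_span_singleton_sup.2 ⟨c, g - c * f,
    (hp.mem_or_mem mul_sub_mem).resolve_left hy, by ring⟩

lemma hasRegularSequence_of_prime_chain (J : Ideal R) (f : R) {N : ℕ} (p : ℕ → Ideal R)
    (y : ℕ → R) (hps : ∀ i < N, p (i + 1) = p i ⊔ Ideal.span {y i})
    (hpr : ∀ i ≤ N, (p i).IsPrime) (hy : ∀ i < N, y i ∉ p i) (hf : f ∉ p N)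
    (hJ : ∀ i < N, y i ∈ (J ⊔ Ideal.span {f}).radical) :
    HasRegularSequence J N (Ideal.span {f} ⊔ p 0) := by
  induction N generalizing p y with
  | zero => trivial
  | succ N ih =>
    have le_last : p 0 ⊔ Ideal.span {y 0} ≤ p (N + 1) := by
      rw [← hps 0 N.succ_pos]
      have le_of_le (i : ℕ) (hi : 1 ≤ i) (hiN : i ≤ N + 1) : p 1 ≤ p i := by
        induction i, hi using Nat.le_induction with
        | base => exact le_rfl
        | succ i _ le => exact (le (by lia)).trans (le_sup_left.trans_eq (hps i hiN).symm)
      exact le_of_le _ (by lia) le_rfl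
    refine ⟨y 0, ?_, fun g => mem_of_mul_mem_span_sup (hpr 0 (Nat.zero_le _)) (hy 0 N.succ_pos)
      (hps 0 N.succ_pos ▸ hpr 1 (by lia)) fun h => hf (le_last h), ?_⟩
    · rw [← sup_assoc]
      exact Ideal.radical_mono le_sup_left (hJ 0 N.succ_pos)
    · rw [sup_assoc, ← hps 0 N.succ_pos]
      exact ih (fun i => p (i + 1)) (fun i => y (i + 1)) (fun i hi => hps _ (by lia))
        (fun i hi => hpr _ (by lia)) (fun i hi => hy _ (by lia)) hf fun i hi => hJ _ (by lia)

end Regularity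

section Superposition

variable {𝕜 K E F : Type*} [NontriviallyNormedField 𝕜] [TopologicalSpace K] [CompactSpace K]
  [NormedAddCommGroup E] [NormedSpace 𝕜 E] [NormedAddCommGroup F] [NormedSpace 𝕜 F]

/-- The continuous multilinear map `(φᵢ) ↦ (t ↦ m (φᵢ t))` on spaces of continuous functions, i.e.
the superposition operator of a continuous multilinear map `m`. -/
def superpositionMultilinear (K : Type*) [TopologicalSpace K] [CompactSpace K] {k : ℕ}
    (m : ContinuousMultilinearMap 𝕜 (fun _ : Fin k => E) F) :
    ContinuousMultilinearMap 𝕜 (fun _ : Fin k => C(K, E)) C(K, F) :=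
  MultilinearMap.mkContinuous
    { toFun := fun φ => ⟨fun t => m fun i => φ i t, by fun_prop⟩
      map_update_add' := fun φ i a b => by
        ext t; simp [Function.apply_update (fun _ (ψ : C(K, E)) => ψ t)]
      map_update_smul' := fun φ i c a => by
        ext t; simp [Function.apply_update (fun _ (ψ : C(K, E)) => ψ t)] }
    ‖m‖ fun φ => (ContinuousMap.norm_le _ (by positivity)).2 fun t =>
      (m.le_opNorm _).trans <| by
        gcongr with i
        exact (φ i).norm_coe_le_norm t

lemma norm_superpositionMultilinear_le {k : ℕ}
    (m : ContinuousMultilinearMap 𝕜 (fun _ : Fin k => E) F) :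
    ‖superpositionMultilinear K m‖ ≤ ‖m‖ :=
  MultilinearMap.mkContinuous_norm_le _ (norm_nonneg _) _

lemma exists_analyticAt_superposition (K : Type*) [TopologicalSpace K] [CompactSpace K]
    [CompleteSpace F] {g : E → F} {y : E} (hg : AnalyticAt 𝕜 g y) :
    ∃ T : C(K, E) → C(K, F), AnalyticAt 𝕜 T (ContinuousMap.const K y) ∧
      ∀ᶠ φ in 𝓝 (ContinuousMap.const K y), ∀ t, T φ t = g (φ t) := by
  obtain ⟨p, r, hp⟩ := hg
  let P : FormalMultilinearSeries 𝕜 C(K, E) C(K, F) := fun k => superpositionMultilinear K (p k)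
  have radius_le : p.radius ≤ P.radius :=
    FormalMultilinearSeries.radius_le_of_le fun k => norm_superpositionMultilinear_le (p k)
  have hP := ((P.hasFPowerSeriesOnBall ((hp.r_pos.trans_le hp.r_le).trans_le radius_le)).comp_sub
    (ContinuousMap.const K y)).mono hp.r_pos (hp.r_le.trans radius_le)
  rw [zero_add] at hP
  refine ⟨_, hP.analyticAt, ?_⟩
  filter_upwards [Metric.eball_mem_nhds _ hp.r_pos] with φ hφ t
  have eval_mem : φ t ∈ Metric.eball y r := by
    rw [Metric.mem_eball] at hφ ⊢
    refine lt_of_le_of_lt ?_ hφ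
    rw [edist_dist, edist_dist]
    exact ENNReal.ofReal_le_ofReal (ContinuousMap.dist_apply_le_dist (g := .const K y) t)
  exact ((hP.hasSum_sub hφ).mapL (ContinuousMap.evalCLM 𝕜 t)).unique (hp.hasSum_sub eval_mem)

lemma exists_analyticAt_translate_smul [CompleteSpace F] {g : E → F} {y : E}
    (hg : AnalyticAt 𝕜 g y) (κ : C(K, E)) :
    ∀ᶠ s in 𝓝 (0 : 𝕜), ∃ W : E → C(K, F), AnalyticAt 𝕜 W y ∧
      ∀ᶠ x in 𝓝 y, ∀ t, W x t = g (x + s • κ t) := by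
  obtain ⟨T, hT, hTg⟩ := exists_analyticAt_superposition K hg
  let path (x : E) (s : 𝕜) : C(K, E) := ContinuousMap.const K x + s • κ
  have continuous_path : Tendsto (path y) (𝓝 0) (𝓝 (ContinuousMap.const K y)) := by
    have : Continuous (path y) := by fun_prop
    simpa [path] using this.tendsto 0
  filter_upwards [continuous_path.eventually (hT.eventually_analyticAt.and hTg.eventually_nhds)]
    with s ⟨hTs, hgs⟩
  have analyticAt_path : AnalyticAt 𝕜 (path · s) y :=
    ((ContinuousLinearMap.const 𝕜 K : E →L[𝕜] C(K, E)).analyticAt y).add analyticAt_const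
  refine ⟨fun x => T (path x s), AnalyticAt.fun_comp hTs analyticAt_path, ?_⟩
  filter_upwards [analyticAt_path.continuousAt.eventually hgs] with x hx t using hx t

end Superposition

section CircleAverage

open MeasureTheory

variable {E K : Type*} [NormedAddCommGroup E] [NormedSpace ℂ E] [TopologicalSpace K]
  [CompactSpace K] [MeasurableSpace K] [BorelSpace K]

lemma analyticAt_integral_eval (μ : Measure K) [IsFiniteMeasure μ] {W : E → C(K, ℂ)} {y : E}
    (hW : AnalyticAt ℂ W y) : AnalyticAt ℂ (fun x => ∫ t, W x t ∂μ) y := by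
  let I : C(K, ℂ) →L[ℂ] ℂ := (L1.integralCLM' ℂ).comp (ContinuousMap.toLp 1 μ ℂ)
  have I_apply (φ : C(K, ℂ)) : I φ = ∫ t, φ t ∂μ :=
    (L1.integral_eq' ..).symm.trans <|
      (L1.integral_eq_integral _).trans (integral_congr_ae (ContinuousMap.coeFn_toLp μ φ))
  simpa only [← I_apply] using AnalyticAt.fun_comp (I.analyticAt _) hW

lemma analyticAt_integral_mul_inv {g h : E → ℂ} {y : E} (hg : AnalyticAt ℂ g y)
    (hh : AnalyticAt ℂ h y) (μ : Measure K) [IsFiniteMeasure μ] (κ : C(K, E)) :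
    ∀ᶠ s in 𝓝 (0 : ℂ), (∀ t, h (y + s • κ t) ≠ 0) →
      AnalyticAt ℂ (fun x => ∫ t, g (x + s • κ t) * (h (x + s • κ t))⁻¹ ∂μ) y := by
  filter_upwards [exists_analyticAt_translate_smul hg κ, exists_analyticAt_translate_smul hh κ]
    with s ⟨V, hV, hVg⟩ ⟨W, hW, hWh⟩ h_ne
  have isUnit_W : IsUnit (W y) := by
    simpa only [ContinuousMap.isUnit_iff_forall_ne_zero, hWh.self_of_nhds] using h_ne
  refine (analyticAt_integral_eval μ
    (hV.mul (AnalyticAt.fun_comp (analyticOnNhd_inverse _ isUnit_W) hW))).congr ?_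
  filter_upwards [hVg, hWh, hW.continuousAt.eventually (Units.isOpen.mem_nhds isUnit_W)]
    with x hx hx' isUnit_Wx
  refine integral_congr_ae (.of_forall fun t => ?_)
  have mul_inverse : W x t * Ring.inverse (W x) t = 1 :=
    DFunLike.congr_fun (Ring.mul_inverse_cancel _ isUnit_Wx) t
  simp only [ContinuousMap.mul_apply, Pi.mul_apply, eq_inv_of_mul_eq_one_right mul_inverse, hx, hx']

lemma analyticAt_circleAverage_mul_inv {g h : E → ℂ} {y : E} (hg : AnalyticAt ℂ g y)
    (hh : AnalyticAt ℂ h y) (c : E) :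
    ∀ᶠ r in 𝓝 (0 : ℝ), (∀ ζ ∈ Metric.sphere (0 : ℂ) |r|, h (y + ζ • c) ≠ 0) →
      AnalyticAt ℂ
        (fun x => Real.circleAverage (fun ζ => g (x + ζ • c) * (h (x + ζ • c))⁻¹) 0 r) y := by
  let κ : C(Set.Icc 0 (2 * Real.pi), E) := ⟨fun θ => circleMap 0 1 θ • c, by fun_prop⟩
  let μ : Measure (Set.Icc 0 (2 * Real.pi)) := volume.comap Subtype.val
  have : IsFiniteMeasureOnCompacts μ :=
    .comap' volume continuous_subtype_val (.subtype_coe measurableSet_Icc)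
  have ofReal_tendsto : Tendsto ((↑) : ℝ → ℂ) (𝓝 0) (𝓝 0) :=
    Complex.continuous_ofReal.tendsto' 0 0 Complex.ofReal_zero
  have smul_κ (r : ℝ) (θ) : (r : ℂ) • κ θ = circleMap 0 r θ • c := by
    simp [κ, smul_smul, circleMap]
  filter_upwards [ofReal_tendsto.eventually (analyticAt_integral_mul_inv hg hh μ κ)]
    with r hr h_ne
  simp only [smul_κ] at hr
  refine ((hr fun θ => h_ne _ (circleMap_mem_sphere' 0 r θ)).const_smul
    (c := ((2 * Real.pi)⁻¹ : ℝ))).congr (.of_forall fun x => ?_)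
  simp only [Real.circleAverage_def, Pi.smul_apply,
    intervalIntegral.integral_of_le Real.two_pi_pos.le, ← integral_Icc_eq_integral_Ioc]
  congr 1
  exact integral_subtype_comap measurableSet_Icc
    fun θ => g (x + circleMap 0 r θ • c) * (h (x + circleMap 0 r θ • c))⁻¹

end CircleAverage

section AnalyticDvd

variable {E E' : Type*} [NormedAddCommGroup E] [NormedSpace ℂ E] [NormedAddCommGroup E']
  [NormedSpace ℂ E']

/-- `h` divides `g` in the ring of germs at `y` of analytic functions. -/
def AnalyticDvdAt (h g : E → ℂ) (y : E) : Prop :=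
  ∃ q : E → ℂ, AnalyticAt ℂ q y ∧ ∀ᶠ x in 𝓝 y, g x = q x * h x

namespace AnalyticDvdAt

lemma comp_analyticAt {h g : E → ℂ} {φ : E' → E} {y : E'} (hgh : AnalyticDvdAt h g (φ y))
    (hφ : AnalyticAt ℂ φ y) : AnalyticDvdAt (fun x => h (φ x)) (fun x => g (φ x)) y := by
  obtain ⟨q, hq, hgq⟩ := hgh
  exact ⟨fun x => q (φ x), hq.fun_comp hφ, hφ.continuousAt.eventually hgq⟩

lemma of_ne_zero {h g : E → ℂ} {y : E} (hg : AnalyticAt ℂ g y) (hh : AnalyticAt ℂ h y)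
    (hy : h y ≠ 0) : AnalyticDvdAt h g y := by
  refine ⟨fun x => g x * (h x)⁻¹, hg.mul (hh.inv hy), ?_⟩
  filter_upwards [hh.continuousAt.eventually_ne hy] with x hx
  rw [inv_mul_cancel_right₀ hx]

lemma of_deriv_ne_zero {h g : ℂ → ℂ} {ζ : ℂ} (hg : AnalyticAt ℂ g ζ) (hh : AnalyticAt ℂ h ζ)
    (h_deriv : deriv h ζ ≠ 0) (hgh : h ζ = 0 → g ζ = 0) : AnalyticDvdAt h g ζ := by
  by_cases hζ : h ζ = 0
  · have analyticAt_dslope {a : ℂ → ℂ} (ha : AnalyticAt ℂ a ζ) : AnalyticAt ℂ (dslope a ζ) ζ := by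
      obtain ⟨p, hp⟩ := ha
      exact hp.has_fpower_series_dslope_fslope.analyticAt
    have dslope_ne : dslope h ζ ζ ≠ 0 := by rwa [dslope_same]
    obtain ⟨q, hq, hgq⟩ := of_ne_zero (analyticAt_dslope hg) (analyticAt_dslope hh) dslope_ne
    refine ⟨q, hq, hgq.mono fun z hz => ?_⟩
    have hg_slope := sub_smul_dslope g ζ z
    have hh_slope := sub_smul_dslope h ζ z
    rw [hgh hζ, sub_zero, smul_eq_mul] at hg_slope
    rw [hζ, sub_zero, smul_eq_mul] at hh_slope
    rw [← hg_slope, ← hh_slope, hz]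
    ring
  · exact of_ne_zero hg hh hζ

end AnalyticDvdAt

lemma analyticAt_line (x c : E) (ζ : ℂ) : AnalyticAt ℂ (fun ζ : ℂ => x + ζ • c) ζ := by
  fun_prop

lemma eventually_forall_closedBall_line {P : E → Prop} {y : E} (hP : ∀ᶠ x in 𝓝 y, P x) (c : E) :
    ∀ᶠ r in 𝓝 (0 : ℝ), ∀ᶠ x in 𝓝 y, ∀ ζ ∈ Metric.closedBall (0 : ℂ) r, P (x + ζ • c) := by
  have continuous_line : Tendsto (fun p : ℂ × E => p.2 + p.1 • c) (𝓝 0 ×ˢ 𝓝 y) (𝓝 y) := by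
    have : Continuous fun p : ℂ × E => p.2 + p.1 • c := by fun_prop
    simpa [nhds_prod_eq] using this.tendsto (0, y)
  obtain ⟨Z, hZ, X, hX, hZX⟩ := eventually_prod_iff.1 (continuous_line.eventually hP)
  filter_upwards [eventually_closedBall_subset hZ] with r hr
  filter_upwards [hX] with x hx ζ hζ using hZX (hr hζ) hx

lemma eventually_forall_sphere {P : ℂ → Prop} (hP : ∀ᶠ ζ in 𝓝[≠] 0, P ζ) :
    ∀ᶠ r in 𝓝[>] (0 : ℝ), ∀ ζ ∈ Metric.sphere 0 r, P ζ := by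
  rw [eventually_nhdsWithin_iff] at hP ⊢
  filter_upwards [eventually_closedBall_subset hP] with r hr r_pos ζ hζ
  exact hr (Metric.sphere_subset_closedBall hζ) (ne_zero_of_mem_sphere r_pos.ne' ⟨ζ, hζ⟩)

-- The locally defined quotients agree, so they glue to a holomorphic function on the disc.
lemma eq_circleAverage_mul_of_analyticDvdAt {r : ℝ} (hr : 0 < r) {a b : ℂ → ℂ}
    (hb : AnalyticOnNhd ℂ b (Metric.closedBall 0 r)) (hb_ne : ∀ ζ ∈ Metric.sphere 0 r, b ζ ≠ 0)
    (hab : ∀ ζ ∈ Metric.closedBall 0 r, AnalyticDvdAt b a ζ) :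
    a 0 = Real.circleAverage (fun ζ => a ζ * (b ζ)⁻¹) 0 r * b 0 := by
  choose! G hG hGe using hab
  have hb_punctured (ζ) (hζ : ζ ∈ Metric.closedBall (0 : ℂ) r) : ∀ᶠ z in 𝓝[≠] ζ, b z ≠ 0 := by
    refine (hb ζ hζ).eventually_eq_zero_or_eventually_ne_zero.resolve_left fun b_zero => ?_
    obtain ⟨z, hz⟩ := NormedSpace.sphere_nonempty (E := ℂ) (x := 0).2 hr.le
    exact hb_ne z hz (hb.eqOn_zero_of_preconnected_of_eventuallyEq_zero
      (convex_closedBall (0 : ℂ) r).isPreconnected hζ b_zero (Metric.sphere_subset_closedBall hz))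
  classical
  let Q : ℂ → ℂ := fun ζ => if b ζ = 0 then G ζ ζ else a ζ * (b ζ)⁻¹
  have Q_eq (ζ) (hζ : ζ ∈ Metric.closedBall (0 : ℂ) r) : Q =ᶠ[𝓝 ζ] G ζ := by
    filter_upwards [eventually_nhdsWithin_iff.1 (hb_punctured ζ hζ), hGe ζ hζ] with z hbz haz
    by_cases hz : b z = 0
    · obtain rfl : z = ζ := by
        by_contra hne
        exact hbz hne hz
      simp only [Q, hz, if_true]
    · simp only [Q, hz, if_false, haz, mul_inv_cancel_right₀ hz]
  have Q_analytic : AnalyticOnNhd ℂ Q (Metric.closedBall 0 r) := fun ζ hζ =>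
    (hG ζ hζ).congr (Q_eq ζ hζ).symm
  have average_Q : Real.circleAverage Q 0 r = Q 0 := by
    refine DiffContOnCl.circleAverage (DiffContOnCl.mk_ball ?_ ?_) <;> rw [abs_of_pos hr]
    · exact Q_analytic.differentiableOn.mono Metric.ball_subset_closedBall
    · exact Q_analytic.continuousOn
  have average_eq : Real.circleAverage (fun ζ => a ζ * (b ζ)⁻¹) 0 r = Real.circleAverage Q 0 r := by
    refine Real.circleAverage_congr_sphere fun ζ hζ => ?_
    rw [abs_of_pos hr] at hζ
    simp only [Q, hb_ne ζ hζ, if_false]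
  have zero_mem : (0 : ℂ) ∈ Metric.closedBall 0 r := Metric.mem_closedBall_self hr.le
  rw [average_eq, average_Q, (Q_eq 0 zero_mem).eq_of_nhds, (hGe 0 zero_mem).self_of_nhds]

-- The quotient is the average of `g / h` over small circles in the direction `c`, which is analytic
-- even where `g / h` is undefined.
lemma exists_analyticAt_eq_mul_of_lines {g h : E → ℂ} {y : E} (hg : AnalyticAt ℂ g y)
    (hh : AnalyticAt ℂ h y) {c : E} (hc : ∀ᶠ ζ in 𝓝[≠] (0 : ℂ), h (y + ζ • c) ≠ 0) {U : Set E}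
    (hU : ∀ᶠ z in 𝓝 y, z ∈ U →
      AnalyticDvdAt (fun ζ : ℂ => h (z + ζ • c)) (fun ζ => g (z + ζ • c)) 0) :
    ∃ q : E → ℂ, AnalyticAt ℂ q y ∧
      ∀ᶠ x in 𝓝 y, (∀ ζ : ℂ, x + ζ • c ∈ U) → g x = q x * h x := by
  have nhdsGT_le : 𝓝[>] (0 : ℝ) ≤ 𝓝 0 := nhdsWithin_le_nhds
  obtain ⟨r, ⟨⟨h_average, h_lines⟩, h_ne⟩, r_pos⟩ :=
    ((((analyticAt_circleAverage_mul_inv hg hh c).and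
      (eventually_forall_closedBall_line (hU.and hh.eventually_analyticAt) c)).filter_mono
        nhdsGT_le).and (eventually_forall_sphere hc)).and self_mem_nhdsWithin |>.exists
  rw [abs_of_pos r_pos] at h_average
  refine ⟨_, h_average h_ne, ?_⟩
  have h_ne_near : ∀ᶠ x in 𝓝 y, ∀ ζ ∈ Metric.sphere (0 : ℂ) r, h (x + ζ • c) ≠ 0 := by
    refine (isCompact_sphere 0 r).eventually_forall_of_forall_eventually fun ζ hζ => ?_
    have h_continuous : ContinuousAt (fun p : E × ℂ => h (p.1 + p.2 • c)) (y, ζ) :=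
      (h_lines.self_of_nhds ζ (Metric.sphere_subset_closedBall hζ)).2.continuousAt.comp
        (f := fun p : E × ℂ => p.1 + p.2 • c) (by fun_prop)
    exact h_continuous.eventually_ne (h_ne ζ hζ)
  filter_upwards [h_lines, h_ne_near] with x hx hx_ne hxU
  have dvd_line (ζ) (hζ : ζ ∈ Metric.closedBall (0 : ℂ) r) :
      AnalyticDvdAt (fun ζ : ℂ => h (x + ζ • c)) (fun ζ => g (x + ζ • c)) ζ := by
    have translate (z : ℂ) : x + ζ • c + (z - ζ) • c = x + z • c := by module
    have dvd_translated := AnalyticDvdAt.comp_analyticAt (φ := fun z : ℂ => z - ζ) (y := ζ)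
      (by simpa only [sub_self] using (hx ζ hζ).1 (hxU ζ)) (by fun_prop)
    simpa only [translate] using dvd_translated
  have h_line_analytic : AnalyticOnNhd ℂ (fun ζ : ℂ => h (x + ζ • c)) (Metric.closedBall 0 r) :=
    fun ζ hζ => (hx ζ hζ).2.fun_comp (f := fun ζ : ℂ => x + ζ • c) (analyticAt_line x c ζ)
  simpa only [zero_smul, add_zero] using
    eq_circleAverage_mul_of_analyticDvdAt r_pos h_line_analytic hx_ne dvd_line

lemma deriv_line_zero {h : E → ℂ} {x : E} (hh : DifferentiableAt ℂ h x) (c : E) :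
    deriv (fun ζ : ℂ => h (x + ζ • c)) 0 = fderiv ℂ h x c := by
  rw [← hh.lineDeriv_eq_fderiv, lineDeriv]

lemma AnalyticDvdAt.of_fderiv_ne_zero {g h : E → ℂ} {y : E} (hg : AnalyticAt ℂ g y)
    (hh : AnalyticAt ℂ h y) (h_fderiv : fderiv ℂ h y ≠ 0)
    (hgh : ∀ᶠ x in 𝓝 y, h x = 0 → g x = 0) : AnalyticDvdAt h g y := by
  obtain ⟨c, hc⟩ : ∃ c, fderiv ℂ h y c ≠ 0 := by
    contrapose! h_fderiv
    exact ContinuousLinearMap.ext h_fderiv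
  have line_analytic {a : E → ℂ} {x : E} (ha : AnalyticAt ℂ a x) :
      AnalyticAt ℂ (fun ζ : ℂ => a (x + ζ • c)) 0 :=
    AnalyticAt.fun_comp (f := fun ζ : ℂ => x + ζ • c) (by simpa only [zero_smul, add_zero] using ha)
      (analyticAt_line x c 0)
  have h_line_ne : ∀ᶠ ζ in 𝓝[≠] (0 : ℂ), h (y + ζ • c) ≠ 0 := by
    refine (line_analytic hh).eventually_eq_zero_or_eventually_ne_zero.resolve_left fun h_zero => ?_
    apply hc
    rw [← deriv_line_zero hh.differentiableAt]
    exact (EventuallyEq.deriv_eq h_zero).trans (deriv_const 0 0)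
  have fderiv_ne : ∀ᶠ x in 𝓝 y, fderiv ℂ h x c ≠ 0 :=
    (hh.fderiv.continuousAt.clm_apply continuousAt_const).eventually_ne hc
  obtain ⟨q, hq, hgq⟩ := exists_analyticAt_eq_mul_of_lines hg hh h_line_ne (U := Set.univ) <| by
    filter_upwards [hgh, fderiv_ne, hg.eventually_analyticAt, hh.eventually_analyticAt]
      with x hgh_x h_fderiv_x hg_x hh_x _
    refine .of_deriv_ne_zero (line_analytic hg_x) (line_analytic hh_x) ?_ ?_
    · rwa [deriv_line_zero hh_x.differentiableAt]
    · simpa only [zero_smul, add_zero] using hgh_x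
  exact ⟨q, hq, hgq.mono fun x hx => hx fun _ => Set.mem_univ _⟩

lemma AnalyticDvdAt.of_isolated_singularity {g h : E → ℂ} {y c : E} (hg : AnalyticAt ℂ g y)
    (hh : AnalyticAt ℂ h y) (hc : ∀ᶠ ζ in 𝓝[≠] (0 : ℂ), h (y + ζ • c) ≠ 0)
    (h_dense : Dense {x : E | ∀ ζ : ℂ, x + ζ • c ≠ y})
    (h_isolated : ∀ᶠ x in 𝓝[≠] y, h x = 0 → fderiv ℂ h x ≠ 0)
    (hgh : ∀ᶠ x in 𝓝 y, h x = 0 → g x = 0) : AnalyticDvdAt h g y := by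
  obtain ⟨q, hq, hgq⟩ := exists_analyticAt_eq_mul_of_lines hg hh hc (U := {y}ᶜ) <| by
    filter_upwards [hgh.eventually_nhds, eventually_nhdsWithin_iff.1 h_isolated,
      hg.eventually_analyticAt, hh.eventually_analyticAt] with x hgh_x h_isolated_x hg_x hh_x hxy
    have dvd_x : AnalyticDvdAt h g x := by
      by_cases hx : h x = 0
      · exact .of_fderiv_ne_zero hg_x hh_x (h_isolated_x hxy hx) hgh_x
      · exact .of_ne_zero hg_x hh_x hx
    exact AnalyticDvdAt.comp_analyticAt (φ := fun ζ : ℂ => x + ζ • c)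
      (by simpa only [zero_smul, add_zero] using dvd_x) (analyticAt_line x c 0)
  refine ⟨q, hq, ?_⟩
  filter_upwards [hg.eventually_analyticAt, hh.eventually_analyticAt, hq.eventually_analyticAt,
    hgq.eventually_nhds] with x hg_x hh_x hq_x hgq_x
  by_contra hx
  have ne_near : ∀ᶠ z in 𝓝 x, g z - q z * h z ≠ 0 :=
    (hg_x.sub (hq_x.mul hh_x)).continuousAt.eventually_ne (sub_ne_zero.2 hx)
  obtain ⟨z, z_avoids, hz_ne, hz_eq⟩ :=
    ((mem_closure_iff_frequently.1 (h_dense x)).and_eventually (ne_near.and hgq_x)).exists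
  exact hz_ne (sub_eq_zero.2 (hz_eq z_avoids))

end AnalyticDvd

section Derivations

lemma derivation_eq_zero_of_span {k A M : Type*} [CommRing k] [CommRing A] [Algebra k A]
    [AddCommGroup M] [Module A M] [Module k M] (I : Ideal A) [IsHausdorff I M]
    (hres : ∀ a : A, ∃ c : k, a - algebraMap k A c ∈ I) {s : Set A} (hs : I = Ideal.span s)
    (D : Derivation k A M) (hD : ∀ x ∈ s, D x = 0) : D = 0 := by
  have mem_pow (j : ℕ) : ∀ a, D a ∈ I ^ j • (⊤ : Submodule A M) := by
    induction j with
    | zero => simp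
    | succ j ih =>
      have mem_of_mem : ∀ g ∈ I, D g ∈ I ^ (j + 1) • (⊤ : Submodule A M) := by
        intro g hg
        rw [hs] at hg
        induction hg using Submodule.span_induction with
        | mem x hx => simp [hD x hx]
        | zero => simp
        | add a b _ _ ha hb => simpa using add_mem ha hb
        | smul a b hb ihb =>
          rw [smul_eq_mul, D.leibniz, pow_succ', Submodule.mul_smul]
          rw [pow_succ', Submodule.mul_smul] at ihb
          exact add_mem (Submodule.smul_mem _ a ihb)
            (Submodule.smul_mem_smul (hs ▸ hb) (ih a))
      intro a
      obtain ⟨c, hc⟩ := hres a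
      simpa using mem_of_mem _ hc
  ext a
  refine IsHausdorff.haus inferInstance (I := I) (D a) fun j => ?_
  exact SModEq.zero.2 (mem_pow j a)

lemma isHausdorff_powerSeries {k A : Type*} [CommRing k] [CommRing A]
    [Algebra A (PowerSeries k)] {I : Ideal A}
    (hI : ∀ a ∈ I, PowerSeries.X ∣ algebraMap A (PowerSeries k) a) :
    IsHausdorff I (PowerSeries k) := by
  refine ⟨fun φ hφ => ?_⟩
  have map_le : I.map (algebraMap A (PowerSeries k)) ≤ Ideal.span {PowerSeries.X} :=
    Ideal.map_le_iff_le_comap.2 fun a ha => Ideal.mem_span_singleton.2 (hI a ha)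
  have dvd_of_mem_pow (j : ℕ) {a : A} (ha : a ∈ I ^ j) :
      PowerSeries.X ^ j ∣ algebraMap A (PowerSeries k) a := by
    rw [← Ideal.mem_span_singleton, ← Ideal.span_singleton_pow]
    refine Ideal.pow_right_mono map_le j ?_
    rw [← Ideal.map_pow]
    exact Ideal.mem_map_of_mem _ ha
  have dvd_of_mem (j : ℕ) : PowerSeries.X ^ j ∣ φ := by
    refine Submodule.smul_induction_on (SModEq.zero.1 (hφ j)) (fun a ha ψ _ => ?_)
      fun _ _ => dvd_add
    rw [Algebra.smul_def]
    exact (dvd_of_mem_pow j ha).mul_right ψ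
  ext j
  exact PowerSeries.X_pow_dvd_iff.1 (dvd_of_mem (j + 1)) j j.lt_succ_self

-- Write `f = x ^ k * u` with `u` a unit; then `D f = x ^ (k - 1) * (k * u + x * D u)`.
lemma associated_mul_derivation {k A : Type*} [Field k] [CharZero k] [CommRing A] [IsDomain A]
    [IsLocalRing A] [Algebra k A] (D : Derivation k A A) {x : A}
    (hx : IsLocalRing.maximalIdeal A = Ideal.span {x}) (hDx : D x = 1) {f : A}
    (hf : f ∈ IsLocalRing.maximalIdeal A) {N : ℕ} (hN : D f ∣ x ^ N) :
    Associated (x * D f) f := by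
  have isUnit_iff (a : A) : IsUnit a ↔ ¬x ∣ a := by
    rw [← Ideal.mem_span_singleton, ← hx, IsLocalRing.notMem_maximalIdeal]
  have x_not_unit : ¬IsUnit x := fun h => (isUnit_iff x).1 h dvd_rfl
  have x_ne_zero : x ≠ 0 := by
    rintro rfl
    simp at hDx
  have D_pow_succ_mul (m : ℕ) (u : A) :
      D (x ^ (m + 1) * u) = x ^ m * ((m + 1 : ℕ) * u + x * D u) := by
    rw [D.leibniz, D.leibniz_pow, hDx, Nat.add_sub_cancel]
    simp only [smul_eq_mul, nsmul_eq_mul, mul_one]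
    ring
  have finite_multiplicity : FiniteMultiplicity x f := by
    refine ⟨N + 1, fun ⟨u, hu⟩ => ?_⟩
    have : x ^ (N + 1) ∣ x ^ N := by
      rw [hu, D_pow_succ_mul] at hN
      exact (dvd_mul_right _ _).trans hN
    exact N.not_succ_le_self ((pow_dvd_pow_iff x_ne_zero x_not_unit).1 this)
  obtain ⟨u, hu, x_not_dvd_u⟩ := finite_multiplicity.exists_eq_pow_mul_and_not_dvd
  have u_unit : IsUnit u := (isUnit_iff u).2 x_not_dvd_u
  obtain ⟨m, hm⟩ : ∃ m, multiplicity x f = m + 1 := by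
    refine Nat.exists_eq_succ_of_ne_zero fun h => ?_
    rw [h, pow_zero, one_mul] at hu
    exact (IsLocalRing.mem_maximalIdeal f).1 hf (hu ▸ u_unit)
  have m_unit : IsUnit ((m + 1 : ℕ) : A) := by
    have := (isUnit_iff_ne_zero.2 (Nat.cast_ne_zero.2 m.succ_ne_zero : ((m + 1 : ℕ) : k) ≠ 0)).map
      (algebraMap k A)
    rwa [map_natCast] at this
  have w_unit : IsUnit ((m + 1 : ℕ) * u + x * D u) := by
    rw [isUnit_iff, dvd_add_left (dvd_mul_right x _), ← isUnit_iff]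
    exact m_unit.mul u_unit
  rw [hu, hm, D_pow_succ_mul, ← mul_assoc, ← pow_succ']
  exact (Associated.refl _).mul_mul
    ((associated_one_iff_isUnit.2 w_unit).trans (associated_one_iff_isUnit.2 u_unit).symm)

end Derivations

/-! ### Germs of holomorphic functions -/

section Germs

lemma mkOn_eq_mkOn_iff {F G : (Fin n → ℂ) → ℂ} (hF : AnalyticAt ℂ F 0) (hG : AnalyticAt ℂ G 0) :
    mkOn F hF = mkOn G hG ↔ F =ᶠ[𝓝 0] G :=
  Subtype.ext_iff.trans Filter.Germ.coe_eq

lemma On.exists_mkOn_eq (g : On n) : ∃ G, ∃ hG : AnalyticAt ℂ G 0, mkOn G hG = g :=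
  ⟨On.rep g, On.rep_analyticAt g, Subtype.ext (On.rep_spec g)⟩

lemma mkOn_add_mkOn {F G : (Fin n → ℂ) → ℂ} (hF : AnalyticAt ℂ F 0) (hG : AnalyticAt ℂ G 0) :
    mkOn F hF + mkOn G hG = mkOn (F + G) (hF.add hG) :=
  rfl

lemma mkOn_mul_mkOn {F G : (Fin n → ℂ) → ℂ} (hF : AnalyticAt ℂ F 0) (hG : AnalyticAt ℂ G 0) :
    mkOn F hF * mkOn G hG = mkOn (F * G) (hF.mul hG) :=
  rfl

lemma smul_mkOn (c : ℂ) {F : (Fin n → ℂ) → ℂ} (hF : AnalyticAt ℂ F 0) :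
    c • mkOn F hF = mkOn (c • F) hF.const_smul :=
  rfl

lemma mkOn_dvd_mkOn_iff {G H : (Fin n → ℂ) → ℂ} (hG : AnalyticAt ℂ G 0) (hH : AnalyticAt ℂ H 0) :
    mkOn H hH ∣ mkOn G hG ↔ AnalyticDvdAt H G 0 := by
  constructor
  · rintro ⟨q, hq⟩
    obtain ⟨Q, hQ, rfl⟩ := On.exists_mkOn_eq q
    rw [mul_comm, mkOn_mul_mkOn, mkOn_eq_mkOn_iff] at hq
    exact ⟨Q, hQ, hq⟩
  · rintro ⟨Q, hQ, hGQ⟩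
    refine ⟨mkOn Q hQ, ?_⟩
    rw [mul_comm, mkOn_mul_mkOn, mkOn_eq_mkOn_iff]
    exact hGQ

/-- Evaluation of germs at the origin, as a homomorphism of `ℂ`-algebras. -/
def On.eval (n : ℕ) : On n →ₐ[ℂ] ℂ where
  __ := (Filter.Germ.valueRingHom (x := (0 : Fin n → ℂ))).comp (On n).val.toRingHom
  commutes' _ := rfl

lemma On.eval_mkOn {F : (Fin n → ℂ) → ℂ} (hF : AnalyticAt ℂ F 0) : On.eval n (mkOn F hF) = F 0 :=
  rfl

lemma On.isUnit_iff (g : On n) : IsUnit g ↔ On.eval n g ≠ 0 := by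
  refine ⟨fun h => (h.map (On.eval n)).ne_zero, fun hg => ?_⟩
  obtain ⟨G, hG, rfl⟩ := On.exists_mkOn_eq g
  rw [isUnit_iff_dvd_one]
  exact (mkOn_dvd_mkOn_iff analyticAt_const hG).2 (.of_ne_zero analyticAt_const hG hg)

instance On.instNontrivial : Nontrivial (On n) :=
  (On.eval n).toRingHom.domain_nontrivial

instance On.instIsLocalRing : IsLocalRing (On n) :=
  .of_nonunits_add fun a b ha hb => by
    rw [mem_nonunits_iff, On.isUnit_iff, not_not] at *
    rw [map_add, ha, hb, add_zero]

lemma On.mem_maximalIdeal_iff {g : On n} :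
    g ∈ IsLocalRing.maximalIdeal (On n) ↔ On.eval n g = 0 := by
  rw [IsLocalRing.mem_maximalIdeal, mem_nonunits_iff, On.isUnit_iff, not_not]

lemma On.exists_sub_algebraMap_mem (g : On n) :
    ∃ c : ℂ, g - algebraMap ℂ (On n) c ∈ IsLocalRing.maximalIdeal (On n) :=
  ⟨On.eval n g, by rw [On.mem_maximalIdeal_iff, map_sub, AlgHom.commutes]; exact sub_self _⟩

lemma analyticAt_fderiv_apply {E : Type*} [NormedAddCommGroup E] [NormedSpace ℂ E] {G : E → ℂ}
    {x : E} (hG : AnalyticAt ℂ G x) (v : E) : AnalyticAt ℂ (fun y => fderiv ℂ G y v) x :=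
  ((ContinuousLinearMap.apply ℂ ℂ v).analyticAt _).fun_comp hG.fderiv

lemma pd_mkOn (i : Fin n) {G : (Fin n → ℂ) → ℂ} (hG : AnalyticAt ℂ G 0) :
    pd i (mkOn G hG) = mkOn (fun x => fderiv ℂ G x (Pi.single i 1))
      (analyticAt_fderiv_apply hG _) := by
  refine (mkOn_eq_mkOn_iff _ _).2 ?_
  filter_upwards [(Filter.Germ.coe_eq.1 (On.rep_spec (mkOn G hG))).fderiv (𝕜 := ℂ)] with x hx
  rw [hx]

/-- The partial derivative `∂/∂xᵢ` as a derivation of `𝒪ₙ`. -/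
def pdDerivation (i : Fin n) : Derivation ℂ (On n) (On n) :=
  have pd_mul (a b : On n) : pd i (a * b) = a • pd i b + b • pd i a := by
    obtain ⟨F, hF, rfl⟩ := On.exists_mkOn_eq a
    obtain ⟨G, hG, rfl⟩ := On.exists_mkOn_eq b
    simp only [smul_eq_mul, pd_mkOn, mkOn_mul_mkOn, mkOn_add_mkOn, mkOn_eq_mkOn_iff]
    filter_upwards [hF.eventually_analyticAt, hG.eventually_analyticAt] with x hFx hGx
    rw [fderiv_mul hFx.differentiableAt hGx.differentiableAt]
    rfl
  Derivation.mk'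
    { toFun := pd i
      map_add' := fun a b => by
        obtain ⟨F, hF, rfl⟩ := On.exists_mkOn_eq a
        obtain ⟨G, hG, rfl⟩ := On.exists_mkOn_eq b
        simp only [pd_mkOn, mkOn_add_mkOn, mkOn_eq_mkOn_iff]
        filter_upwards [hF.eventually_analyticAt, hG.eventually_analyticAt] with x hFx hGx
        rw [fderiv_add hFx.differentiableAt hGx.differentiableAt]
        rfl
      map_smul' := fun c a => by
        obtain ⟨F, hF, rfl⟩ := On.exists_mkOn_eq a
        simp only [pd_mkOn, smul_mkOn, RingHom.id_apply, mkOn_eq_mkOn_iff]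
        filter_upwards [hF.eventually_analyticAt] with x hFx
        rw [fderiv_const_smul hFx.differentiableAt]
        rfl }
    pd_mul

@[simp]
lemma pdDerivation_apply (i : Fin n) (g : On n) : pdDerivation i g = pd i g :=
  rfl

/-- The germ at the origin of a linear form on `ℂⁿ`. -/
def linearGerm (ℓ : (Fin n → ℂ) →L[ℂ] ℂ) : On n :=
  mkOn ℓ (ℓ.analyticAt 0)

lemma linearGerm_proj (i : Fin n) : linearGerm (.proj i) = coordG i :=
  rfl

lemma linearGerm_mem_maximalIdeal (ℓ : (Fin n → ℂ) →L[ℂ] ℂ) :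
    linearGerm ℓ ∈ IsLocalRing.maximalIdeal (On n) :=
  On.mem_maximalIdeal_iff.2 ℓ.map_zero

lemma pd_linearGerm (i : Fin n) (ℓ : (Fin n → ℂ) →L[ℂ] ℂ) :
    pd i (linearGerm ℓ) = algebraMap ℂ (On n) (ℓ (Pi.single i 1)) := by
  rw [linearGerm, pd_mkOn]
  simp only [ContinuousLinearMap.fderiv]
  rfl

lemma pd_coordG (i j : Fin n) : pd i (coordG j) = if j = i then 1 else 0 := by
  rw [← linearGerm_proj, pd_linearGerm, ContinuousLinearMap.proj_apply, Pi.single_apply]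
  split_ifs <;> simp

end Germs

/-! ### Germs vanishing on linear subspaces -/

section VanishingGerms

variable {E : Type*} [NormedAddCommGroup E] [NormedSpace ℂ E]

lemma eventually_eq_zero_or_eq_zero_of_mul {f g : E → ℂ} {x : E} (hf : AnalyticAt ℂ f x)
    (hg : AnalyticAt ℂ g x) (hfg : ∀ᶠ y in 𝓝 x, f y * g y = 0) :
    (∀ᶠ y in 𝓝 x, f y = 0) ∨ ∀ᶠ y in 𝓝 x, g y = 0 := by
  obtain ⟨r, r_pos, hr⟩ := Metric.eventually_nhds_iff_ball.1
    (hf.eventually_analyticAt.and (hg.eventually_analyticAt.and hfg))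
  have ball_mem : Metric.ball x r ∈ 𝓝 x := Metric.ball_mem_nhds x r_pos
  by_cases hf_zero : ∀ y ∈ Metric.ball x r, f y = 0
  · exact .inl (eventually_of_mem ball_mem hf_zero)
  push Not at hf_zero
  obtain ⟨y, hy, hfy⟩ := hf_zero
  have g_zero_near : g =ᶠ[𝓝 y] 0 := by
    filter_upwards [(hr y hy).1.continuousAt.eventually_ne hfy, Metric.isOpen_ball.mem_nhds hy]
      with z hfz hz
    exact (mul_eq_zero.1 (hr z hz).2.2).resolve_left hfz
  have g_analytic : AnalyticOnNhd ℂ g (Metric.ball x r) := fun z hz => (hr z hz).2.1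
  exact .inr <| eventually_of_mem ball_mem <|
    g_analytic.eqOn_zero_of_preconnected_of_eventuallyEq_zero
      (convex_ball x r).isPreconnected hy g_zero_near

lemma exists_eventually_ne_zero_on_line {g : E → ℂ} {x : E} (hg : AnalyticAt ℂ g x)
    (hne : ¬∀ᶠ y in 𝓝 x, g y = 0) : ∃ c : E, ∀ᶠ ζ in 𝓝[≠] (0 : ℂ), g (x + ζ • c) ≠ 0 := by
  obtain ⟨r, r_pos, hr⟩ := Metric.eventually_nhds_iff_ball.1 hg.eventually_analyticAt
  obtain ⟨y, hgy, hy⟩ :=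
    ((not_eventually.1 hne).and_eventually (Metric.ball_mem_nhds x r_pos)).exists
  refine ⟨y - x, ?_⟩
  have line_mem {ζ : ℂ} (hζ : ζ ∈ Metric.closedBall 0 1) :
      x + ζ • (y - x) ∈ Metric.ball x r := by
    rw [mem_closedBall_zero_iff] at hζ
    rw [mem_ball_iff_norm, add_sub_cancel_left, norm_smul]
    exact (mul_le_of_le_one_left (norm_nonneg _) hζ).trans_lt (mem_ball_iff_norm.1 hy)
  have line_analytic : AnalyticOnNhd ℂ (fun ζ : ℂ => g (x + ζ • (y - x)))
      (Metric.closedBall 0 1) := fun ζ hζ =>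
    (hr _ (line_mem hζ)).fun_comp (f := fun ζ : ℂ => x + ζ • (y - x)) (analyticAt_line x _ ζ)
  refine (line_analytic 0 (by simp)).eventually_eq_zero_or_eventually_ne_zero.resolve_left
    fun line_zero => hgy ?_
  simpa using line_analytic.eqOn_zero_of_preconnected_of_eventuallyEq_zero
    (convex_closedBall (0 : ℂ) 1).isPreconnected (by simp) line_zero (x := 1) (by simp)

lemma tendsto_smul_punctured_zero (x : E) :
    Tendsto (fun ζ : ℂ => ζ • x) (𝓝[≠] 0) (𝓝 0) :=
  ((continuous_id.smul continuous_const).tendsto' 0 0 (zero_smul ℂ x)).mono_left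
    nhdsWithin_le_nhds

lemma mkOn_mem_IX_iff {X : Set (Fin n → ℂ)} {G : (Fin n → ℂ) → ℂ} (hG : AnalyticAt ℂ G 0) :
    mkOn G hG ∈ IX n X ↔ ∀ᶠ x in 𝓝 0, x ∈ X → G x = 0 :=
  Filter.Germ.coe_eq.trans eventually_nhdsWithin_iff

lemma isRadical_IX (X : Set (Fin n → ℂ)) : (IX n X).IsRadical := by
  rintro g ⟨k, hk⟩
  obtain ⟨G, hG, rfl⟩ := On.exists_mkOn_eq g
  have pow_mkOn : mkOn G hG ^ k = mkOn (G ^ k) (hG.pow k) := rfl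
  rw [pow_mkOn, mkOn_mem_IX_iff] at hk
  exact (mkOn_mem_IX_iff hG).2 (hk.mono fun x hx hxX => eq_zero_of_pow_eq_zero (hx hxX))

lemma isPrime_IX_submodule (V : Submodule ℂ (Fin n → ℂ)) :
    (IX n (V : Set (Fin n → ℂ))).IsPrime := by
  have mem_iff {G : (Fin n → ℂ) → ℂ} (hG : AnalyticAt ℂ G 0) :
      mkOn G hG ∈ IX n (V : Set (Fin n → ℂ)) ↔ ∀ᶠ x : V in 𝓝 0, G (x : Fin n → ℂ) = 0 := by
    rw [mkOn_mem_IX_iff, ← eventually_nhdsWithin_iff]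
    exact (eventually_nhds_subtype_iff _ (0 : V) (fun x => G x = 0)).symm
  have restrict {G : (Fin n → ℂ) → ℂ} (hG : AnalyticAt ℂ G 0) :
      AnalyticAt ℂ (fun x : V => G (x : Fin n → ℂ)) 0 :=
    hG.fun_comp (f := V.subtypeL) (V.subtypeL.analyticAt 0)
  refine ⟨fun h => ?_, fun {a b} hab => ?_⟩
  · have : ∀ᶠ _ : V in 𝓝 0, (1 : ℂ) = 0 :=
      (mem_iff (G := fun _ => 1) analyticAt_const).1 ((Ideal.eq_top_iff_one _).1 h)
    exact one_ne_zero this.self_of_nhds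
  · obtain ⟨F, hF, rfl⟩ := On.exists_mkOn_eq a
    obtain ⟨G, hG, rfl⟩ := On.exists_mkOn_eq b
    rw [mkOn_mul_mkOn, mem_iff] at hab
    rw [mem_iff, mem_iff]
    exact eventually_eq_zero_or_eq_zero_of_mul (restrict hF) (restrict hG) hab

lemma IX_univ : IX n Set.univ = ⊥ := by
  ext g
  obtain ⟨G, hG, rfl⟩ := On.exists_mkOn_eq g
  rw [mkOn_mem_IX_iff, Ideal.mem_bot]
  simp only [Set.mem_univ, true_imp_iff]
  exact (mkOn_eq_mkOn_iff hG analyticAt_const).symm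

instance On.instIsDomain : IsDomain (On n) := by
  have : (⊥ : Ideal (On n)).IsPrime := IX_univ (n := n) ▸ isPrime_IX_submodule ⊤
  exact .of_bot_isPrime _

lemma linearGerm_mem_IX_iff {ℓ : (Fin n → ℂ) →L[ℂ] ℂ} {V : Submodule ℂ (Fin n → ℂ)} :
    linearGerm ℓ ∈ IX n (V : Set (Fin n → ℂ)) ↔ ∀ x ∈ V, ℓ x = 0 := by
  refine (mkOn_mem_IX_iff _).trans ⟨fun h x hx => ?_, fun h => .of_forall h⟩
  obtain ⟨ζ, hζ, ζ_ne_zero⟩ :=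
    (((tendsto_smul_punctured_zero x).eventually h).and self_mem_nhdsWithin).exists
  have := hζ (V.smul_mem ζ hx)
  rw [map_smul, smul_eq_mul] at this
  exact (mul_eq_zero.1 this).resolve_left ζ_ne_zero

lemma linearGerm_dvd_of_mem_IX_ker {ℓ : (Fin n → ℂ) →L[ℂ] ℂ} (hℓ : ℓ ≠ 0) {g : On n}
    (hg : g ∈ IX n {x | ℓ x = 0}) : linearGerm ℓ ∣ g := by
  obtain ⟨G, hG, rfl⟩ := On.exists_mkOn_eq g
  refine (mkOn_dvd_mkOn_iff hG _).2 (.of_fderiv_ne_zero hG (ℓ.analyticAt 0) ?_ ?_)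
  · rwa [ℓ.fderiv]
  · exact (mkOn_mem_IX_iff hG).1 hg

lemma IX_inter_ker {V : Submodule ℂ (Fin n → ℂ)} {ℓ : (Fin n → ℂ) →L[ℂ] ℂ} {v : Fin n → ℂ}
    (hv : v ∈ V) (hℓ : ℓ v ≠ 0) :
    IX n (V ⊓ LinearMap.ker (ℓ : (Fin n → ℂ) →ₗ[ℂ] ℂ) : Submodule ℂ (Fin n → ℂ)) =
      IX n V ⊔ Ideal.span {linearGerm ℓ} := by
  refine le_antisymm (fun g hg => ?_) (sup_le ?_ ?_)
  · obtain ⟨G, hG, rfl⟩ := On.exists_mkOn_eq g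
    let π : (Fin n → ℂ) →L[ℂ] Fin n → ℂ := .id ℂ _ - ℓ.smulRight ((ℓ v)⁻¹ • v)
    have π_apply (x : Fin n → ℂ) : π x = x - ℓ x • (ℓ v)⁻¹ • v := rfl
    have ℓ_π (x : Fin n → ℂ) : ℓ (π x) = 0 := by
      simp [π_apply, inv_mul_cancel₀ hℓ]
    have hGπ : AnalyticAt ℂ (fun x => G (π x)) 0 :=
      AnalyticAt.fun_comp (f := π) (by rwa [map_zero]) (π.analyticAt 0)
    have Gπ_mem : mkOn _ hGπ ∈ IX n (V : Set (Fin n → ℂ)) := by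
      rw [mkOn_mem_IX_iff] at hg ⊢
      filter_upwards [(π.continuous.tendsto' 0 0 π.map_zero).eventually hg] with x hx hxV
      exact hx ⟨V.sub_mem hxV (V.smul_mem _ (V.smul_mem _ hv)), ℓ_π x⟩
    have sub_mem : mkOn G hG - mkOn _ hGπ ∈ IX n {x | ℓ x = 0} := by
      refine (mkOn_mem_IX_iff (hG.sub hGπ)).2 (.of_forall fun x (hx : ℓ x = 0) => ?_)
      simp [π_apply, hx]
    have ℓ_ne_zero : ℓ ≠ 0 := fun h => hℓ (by rw [h, zero_apply])
    rw [← add_sub_cancel (mkOn _ hGπ) (mkOn G hG)]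
    exact Submodule.add_mem_sup Gπ_mem
      (Ideal.mem_span_singleton.2 (linearGerm_dvd_of_mem_IX_ker ℓ_ne_zero sub_mem))
  · intro g hg
    obtain ⟨G, hG, rfl⟩ := On.exists_mkOn_eq g
    rw [mkOn_mem_IX_iff] at hg ⊢
    exact hg.mono fun x hx hxV => hx hxV.1
  · rw [Ideal.span_singleton_le_iff_mem, linearGerm_mem_IX_iff]
    exact fun x hx => hx.2

/-- The linear subspace of `ℂⁿ` cut out by the coordinates with index in `s`, with respect to the
linear coordinate system `L`. -/
def coordSubspace (L : (Fin n → ℂ) ≃L[ℂ] (Fin n → ℂ)) (s : Set (Fin n)) :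
    Submodule ℂ (Fin n → ℂ) where
  carrier := {x | ∀ j ∈ s, L x j = 0}
  add_mem' hx hy j hj := by simp [hx j hj, hy j hj]
  zero_mem' j _ := by simp
  smul_mem' c x hx j hj := by simp [hx j hj]

/-- The germ of the `j`-th coordinate in the linear coordinate system `L`. -/
def coordGerm (L : (Fin n → ℂ) ≃L[ℂ] (Fin n → ℂ)) (j : Fin n) : On n :=
  linearGerm ((ContinuousLinearMap.proj j).comp (L : (Fin n → ℂ) →L[ℂ] Fin n → ℂ))

variable (L : (Fin n → ℂ) ≃L[ℂ] (Fin n → ℂ)) {s : Set (Fin n)} {j : Fin n}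

lemma symm_single_mem_coordSubspace (hj : j ∉ s) : L.symm (Pi.single j 1) ∈ coordSubspace L s :=
  fun i hi => by
    rw [L.apply_symm_apply, Pi.single_eq_of_ne (ne_of_mem_of_not_mem hi hj)]

lemma coordGerm_notMem_IX_coordSubspace (hj : j ∉ s) :
    coordGerm L j ∉ IX n (coordSubspace L s : Set (Fin n → ℂ)) := by
  rw [coordGerm, linearGerm_mem_IX_iff]
  intro h
  simpa using h _ (symm_single_mem_coordSubspace L hj)

lemma IX_coordSubspace_insert (hj : j ∉ s) :
    IX n (coordSubspace L (insert j s) : Set (Fin n → ℂ)) =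
      IX n (coordSubspace L s : Set (Fin n → ℂ)) ⊔ Ideal.span {coordGerm L j} := by
  rw [coordGerm, ← IX_inter_ker (symm_single_mem_coordSubspace L hj) (by simp)]
  congr 2
  ext x
  exact Set.forall_mem_insert.trans and_comm

lemma IX_coordSubspace_empty : IX n (coordSubspace L ∅ : Set (Fin n → ℂ)) = ⊥ := by
  rw [← IX_univ]
  congr 1
  exact Set.eq_univ_of_forall fun x j hj => hj.elim

lemma maximalIdeal_eq_span_coordG :
    IsLocalRing.maximalIdeal (On n) = Ideal.span (Set.range coordG) := by
  have coordGerm_refl (i : Fin n) : coordGerm (.refl ℂ _) i = coordG i := rfl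
  have IX_eq_span (t : Finset (Fin n)) :
      IX n (coordSubspace (.refl ℂ (Fin n → ℂ)) t : Set (Fin n → ℂ)) =
        Ideal.span (coordG '' t) := by
    induction t using Finset.induction_on with
    | empty => rw [Finset.coe_empty, IX_coordSubspace_empty, Set.image_empty, Ideal.span_empty]
    | insert i t hi ih =>
      rw [Finset.coe_insert, IX_coordSubspace_insert _ hi, ih, coordGerm_refl, Set.image_insert_eq,
        Ideal.span_insert, sup_comm]
  rw [← Set.image_univ, ← Finset.coe_univ, ← IX_eq_span]
  ext g
  obtain ⟨G, hG, rfl⟩ := On.exists_mkOn_eq g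
  rw [On.mem_maximalIdeal_iff, On.eval_mkOn, mkOn_mem_IX_iff]
  have mem_iff (x : Fin n → ℂ) :
      x ∈ coordSubspace (.refl ℂ (Fin n → ℂ)) (Finset.univ : Finset (Fin n)) ↔ x = 0 := by
    simp [coordSubspace, funext_iff]
  simp only [SetLike.mem_coe, mem_iff]
  exact ⟨fun h => .of_forall fun x hx => hx ▸ h, fun h => h.self_of_nhds rfl⟩

end VanishingGerms

/-! ### Bruce–Roberts ideals of isolated hypersurface singularities -/

section BruceRoberts

lemma derivative_arc (γ : On n →ₐ[ℂ] PowerSeries ℂ) (g : On n) :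
    PowerSeries.derivative ℂ (γ g) =
      ∑ i, γ (pd i g) * PowerSeries.derivative ℂ (γ (coordG i)) := by
  let : Algebra (On n) (PowerSeries ℂ) := γ.toRingHom.toAlgebra
  have : IsScalarTower ℂ (On n) (PowerSeries ℂ) := .of_algebraMap_eq fun c => (γ.commutes c).symm
  have algebraMap_eq (a : On n) : algebraMap (On n) (PowerSeries ℂ) a = γ a := rfl
  have : IsHausdorff (IsLocalRing.maximalIdeal (On n)) (PowerSeries ℂ) :=
    isHausdorff_powerSeries fun a ha => X_dvd_map_of_mem_maximalIdeal γ ha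
  have sum_apply (D : Fin n → Derivation ℂ (On n) (PowerSeries ℂ)) (a : On n) :
      (∑ i, D i) a = ∑ i, D i a := by
    rw [← Finset.sum_apply]
    exact congrFun (map_sum Derivation.coeFnAddMonoidHom D Finset.univ) a
  let D : Derivation ℂ (On n) (PowerSeries ℂ) :=
    (PowerSeries.derivative ℂ).compAlgebraMap (On n) -
      ∑ i, (LinearMap.toSpanSingleton (On n) (PowerSeries ℂ)
        (PowerSeries.derivative ℂ (γ (coordG i)))).compDer (pdDerivation i)
  have D_apply (a : On n) : D a = PowerSeries.derivative ℂ (γ a) -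
      ∑ i, γ (pd i a) * PowerSeries.derivative ℂ (γ (coordG i)) := by
    rw [Derivation.sub_apply, sum_apply]
    simp [Algebra.smul_def, algebraMap_eq]
  have D_eq_zero : D = 0 := by
    refine derivation_eq_zero_of_span (IsLocalRing.maximalIdeal (On n)) On.exists_sub_algebraMap_mem
      maximalIdeal_eq_span_coordG D ?_
    rintro _ ⟨j, rfl⟩
    simp [D_apply, pd_coordG, apply_ite γ]
  rw [← sub_eq_zero, ← D_apply, D_eq_zero, Derivation.zero_apply]

lemma ne_zero_of_finiteDimensional_jac (i : Fin n) {f : On n}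
    (hf : FiniteDimensional ℂ (On n ⧸ Jac n f)) : f ≠ 0 := by
  rintro rfl
  obtain ⟨k, hk⟩ := exists_pow_mem_of_mem_maximalIdeal ℂ (Jac n 0)
    (linearGerm_mem_maximalIdeal (.proj i))
  have jac_zero : Jac n (0 : On n) = ⊥ := by
    refine Ideal.span_eq_bot.2 ?_
    rintro _ ⟨j, rfl⟩
    exact (pdDerivation j).map_zero
  rw [jac_zero, Ideal.mem_bot, linearGerm_proj] at hk
  have pd_eq := pd_coordG i i
  rw [eq_zero_of_pow_eq_zero hk, if_pos rfl] at pd_eq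
  exact zero_ne_one ((pdDerivation i).map_zero.symm.trans pd_eq)

lemma jac_mkOn_le_IX {H : (Fin n → ℂ) → ℂ} (hH : AnalyticAt ℂ H 0) :
    Jac n (mkOn H hH) ≤ IX n {x | fderiv ℂ H x = 0} := by
  refine Ideal.span_le.2 ?_
  rintro _ ⟨i, rfl⟩
  change pd i (mkOn H hH) ∈ IX n _
  rw [pd_mkOn]
  exact (mkOn_mem_IX_iff _).2 (.of_forall fun x hx => by rw [hx, zero_apply])

lemma eventually_fderiv_ne_zero {H : (Fin n → ℂ) → ℂ} (hH : AnalyticAt ℂ H 0)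
    (hJac : FiniteDimensional ℂ (On n ⧸ Jac n (mkOn H hH))) :
    ∀ᶠ x in 𝓝[≠] 0, fderiv ℂ H x ≠ 0 := by
  have coordG_mem (i : Fin n) : coordG i ∈ IX n {x | fderiv ℂ H x = 0} := by
    obtain ⟨k, hk⟩ := exists_pow_mem_of_mem_maximalIdeal ℂ (Jac n (mkOn H hH))
      (linearGerm_mem_maximalIdeal (.proj i))
    exact isRadical_IX _ ⟨k, jac_mkOn_le_IX hH hk⟩
  have coord_eq_zero := eventually_all.2 fun i => (mkOn_mem_IX_iff _).1 (coordG_mem i)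
  rw [eventually_nhdsWithin_iff]
  filter_upwards [coord_eq_zero] with x hx hx_ne hfderiv
  exact hx_ne (funext fun i => hx i hfderiv)

lemma dense_setOf_line_ne_zero {E : Type*} [NormedAddCommGroup E] [NormedSpace ℂ E]
    (hE : 1 < Module.rank ℂ E) (c : E) : Dense {x : E | ∀ ζ : ℂ, x + ζ • c ≠ 0} := by
  have span_ne_top : Submodule.span ℂ {c} ≠ ⊤ := fun h => by
    have := rank_span_le (R := ℂ) ({c} : Set E)
    rw [h, rank_top, Cardinal.mk_singleton] at this
    exact this.not_gt hE
  have dense_compl : Dense (Submodule.span ℂ {c} : Set E)ᶜ :=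
    interior_eq_empty_iff_dense_compl.1 <| Set.not_nonempty_iff_eq_empty.1 fun h =>
      span_ne_top (Submodule.eq_top_of_nonempty_interior' _ h)
  refine dense_compl.mono ?_
  intro x hx ζ hζ
  refine hx (Submodule.mem_span_singleton.2 ?_)
  exact ⟨-ζ, by rw [neg_smul]; exact (eq_neg_of_add_eq_zero_left hζ).symm⟩

lemma mkOn_mem_IX_preimage_zero {H : (Fin n → ℂ) → ℂ} (hH : AnalyticAt ℂ H 0) :
    mkOn H hH ∈ IX n (H ⁻¹' {0}) :=
  (mkOn_mem_IX_iff hH).2 (.of_forall fun _ hx => hx)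

lemma IX_preimage_zero_eq_span (hn : 2 ≤ n) {H : (Fin n → ℂ) → ℂ} (hH : AnalyticAt ℂ H 0)
    (hJac : FiniteDimensional ℂ (On n ⧸ Jac n (mkOn H hH))) :
    IX n (H ⁻¹' {0}) = Ideal.span {mkOn H hH} := by
  refine le_antisymm (fun g hg => ?_)
    ((Ideal.span_singleton_le_iff_mem _).2 (mkOn_mem_IX_preimage_zero hH))
  obtain ⟨G, hG, rfl⟩ := On.exists_mkOn_eq g
  obtain ⟨c, hc⟩ := exists_eventually_ne_zero_on_line hH fun hH_zero =>
    ne_zero_of_finiteDimensional_jac ⟨0, by lia⟩ hJac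
      ((mkOn_eq_mkOn_iff hH analyticAt_const).2 hH_zero)
  rw [Ideal.mem_span_singleton, mkOn_dvd_mkOn_iff]
  exact .of_isolated_singularity hG hH hc
    (dense_setOf_line_ne_zero (by rw [rank_fin_fun]; exact_mod_cast hn) c)
    ((eventually_fderiv_ne_zero hH hJac).mono fun _ hx _ => hx) ((mkOn_mem_IX_iff hG).1 hg)

lemma applyVF_mul (δ : Fin n → On n) (a b : On n) :
    applyVF δ (a * b) = a * applyVF δ b + b * applyVF δ a := by
  simp only [applyVF, ← pdDerivation_apply, Derivation.leibniz, smul_eq_mul, mul_add,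
    Finset.sum_add_distrib, Finset.mul_sum]
  simp only [mul_left_comm]

lemma BRIdeal_eq_constrainedIdeal {X : Set (Fin n → ℂ)} {h : On n}
    (hX : IX n X = Ideal.span {h}) (f : On n) :
    BRIdeal n X f = constrainedIdeal (pd · f) (pd · h) h := by
  have mem_ThetaX (δ : Fin n → On n) : δ ∈ ThetaX n X ↔ applyVF δ h ∈ Ideal.span {h} := by
    constructor
    · intro hδ
      exact hX ▸ hδ h (hX ▸ Ideal.mem_span_singleton_self h)
    · intro hδ g hg
      rw [hX] at hg ⊢
      obtain ⟨b, rfl⟩ := Ideal.mem_span_singleton'.1 hg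
      rw [applyVF_mul]
      exact add_mem (Ideal.mul_mem_left _ b hδ)
        (Ideal.mul_mem_right _ _ (Ideal.mem_span_singleton_self h))
  ext a
  rw [mem_constrainedIdeal]
  exact exists_congr fun δ => and_congr_left' (mem_ThetaX δ)

lemma exists_notMem_IX_coordSubspace {m : ℕ} {f : On (m + 1)} (hf_ne : f ≠ 0)
    (hf : f ∈ IsLocalRing.maximalIdeal (On (m + 1))) :
    ∃ L, f ∉ IX (m + 1) (coordSubspace L {Fin.last m}ᶜ : Set (Fin (m + 1) → ℂ)) := by
  obtain ⟨F, hF, rfl⟩ := On.exists_mkOn_eq f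
  obtain ⟨c, hc⟩ := exists_eventually_ne_zero_on_line hF fun hF_zero =>
    hf_ne ((mkOn_eq_mkOn_iff hF analyticAt_const).2 hF_zero)
  simp only [zero_add] at hc
  have c_ne_zero : c ≠ 0 := by
    rintro rfl
    obtain ⟨ζ, hζ⟩ := hc.exists
    rw [smul_zero] at hζ
    exact hζ (On.mem_maximalIdeal_iff.1 hf)
  obtain ⟨L, hL⟩ := SeparatingDual.exists_continuousLinearEquiv_apply_eq (R := ℂ) c_ne_zero
    (Pi.single_ne_zero_iff.2 one_ne_zero : (Pi.single (Fin.last m) 1 : Fin (m + 1) → ℂ) ≠ 0)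
  refine ⟨L, fun hf_mem => ?_⟩
  obtain ⟨ζ, hζ, hζ_ne⟩ :=
    (((tendsto_smul_punctured_zero c).eventually ((mkOn_mem_IX_iff hF).1 hf_mem)).and hc).exists
  refine hζ_ne (hζ (Submodule.smul_mem _ ζ fun j hj => ?_))
  rw [hL, Pi.single_eq_of_ne hj]

lemma hasRegularSequence_of_finiteDimensional {m : ℕ} {f : On (m + 1)} (hf_ne : f ≠ 0)
    (hf : f ∈ IsLocalRing.maximalIdeal (On (m + 1))) {J : Ideal (On (m + 1))}
    (hJ : FiniteDimensional ℂ (On (m + 1) ⧸ J ⊔ Ideal.span {f})) :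
    HasRegularSequence J m (Ideal.span {f}) := by
  obtain ⟨L, hL⟩ := exists_notMem_IX_coordSubspace hf_ne hf
  let s (i : ℕ) : Set (Fin (m + 1)) := {j | (j : ℕ) < i}
  let p (i : ℕ) : Ideal (On (m + 1)) := IX (m + 1) (coordSubspace L (s i))
  let y (i : ℕ) : On (m + 1) := coordGerm L (Fin.ofNat (m + 1) i)
  have ofNat_val {i : ℕ} (hi : i < m) : (Fin.ofNat (m + 1) i : ℕ) = i :=
    Nat.mod_eq_of_lt (by lia)
  have notMem_s {i : ℕ} (hi : i < m) : Fin.ofNat (m + 1) i ∉ s i := by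
    simp only [s, Set.mem_ofPred_eq, ofNat_val hi, lt_irrefl, not_false_eq_true]
  have s_succ {i : ℕ} (hi : i < m) : s (i + 1) = insert (Fin.ofNat (m + 1) i) (s i) := by
    ext j
    simp only [s, Set.mem_ofPred_eq, Set.mem_insert_iff, Fin.ext_iff, ofNat_val hi]
    lia
  have s_last : s m = {Fin.last m}ᶜ := Set.ext fun j => Fin.lt_last_iff_ne_last
  have p_zero : p 0 = ⊥ := by
    rw [← IX_coordSubspace_empty L]
    simp [p, s]
  have radical_mem (i : ℕ) : y i ∈ (J ⊔ Ideal.span {f}).radical :=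
    exists_pow_mem_of_mem_maximalIdeal ℂ _ (linearGerm_mem_maximalIdeal _)
  have := hasRegularSequence_of_prime_chain J f p y
    (fun i hi => by simp only [p, s_succ hi, IX_coordSubspace_insert L (notMem_s hi), y])
    (fun i _ => isPrime_IX_submodule _)
    (fun i hi => coordGerm_notMem_IX_coordSubspace L (notMem_s hi)) (by simpa only [p, s_last])
    (fun i _ => radical_mem i)
  rwa [p_zero, sup_bot_eq] at this

end BruceRoberts

section Symmetry

lemma isSMulRegular_pairCokernel_pd {m : ℕ} {f h : On (m + 2)}
    (hf : f ∈ IsLocalRing.maximalIdeal (On (m + 2)))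
    (hfJac : FiniteDimensional ℂ (On (m + 2) ⧸ Jac (m + 2) f))
    (hfin : FiniteDimensional ℂ (On (m + 2) ⧸ constrainedIdeal (pd · h) (pd · f) f)) :
    IsSMulRegular (PairCokernel (pd · f) (pd · h)) f := by
  have f_ne_zero := ne_zero_of_finiteDimensional_jac 0 hfJac
  have : FiniteDimensional ℂ (On (m + 2) ⧸ Ideal.span (Set.range (pd · f))) := hfJac
  exact PairCokernel.isSMulRegular_of_hasRegularSequence (IsSMulRegular.of_ne_zero f_ne_zero)
    (hasRegularSequence_of_finiteDimensional f_ne_zero hf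
      finiteDimensional_quotient_minorsIdeal_sup) (Fintype.card_fin _).le

lemma muX_sub_tauX_eq_zero {X : Set (Fin n → ℂ)} {f : On n} (hf : f ∈ BRIdeal n X f) :
    (muX n X f : ℤ) - tauX n X f = 0 := by
  rw [muX, tauX, Submodule.add_eq_sup, sup_eq_left.2 ((Ideal.span_singleton_le_iff_mem _).2 hf),
    sub_self]

lemma mem_BRIdeal_of_dim_zero (X : Set (Fin 0 → ℂ)) {f : On 0}
    (hf : f ∈ IsLocalRing.maximalIdeal (On 0)) : f ∈ BRIdeal 0 X f := by
  rw [maximalIdeal_eq_span_coordG, Set.range_eq_empty, Ideal.span_empty, Ideal.mem_bot] at hf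
  rw [hf]
  exact zero_mem _

lemma maximalIdeal_on_one : IsLocalRing.maximalIdeal (On 1) = Ideal.span {coordG 0} := by
  rw [maximalIdeal_eq_span_coordG, Set.range_unique, Fin.default_eq_zero]

lemma exists_pd_dvd_coordG_pow {f : On 1} (hJac : FiniteDimensional ℂ (On 1 ⧸ Jac 1 f)) :
    ∃ N, pd 0 f ∣ coordG 0 ^ N := by
  obtain ⟨N, hN⟩ := exists_pow_mem_of_mem_maximalIdeal ℂ (Jac 1 f)
    (linearGerm_mem_maximalIdeal (.proj 0))
  rw [Jac, Set.range_unique, Fin.default_eq_zero, Ideal.mem_span_singleton] at hN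
  exact ⟨N, hN⟩

lemma associated_coordG_mul_pd {f : On 1} (hf : f ∈ IsLocalRing.maximalIdeal (On 1))
    (hJac : FiniteDimensional ℂ (On 1 ⧸ Jac 1 f)) : Associated (coordG 0 * pd 0 f) f := by
  obtain ⟨N, hN⟩ := exists_pd_dvd_coordG_pow hJac
  exact associated_mul_derivation (pdDerivation 0) maximalIdeal_on_one (pd_coordG 0 0) hf hN

lemma coordG_mem_IX_preimage_zero {H : (Fin 1 → ℂ) → ℂ} (hH : AnalyticAt ℂ H 0) (hH0 : H 0 = 0)
    (hJac : FiniteDimensional ℂ (On 1 ⧸ Jac 1 (mkOn H hH))) : coordG 0 ∈ IX 1 (H ⁻¹' {0}) := by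
  obtain ⟨N, hN⟩ := exists_pd_dvd_coordG_pow hJac
  have h_dvd : mkOn H hH ∣ coordG 0 ^ (N + 1) := by
    rw [← (associated_coordG_mul_pd (On.mem_maximalIdeal_iff.2 hH0) hJac).dvd_iff_dvd_left,
      pow_succ']
    exact mul_dvd_mul_left _ hN
  exact isRadical_IX _ ⟨N + 1, Ideal.mem_of_dvd _ h_dvd (mkOn_mem_IX_preimage_zero hH)⟩

lemma mem_BRIdeal_of_dim_one {X : Set (Fin 1 → ℂ)} (hX : coordG 0 ∈ IX 1 X) {f : On 1}
    (hf : f ∈ IsLocalRing.maximalIdeal (On 1)) (hJac : FiniteDimensional ℂ (On 1 ⧸ Jac 1 f)) :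
    f ∈ BRIdeal 1 X f := by
  obtain ⟨u, hu⟩ := associated_coordG_mul_pd hf hJac
  refine ⟨fun _ => coordG 0 * (u : On 1), fun g _ => ?_, ?_⟩
  · rw [applyVF, Fin.sum_univ_one]
    exact Ideal.mul_mem_right _ _ (Ideal.mul_mem_right _ _ hX)
  · change applyVF _ f = f
    rw [applyVF, Fin.sum_univ_one, mul_right_comm, hu]

end Symmetry

theorem muX_sub_tauX_symm_general (n : ℕ)
    (F : (Fin n → ℂ) → ℂ) (hF : AnalyticAt ℂ F 0) (hF0 : F 0 = 0)
    (H : (Fin n → ℂ) → ℂ) (hH : AnalyticAt ℂ H 0) (hH0 : H 0 = 0)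
    (hFiso : FiniteDimensional ℂ (On n ⧸ Jac n (mkOn F hF)))
    (hHiso : FiniteDimensional ℂ (On n ⧸ Jac n (mkOn H hH)))
    (hfinX : FiniteDimensional ℂ (On n ⧸ BRIdeal n (H ⁻¹' {0}) (mkOn F hF)))
    (hfinY : FiniteDimensional ℂ (On n ⧸ BRIdeal n (F ⁻¹' {0}) (mkOn H hH))) :
    (muX n (H ⁻¹' {0}) (mkOn F hF) : ℤ) - tauX n (H ⁻¹' {0}) (mkOn F hF) =
      (muX n (F ⁻¹' {0}) (mkOn H hH) : ℤ) - tauX n (F ⁻¹' {0}) (mkOn H hH) := by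
  have hf : mkOn F hF ∈ IsLocalRing.maximalIdeal (On n) := On.mem_maximalIdeal_iff.2 hF0
  have hh : mkOn H hH ∈ IsLocalRing.maximalIdeal (On n) := On.mem_maximalIdeal_iff.2 hH0
  match n with
  | 0 =>
    rw [muX_sub_tauX_eq_zero (mem_BRIdeal_of_dim_zero _ hf),
      muX_sub_tauX_eq_zero (mem_BRIdeal_of_dim_zero _ hh)]
  | 1 =>
    have hX := coordG_mem_IX_preimage_zero hH hH0 hHiso
    have hY := coordG_mem_IX_preimage_zero hF hF0 hFiso
    rw [muX_sub_tauX_eq_zero (mem_BRIdeal_of_dim_one hX hf hFiso),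
      muX_sub_tauX_eq_zero (mem_BRIdeal_of_dim_one hY hh hHiso)]
  | m + 2 =>
    have hX := BRIdeal_eq_constrainedIdeal (IX_preimage_zero_eq_span (by lia) hH hHiso) (mkOn F hF)
    have hY := BRIdeal_eq_constrainedIdeal (IX_preimage_zero_eq_span (by lia) hF hFiso) (mkOn H hH)
    rw [hX] at hfinX
    rw [hY] at hfinY
    have : FiniteDimensional ℂ (On (m + 2) ⧸ Ideal.span (Set.range (pd · (mkOn F hF)))) := hFiso
    have : FiniteDimensional ℂ (On (m + 2) ⧸ Ideal.span (Set.range (pd · (mkOn H hH)))) := hHiso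
    rw [muX, tauX, muX, tauX, hX, hY]
    exact finrank_sub_finrank_symm hf hh (isSMulRegular_pairCokernel_pd hf hFiso hfinY)
      fun γ => ⟨_, derivative_arc γ _, derivative_arc γ _⟩

/-- Formula (10) of Proposition 2.5: `μ_X(f) − τ_X(f) = μ_Y(h) − τ_Y(h)` for a pair of
isolated hypersurface singularities `X = h⁻¹(0)`, `Y = f⁻¹(0)`. -/
theorem muX_sub_tauX_symm (n : ℕ)
    (F : (Fin n → ℂ) → ℂ) (hF : AnalyticAt ℂ F 0) (hF0 : F 0 = 0)
    (H : (Fin n → ℂ) → ℂ) (hH : AnalyticAt ℂ H 0) (hH0 : H 0 = 0)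
    (hFsing : mkOn F hF ∈ (mId n) ^ 2) (hHsing : mkOn H hH ∈ (mId n) ^ 2)
    (hFiso : FiniteDimensional ℂ (On n ⧸ Jac n (mkOn F hF)))
    (hHiso : FiniteDimensional ℂ (On n ⧸ Jac n (mkOn H hH)))
    (hfinX : FiniteDimensional ℂ (On n ⧸ BRIdeal n (H ⁻¹' {0}) (mkOn F hF)))
    (hfinY : FiniteDimensional ℂ (On n ⧸ BRIdeal n (F ⁻¹' {0}) (mkOn H hH))) :
    (muX n (H ⁻¹' {0}) (mkOn F hF) : ℤ) - tauX n (H ⁻¹' {0}) (mkOn F hF) =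
      (muX n (F ⁻¹' {0}) (mkOn H hH) : ℤ) - tauX n (F ⁻¹' {0}) (mkOn H hH) :=
  muX_sub_tauX_symm_general n F hF hF0 H hH hH0 hFiso hHiso hfinX hfinY

end
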